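/- arXiv:math/0410282 — 5 statements merged into one kernel-verified Lean document; each statement's English description precedes it below -/
import Mathlib

section
/- There exist a constant C > 0 and infinitely many positive integers n for which there is a balanced Boolean function f : {0,1}^n → {0,1} (i.e., Pr[f(x)=1] = 1/2 for x uniform on {0,1}^n) together with a randomized decision-tree algorithm that on every input outputs f(x) with probability 1, and whose revealment satisfies δ = max_i δ_i ≤ C · n^{-1/2} · √(log n). -/
/-- A deterministic decision tree on `n` bits: a leaf outputs a Boolean value, an
internal node queries a bit and branches on its value. -/
inductive DTree (n : ℕ) : Type
  | leaf : Bool → DTree n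
  | node : Fin n → DTree n → DTree n → DTree n

namespace DTree

/-- The output of a decision tree on input `x`. -/
def eval {n : ℕ} : DTree n → (Fin n → Bool) → Bool
  | .leaf b, _ => b
  | .node i t0 t1, x => if x i then t1.eval x else t0.eval x

/-- Whether the decision tree reads bit `j` when run on input `x`. -/
def readsBit {n : ℕ} : DTree n → (Fin n → Bool) → Fin n → Bool
  | .leaf _, _, _ => false
  | .node i t0 t1, x, j =>
      (i == j) || (if x i then t1.readsBit x j else t0.readsBit x j)

end DTree

/-- A randomized decision-tree algorithm: a (finitely supported) probability
distribution over deterministic decision trees. -/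
structure RandAlg (n : ℕ) where
  m : ℕ
  tree : Fin m → DTree n
  w : Fin m → ℝ
  w_nonneg : ∀ r, 0 ≤ w r
  w_sum : ∑ r, w r = 1

/-- `readProb A i` is the probability δ_i that bit `i` is read, over a uniformly
random input and the internal randomness of the algorithm. -/
noncomputable def readProb {n : ℕ} (A : RandAlg n) (i : Fin n) : ℝ :=
  (∑ r, ∑ x : Fin n → Bool, if (A.tree r).readsBit x i then A.w r else 0) / 2 ^ n

/-- The probability that the algorithm's output differs from `f`, over a uniformly
random input and the internal randomness of the algorithm. -/
noncomputable def errProb {n : ℕ} (A : RandAlg n) (f : (Fin n → Bool) → Bool) : ℝ :=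
  (∑ r, ∑ x : Fin n → Bool, if (A.tree r).eval x ≠ f x then A.w r else 0) / 2 ^ n

/-- A Boolean function is balanced if it takes the value `true` on exactly half
of all inputs. -/
def balanced {n : ℕ} (f : (Fin n → Bool) → Bool) : Prop :=
  2 * Nat.card {x : Fin n → Bool // f x = true} = 2 ^ n

/-- A Boolean function is monotone if it is order preserving coordinatewise. -/
def monotoneBF {n : ℕ} (f : (Fin n → Bool) → Bool) : Prop :=
  ∀ x y : Fin n → Bool, (∀ i, x i ≤ y i) → f x ≤ f y

/-- The ±1 encoding of a Boolean value. -/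
noncomputable def pm (b : Bool) : ℝ := if b then 1 else -1

/-- The variance of the ±1-valued function corresponding to `f`, for a uniformly
random input. -/
noncomputable def pmVar {n : ℕ} (f : (Fin n → Bool) → Bool) : ℝ :=
  (∑ x : Fin n → Bool, pm (f x) ^ 2) / 2 ^ n
    - ((∑ x : Fin n → Bool, pm (f x)) / 2 ^ n) ^ 2


namespace LR

/-! ### Part 1: an explicit expander on `(F_2^r)^2` -/

/-- sign character -/
noncomputable def sg (a : ZMod 2) : ℝ := if a = 0 then 1 else -1

lemma sg_add (a b : ZMod 2) : sg (a + b) = sg a * sg b := by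
  have h : ∀ a b : ZMod 2, (a + b = 0 ↔ (a = 0 ↔ b = 0)) := by decide
  unfold sg
  by_cases ha : a = 0 <;> by_cases hb : b = 0 <;> simp [h, ha, hb]

lemma sg_one : sg 1 = -1 := by simp [sg]
lemma sg_zero : sg 0 = 1 := by simp [sg]

abbrev EE (r : ℕ) := Fin r → ZMod 2
abbrev VV (r : ℕ) := EE r × EE r

/-- pairing -/
def BB {r : ℕ} (x z : VV r) : ZMod 2 := x.1 ⬝ᵥ z.1 + x.2 ⬝ᵥ z.2

lemma BB_add_left {r : ℕ} (x y z : VV r) : BB (x + y) z = BB x z + BB y z := by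
  simp [BB, add_dotProduct]; ring

lemma BB_add_right {r : ℕ} (x y z : VV r) : BB x (y + z) = BB x y + BB x z := by
  simp [BB, dotProduct_add]; ring

lemma BB_nondeg {r : ℕ} (x : VV r) (hx : x ≠ 0) : ∃ z, BB x z = 1 := by
  have h2 : ∀ a : ZMod 2, a ≠ 0 → a = 1 := by decide
  by_cases h : x.1 = 0
  · have h' : x.2 ≠ 0 := fun h' => hx (Prod.ext h h')
    obtain ⟨i, hi⟩ := Function.ne_iff.1 h'
    exact ⟨(0, Pi.single i 1), by simpa [BB] using h2 _ hi⟩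
  · obtain ⟨i, hi⟩ := Function.ne_iff.1 h
    exact ⟨(Pi.single i 1, 0), by simpa [BB] using h2 _ hi⟩

lemma sum_sg {r : ℕ} (x : VV r) :
    ∑ z, sg (BB x z) = if x = 0 then (Fintype.card (VV r) : ℝ) else 0 := by
  split_ifs with h
  · subst h; simp [BB, sg]
  · obtain ⟨z0, hz⟩ := BB_nondeg x h
    have : ∑ z, sg (BB x z) = ∑ z, sg (BB x (z + z0)) :=
      (Equiv.sum_comp (Equiv.addRight z0) (fun z => sg (BB x z))).symm
    simp only [BB_add_right, sg_add, hz, sg_one] at this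
    rw [← Finset.sum_mul] at this
    linarith

/-- Walsh transform -/
noncomputable def WT {r : ℕ} (f : VV r → ℝ) (z : VV r) : ℝ := ∑ x, sg (BB x z) * f x

lemma add_self' {r : ℕ} (x : EE r) : x + x = 0 := by
  funext i; exact CharTwo.add_self_eq_zero _

lemma vadd_self {r : ℕ} (x : VV r) : x + x = 0 := by
  ext i <;> exact CharTwo.add_self_eq_zero _

lemma parseval {r : ℕ} (f : VV r → ℝ) :
    ∑ z, WT f z ^ 2 = (Fintype.card (VV r) : ℝ) * ∑ x, f x ^ 2 := by
  have h1 : ∀ z, WT f z ^ 2 = ∑ x, ∑ y, sg (BB (x + y) z) * (f x * f y) := by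
    intro z
    rw [sq, WT, Finset.sum_mul_sum]
    refine Finset.sum_congr rfl fun x _ => Finset.sum_congr rfl fun y _ => ?_
    rw [BB_add_left, sg_add]; ring
  simp only [h1]
  rw [Finset.sum_comm, Finset.mul_sum]
  refine Finset.sum_congr rfl fun x _ => ?_
  rw [Finset.sum_comm]
  simp only [← Finset.sum_mul, sum_sg]
  rw [Finset.sum_eq_single x]
  · simp [vadd_self]; ring
  · intro y _ hy
    have : x + y ≠ 0 := by
      intro h
      apply hy
      have := congrArg (x + ·) h
      simpa [← add_assoc, vadd_self] using this
    simp [this]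
  · simp

lemma WT_lin {r : ℕ} (f : VV r → ℝ) (s s' : VV r → VV r) (hs : Function.Involutive s)
    (hd : ∀ x z, BB (s x) z = BB x (s' z)) (z : VV r) :
    WT (fun x => f (s x)) z = WT f (s' z) := by
  unfold WT
  rw [← Equiv.sum_comp (Function.Involutive.toPerm s hs)]
  refine Finset.sum_congr rfl fun x _ => ?_
  simp [hs x, hd]

lemma WT_trans {r : ℕ} (f : VV r → ℝ) (v : VV r) (z : VV r) :
    WT (fun x => f (x + v)) z = sg (BB v z) * WT f z := by
  unfold WT
  rw [← Equiv.sum_comp (Equiv.addRight v), Finset.mul_sum]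
  refine Finset.sum_congr rfl fun x _ => ?_
  simp [add_assoc, vadd_self, BB_add_left, sg_add]; ring

lemma WT_sub {r : ℕ} (f g : VV r → ℝ) (z : VV r) :
    WT (fun x => f x - g x) z = WT f z - WT g z := by
  simp [WT, mul_sub, Finset.sum_sub_distrib]

/-- shift matrix -/
def SM (r j : ℕ) : Matrix (Fin r) (Fin r) (ZMod 2) :=
  Matrix.of fun i l => if (i : ℕ) = l + j then 1 else 0

/-- primal maps -/
def p1 {r : ℕ} (j : ℕ) (x : VV r) : VV r := (x.1, x.2 + Matrix.vecMul x.1 (SM r j))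
def p2 {r : ℕ} (j : ℕ) (x : VV r) : VV r := (x.1 + Matrix.vecMul x.2 (SM r j), x.2)
/-- dual maps -/
def d1 {r : ℕ} (j : ℕ) (z : VV r) : VV r := (z.1 + Matrix.mulVec (SM r j) z.2, z.2)
def d2 {r : ℕ} (j : ℕ) (z : VV r) : VV r := (z.1, z.2 + Matrix.mulVec (SM r j) z.1)

lemma p1_inv {r : ℕ} (j : ℕ) : Function.Involutive (p1 (r := r) j) := by
  intro x; simp [p1, add_assoc, add_self']
lemma p2_inv {r : ℕ} (j : ℕ) : Function.Involutive (p2 (r := r) j) := by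
  intro x; simp [p2, add_assoc, add_self']
lemma d1_inv {r : ℕ} (j : ℕ) : Function.Involutive (d1 (r := r) j) := by
  intro x; simp [d1, add_assoc, add_self']
lemma d2_inv {r : ℕ} (j : ℕ) : Function.Involutive (d2 (r := r) j) := by
  intro x; simp [d2, add_assoc, add_self']

lemma p1_dual {r : ℕ} (j : ℕ) (x z : VV r) : BB (p1 j x) z = BB x (d1 j z) := by
  simp [BB, p1, d1, add_dotProduct, dotProduct_add, Matrix.dotProduct_mulVec]; ring
lemma p2_dual {r : ℕ} (j : ℕ) (x z : VV r) : BB (p2 j x) z = BB x (d2 j z) := by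
  simp [BB, p2, d2, add_dotProduct, dotProduct_add, Matrix.dotProduct_mulVec]; ring

/-- degree plus one -/
def DD {r : ℕ} (u : EE r) : ℕ := Finset.univ.sup fun i : Fin r => if u i = 0 then 0 else (i : ℕ) + 1

lemma DD_le {r : ℕ} (u : EE r) (m : ℕ) : DD u ≤ m ↔ ∀ i : Fin r, m ≤ i → u i = 0 := by
  unfold DD
  rw [Finset.sup_le_iff]
  constructor
  · intro h i hi
    have := h i (Finset.mem_univ _)
    by_contra h0
    rw [if_neg h0] at this
    omega
  · intro h i _
    split_ifs with h0
    · omega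
    · by_contra h1
      exact h0 (h i (by omega))

lemma DD_eq_zero {r : ℕ} (u : EE r) : DD u = 0 ↔ u = 0 := by
  rw [← Nat.le_zero, DD_le]
  constructor
  · intro h; funext i; exact h i (Nat.zero_le _)
  · rintro rfl i _; rfl

lemma SM_mulVec {r : ℕ} (j : ℕ) (v : EE r) (i : Fin r) :
    Matrix.mulVec (SM r j) v i = if h : j ≤ i then v ⟨i - j, by omega⟩ else 0 := by
  simp only [Matrix.mulVec, dotProduct, SM, Matrix.of_apply]
  split_ifs with h
  · rw [Finset.sum_eq_single ⟨i - j, by omega⟩]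
    · rw [if_pos]; · simp
      simp; omega
    · intro l _ hl
      rw [if_neg]; · simp
      intro h'; apply hl; ext; simp; omega
    · simp
  · refine Finset.sum_eq_zero fun l _ => ?_
    rw [if_neg (by omega)]; simp

lemma DD_shift {r : ℕ} (j : ℕ) (u v : EE r) (hj : 0 < j) (huv : DD u ≤ DD v) (hv : 0 < DD v)
    (hr : DD v + j ≤ r) : DD (u + Matrix.mulVec (SM r j) v) = DD v + j := by
  apply le_antisymm
  · rw [DD_le]
    intro i hi
    have h1 := (DD_le u _).1 huv i (by omega)
    rw [Pi.add_apply, h1, SM_mulVec, dif_pos (by omega)]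
    rw [(DD_le v _).1 le_rfl _ (by simp; omega)]; simp
  · by_contra hlt
    push Not at hlt
    have h1 : DD (u + Matrix.mulVec (SM r j) v) ≤ DD v + j - 1 := by omega
    have hm : ¬ DD v ≤ DD v - 1 := by omega
    apply hm
    rw [DD_le] at h1 ⊢
    intro i hi
    rcases Nat.lt_or_ge i (DD v) with hi2 | hi2
    · have h3 := h1 ⟨i + j, by omega⟩ (by simp; omega)
      rw [Pi.add_apply, (DD_le u _).1 huv _ (by simp; omega), SM_mulVec, dif_pos (by simp)] at h3
      simpa using h3
    · exact (DD_le v _).1 le_rfl _ hi2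

def P1 {r : ℕ} (z : VV r) : Prop := DD z.1 ≤ DD z.2 ∧ 0 < DD z.2 ∧ DD z.2 + 2 ≤ r
def P2 {r : ℕ} (z : VV r) : Prop := DD z.2 ≤ DD z.1 ∧ 0 < DD z.1 ∧ DD z.1 + 2 ≤ r

lemma P1_d1 {r : ℕ} (j : ℕ) (hj : 0 < j) (hj2 : j ≤ 2) (z : VV r) (h : P1 (d1 j z)) :
    DD z.1 = DD z.2 + j := by
  have := DD_shift j (d1 j z).1 (d1 j z).2 hj h.1 h.2.1 (by have := h.2.2; omega)
  have e := d1_inv j z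
  have e1 : (d1 j z).1 + Matrix.mulVec (SM r j) (d1 j z).2 = z.1 := congrArg Prod.fst e
  rw [e1] at this
  exact this

lemma P2_d2 {r : ℕ} (j : ℕ) (hj : 0 < j) (hj2 : j ≤ 2) (z : VV r) (h : P2 (d2 j z)) :
    DD z.2 = DD z.1 + j := by
  have := DD_shift j (d2 j z).2 (d2 j z).1 hj h.1 h.2.1 (by have := h.2.2; omega)
  have e := d2_inv j z
  have e1 : (d2 j z).2 + Matrix.mulVec (SM r j) (d2 j z).1 = z.2 := congrArg Prod.snd e
  rw [e1] at this
  exact this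

open Classical in
/-- real indicator -/
noncomputable def ic (p : Prop) : ℝ := if p then 1 else 0

lemma ic_nonneg (p : Prop) : 0 ≤ ic p := by unfold ic; split_ifs <;> norm_num
lemma ic_le (p : Prop) : ic p ≤ 1 := by unfold ic; split_ifs <;> norm_num

lemma sum_ic {X : Type*} [Fintype X] (A : Finset X) : ∑ x, ic (x ∈ A) = (A.card : ℝ) := by
  rw [← Finset.sum_subset (Finset.subset_univ A) (by intro x _ hx; simp [ic, hx])]
  rw [Finset.card_eq_sum_ones, Nat.cast_sum]
  refine Finset.sum_congr rfl fun x hx => ?_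
  simp [ic, hx]

lemma ping {r : ℕ} (F : VV r → ℝ) (P : VV r → Prop) (d : VV r → VV r)
    (hd : Function.Involutive d) :
    ∑ z, ic (P z) * F z ^ 2 ≤ 3 / 2 * ∑ z, ic (P (d z)) * F z ^ 2
      + 3 * ∑ z, (F (d z) - F z) ^ 2 := by
  have h : ∑ z, ic (P (d z)) * F z ^ 2 = ∑ z, ic (P z) * F (d z) ^ 2 := by
    rw [← Equiv.sum_comp (Function.Involutive.toPerm d hd)]
    simp [hd _]
  rw [h, Finset.mul_sum, Finset.mul_sum, ← Finset.sum_add_distrib]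
  refine Finset.sum_le_sum fun z _ => ?_
  unfold ic
  split_ifs
  · nlinarith [sq_nonneg (F z - 3 / 2 * F (d z)), sq_nonneg (2 * F z - 3 * F (d z))]
  · nlinarith [sq_nonneg (F (d z) - F z)]

/-- the four translation vectors -/
def tv {r : ℕ} (i : Fin r) : Fin 2 → VV r
  | 0 => (Pi.single i 1, 0)
  | 1 => (0, Pi.single i 1)

def sig {r : ℕ} (hr : 2 ≤ r) : Fin 8 → VV r → VV r
  | 0 => p1 1
  | 1 => p1 2
  | 2 => p2 1
  | 3 => p2 2
  | 4 => fun x => x + tv ⟨r - 1, by omega⟩ 0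
  | 5 => fun x => x + tv ⟨r - 2, by omega⟩ 0
  | 6 => fun x => x + tv ⟨r - 1, by omega⟩ 1
  | 7 => fun x => x + tv ⟨r - 2, by omega⟩ 1

lemma sig_inv {r : ℕ} (hr : 2 ≤ r) (i : Fin 8) : Function.Involutive (sig hr i) := by
  have ht : ∀ v : VV r, Function.Involutive (fun x : VV r => x + v) := by
    intro v x; simp [add_assoc, vadd_self]
  fin_cases i
  · exact p1_inv 1
  · exact p1_inv 2
  · exact p2_inv 1
  · exact p2_inv 2
  all_goals exact ht _

lemma lin_eps {r : ℕ} (f : VV r → ℝ) (s s' : VV r → VV r) (hs : Function.Involutive s)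
    (hd : ∀ x z, BB (s x) z = BB x (s' z)) :
    ∑ z, (WT f (s' z) - WT f z) ^ 2
      = (Fintype.card (VV r) : ℝ) * ∑ x, (f (s x) - f x) ^ 2 := by
  rw [← parseval (fun x => f (s x) - f x)]
  refine Finset.sum_congr rfl fun z _ => ?_
  rw [WT_sub (fun x => f (s x)) f, WT_lin f s s' hs hd]

lemma trans_eps {r : ℕ} (f : VV r → ℝ) (v : VV r) :
    4 * ∑ z, ic (BB v z ≠ 0) * WT f z ^ 2
      = (Fintype.card (VV r) : ℝ) * ∑ x, (f (x + v) - f x) ^ 2 := by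
  rw [← parseval (fun x => f (x + v) - f x), Finset.mul_sum]
  refine Finset.sum_congr rfl fun z _ => ?_
  rw [WT_sub (fun x => f (x + v)) f, WT_trans f v, ic, sg]
  by_cases h : BB v z = 0
  · simp [h]
  · simp [h]; ring

lemma core {r : ℕ} (hr : 2 ≤ r) (f : VV r → ℝ) (hf : ∑ x, f x = 0) :
    ∑ x, f x ^ 2 ≤ 7 * ∑ i, ∑ x, (f (sig hr i x) - f x) ^ 2 := by
  set F := WT f with hF
  have hF0 : F 0 = 0 := by simp [hF, WT, BB, sg, hf]
  set k : ℝ := (Fintype.card (VV r) : ℝ) with hk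
  have hkpos : 0 < k := by simp only [hk]; exact_mod_cast Fintype.card_pos
  have a1 := ping F P1 (d1 1) (d1_inv 1)
  have a2 := ping F P1 (d1 2) (d1_inv 2)
  have a3 := ping F P2 (d2 1) (d2_inv 1)
  have a4 := ping F P2 (d2 2) (d2_inv 2)
  rw [lin_eps f _ _ (p1_inv 1) (p1_dual 1)] at a1
  rw [lin_eps f _ _ (p1_inv 2) (p1_dual 2)] at a2
  rw [lin_eps f _ _ (p2_inv 1) (p2_dual 1)] at a3
  rw [lin_eps f _ _ (p2_inv 2) (p2_dual 2)] at a4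
  have t1 := trans_eps f (tv ⟨r - 1, by omega⟩ 0)
  have t2 := trans_eps f (tv ⟨r - 2, by omega⟩ 0)
  have t3 := trans_eps f (tv ⟨r - 1, by omega⟩ 1)
  have t4 := trans_eps f (tv ⟨r - 2, by omega⟩ 1)
  have hsum : ∑ z, (ic (P1 (d1 1 z)) * F z ^ 2 + ic (P1 (d1 2 z)) * F z ^ 2
      + ic (P2 (d2 1 z)) * F z ^ 2 + ic (P2 (d2 2 z)) * F z ^ 2) ≤ ∑ z, F z ^ 2 := by
    refine Finset.sum_le_sum fun z _ => ?_
    have b1 := P1_d1 1 (by norm_num) (by norm_num) z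
    have b2 := P1_d1 2 (by norm_num) (by norm_num) z
    have b3 := P2_d2 1 (by norm_num) (by norm_num) z
    have b4 := P2_d2 2 (by norm_num) (by norm_num) z
    have hsq := sq_nonneg (F z)
    unfold ic
    by_cases c1 : P1 (d1 1 z)
    · have e1 := b1 c1
      rw [if_pos c1, if_neg (fun c => by have := b2 c; omega),
        if_neg (fun c => by have := b3 c; omega), if_neg (fun c => by have := b4 c; omega)]
      linarith
    · rw [if_neg c1]
      by_cases c2 : P1 (d1 2 z)
      · have e1 := b2 c2
        rw [if_pos c2, 
          if_neg (fun c => by have := b3 c; omega), if_neg (fun c => by have := b4 c; omega)]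
        linarith
      · rw [if_neg c2]
        by_cases c3 : P2 (d2 1 z)
        · have e1 := b3 c3
          rw [if_pos c3, if_neg (fun c => by have := b4 c; omega)]
          linarith
        · rw [if_neg c3]
          split_ifs <;> linarith
  have hlow : ∑ z, F z ^ 2 ≤ ∑ z, (ic (P1 z) * F z ^ 2 + ic (P2 z) * F z ^ 2
      + ic (BB (tv ⟨r - 1, by omega⟩ 0) z ≠ 0) * F z ^ 2
      + ic (BB (tv ⟨r - 2, by omega⟩ 0) z ≠ 0) * F z ^ 2
      + ic (BB (tv ⟨r - 1, by omega⟩ 1) z ≠ 0) * F z ^ 2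
      + ic (BB (tv ⟨r - 2, by omega⟩ 1) z ≠ 0) * F z ^ 2) := by
    refine Finset.sum_le_sum fun z _ => ?_
    have hsq := sq_nonneg (F z)
    by_cases hz : z = 0
    · subst hz; simp [hF0]
    have key : P1 z ∨ P2 z ∨ BB (tv ⟨r - 1, by omega⟩ 0) z ≠ 0 ∨
        BB (tv ⟨r - 2, by omega⟩ 0) z ≠ 0 ∨ BB (tv ⟨r - 1, by omega⟩ 1) z ≠ 0 ∨
        BB (tv ⟨r - 2, by omega⟩ 1) z ≠ 0 := by
      by_contra hc
      push Not at hc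
      obtain ⟨n1, n2, n3, n4, n5, n6⟩ := hc
      simp only [BB, tv, single_one_dotProduct, zero_dotProduct, add_zero, zero_add] at n3 n4 n5 n6
      have m1 : DD z.1 ≤ r - 2 := by
        rw [DD_le]
        intro i hi
        have : i = ⟨r - 1, by omega⟩ ∨ i = ⟨r - 2, by omega⟩ := by
          rcases Nat.lt_or_ge i (r - 1) with h | h
          · right; ext; simp; omega
          · left; ext; simp; omega
        rcases this with h | h <;> rw [h] <;> assumption
      have m2 : DD z.2 ≤ r - 2 := by
        rw [DD_le]
        intro i hi
        have : i = ⟨r - 1, by omega⟩ ∨ i = ⟨r - 2, by omega⟩ := by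
          rcases Nat.lt_or_ge i (r - 1) with h | h
          · right; ext; simp; omega
          · left; ext; simp; omega
        rcases this with h | h <;> rw [h] <;> assumption
      have hz' : ¬ (DD z.1 = 0 ∧ DD z.2 = 0) := by
        rw [DD_eq_zero, DD_eq_zero]
        rintro ⟨h1, h2⟩
        exact hz (Prod.ext h1 h2)
      unfold P1 at n1
      unfold P2 at n2
      omega
    have g : ∀ p, 0 ≤ ic p * F z ^ 2 := fun p => mul_nonneg (ic_nonneg p) hsq
    have g' : ∀ p, p → ic p * F z ^ 2 = F z ^ 2 := fun p hp => by simp [ic, hp]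
    have q1 := g (P1 z)
    have q2 := g (P2 z)
    have q3 := g (BB (tv ⟨r - 1, by omega⟩ 0) z ≠ 0)
    have q4 := g (BB (tv ⟨r - 2, by omega⟩ 0) z ≠ 0)
    have q5 := g (BB (tv ⟨r - 1, by omega⟩ 1) z ≠ 0)
    have q6 := g (BB (tv ⟨r - 2, by omega⟩ 1) z ≠ 0)
    rcases key with h | h | h | h | h | h <;> have := g' _ h <;> linarith
  simp only [Finset.sum_add_distrib] at hsum hlow
  have hp := parseval f
  rw [← hF, ← hk] at hp
  rw [Fin.sum_univ_eight]
  simp only [sig]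
  rw [← hF, ← hk] at t1 t2 t3 t4
  rw [← hk] at a1 a2 a3 a4
  rw [← mul_le_mul_iff_right₀ hkpos, ← hp]
  have nn : ∀ s : VV r → VV r, 0 ≤ k * ∑ x, (f (s x) - f x) ^ 2 := fun s =>
    mul_nonneg hkpos.le (Finset.sum_nonneg fun _ _ => sq_nonneg _)
  have n1 := nn (fun x => x + tv ⟨r - 1, by omega⟩ 0)
  have n2 := nn (fun x => x + tv ⟨r - 2, by omega⟩ 0)
  have n3 := nn (fun x => x + tv ⟨r - 1, by omega⟩ 1)
  have n4 := nn (fun x => x + tv ⟨r - 2, by omega⟩ 1)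
  have n5 := nn (p1 1)
  have n6 := nn (p1 2)
  have n7 := nn (p2 1)
  have n8 := nn (p2 2)
  simp only [mul_add] at *
  linarith

open Classical in
lemma expansion {r : ℕ} (hr : 2 ≤ r) (A : Finset (VV r))
    (hA : 2 * A.card ≤ Fintype.card (VV r)) :
    (A.card : ℝ) ≤ 14 * ∑ i, ∑ x, (ic (sig hr i x ∈ A) - ic (x ∈ A)) ^ 2 := by
  set k : ℝ := (Fintype.card (VV r) : ℝ) with hk
  have hkpos : 0 < k := by simp only [hk]; exact_mod_cast Fintype.card_pos
  have hA' : 2 * (A.card : ℝ) ≤ k := by rw [hk]; exact_mod_cast hA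
  have hs : ∑ x, ic (x ∈ A) = (A.card : ℝ) := by
    exact sum_ic A
  have hs2 : ∑ x, ic (x ∈ A) ^ 2 = (A.card : ℝ) := by
    rw [← hs]; refine Finset.sum_congr rfl fun x _ => ?_
    unfold ic; split_ifs <;> norm_num
  have := core hr (fun x => ic (x ∈ A) - A.card / k) (by
    rw [Finset.sum_sub_distrib, hs]
    simp only [Finset.sum_const, Finset.card_univ, nsmul_eq_mul, ← hk]
    field_simp; ring)
  have e : ∑ x, (ic (x ∈ A) - A.card / k) ^ 2 = A.card - A.card ^ 2 / k := by
    have : ∀ x, (ic (x ∈ A) - A.card / k) ^ 2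
        = ic (x ∈ A) ^ 2 - 2 * (A.card / k) * ic (x ∈ A) + (A.card / k) ^ 2 := fun x => by ring
    simp only [this, Finset.sum_add_distrib, Finset.sum_sub_distrib, hs2, ← Finset.mul_sum, hs]
    simp only [Finset.sum_const, Finset.card_univ, nsmul_eq_mul, ← hk]
    field_simp; ring
  rw [e] at this
  simp only [sub_sub_sub_cancel_right] at this
  have h3 : (A.card : ℝ) ^ 2 / k ≤ A.card / 2 := by
    rw [div_le_div_iff₀ hkpos (by norm_num)]
    nlinarith [Nat.cast_nonneg (α := ℝ) A.card]
  linarith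

/-! ### Part 2: survival probability of the dual set process -/

lemma sum_update {ι α : Type*} [Fintype ι] [DecidableEq ι] [Fintype α] (i : ι)
    (G : (ι → α) → ℝ) :
    ∑ x, ∑ a, G (Function.update x i a) = (Fintype.card α : ℝ) * ∑ x, G x := by
  have hinv : Function.Involutive
      (fun p : (ι → α) × α => (Function.update p.1 i p.2, p.1 i)) := by
    rintro ⟨x, a⟩; simp
  rw [← Fintype.sum_prod_type' (f := fun x a => G (Function.update x i a))]
  rw [← Equiv.sum_comp (Function.Involutive.toPerm _ hinv)]
  rw [Fintype.sum_prod_type, Finset.mul_sum]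
  refine Finset.sum_congr rfl fun x _ => ?_
  simp

section surv
set_option linter.unusedSectionVars false
variable {V O : Type*} [Fintype V] [DecidableEq V] [Fintype O] [Nonempty O]

def pre (σ : O → V → V) (η : V → O) (A : Finset V) : Finset V :=
  Finset.univ.filter fun q => σ (η q) q ∈ A

noncomputable def surv (σ : O → V → V) : ℕ → Finset V → ℝ
  | 0, A => if A.Nonempty then 1 else 0
  | s + 1, A => (∑ η : V → O, surv σ s (pre σ η A)) / Fintype.card (V → O)

noncomputable def frac (σ : O → V → V) (A : Finset V) (q : V) : ℝ :=
  (∑ o, ic (σ o q ∈ A)) / Fintype.card O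

lemma cardO_pos : (0 : ℝ) < Fintype.card O := by exact_mod_cast Fintype.card_pos

lemma cardVO_pos : (0 : ℝ) < Fintype.card (V → O) := by exact_mod_cast Fintype.card_pos

lemma avg_const (C : ℝ) : (∑ _η : V → O, C) / Fintype.card (V → O) = C := by
  have := cardVO_pos (V := V) (O := O)
  simp only [Finset.sum_const, Finset.card_univ, nsmul_eq_mul]
  field_simp

lemma surv_le_one (σ : O → V → V) (s : ℕ) (A : Finset V) : surv σ s A ≤ 1 := by
  induction s generalizing A with
  | zero => unfold surv; split_ifs <;> norm_num
  | succ s ih =>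
    unfold surv
    rw [← avg_const (V := V) (O := O) 1]
    gcongr with η
    exact ih _

lemma avg_card (σ : O → V → V) (hσ : ∀ o, Function.Bijective (σ o)) (A : Finset V) :
    ∑ q, frac σ A q = A.card := by
  have hO := cardO_pos (O := O)
  unfold frac
  rw [← Finset.sum_div, Finset.sum_comm]
  have : ∀ o, ∑ q, ic (σ o q ∈ A) = A.card := by
    intro o
    rw [← sum_ic A]
    exact Function.Bijective.sum_comp (hσ o) (fun q => ic (q ∈ A))
  simp only [this, Finset.sum_const, Finset.card_univ, nsmul_eq_mul]
  field_simp

lemma avg_pre (σ : O → V → V) (A : Finset V) :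
    (∑ η : V → O, ((pre σ η A).card : ℝ)) / Fintype.card (V → O) = ∑ q, frac σ A q := by
  have hO := cardO_pos (O := O)
  have hVO := cardVO_pos (V := V) (O := O)
  have h : ∀ η : V → O, ((pre σ η A).card : ℝ) = ∑ q, ic (σ (η q) q ∈ A) := by
    intro η
    rw [← sum_ic]
    refine Finset.sum_congr rfl fun q _ => ?_
    simp [pre]
  simp only [h]
  rw [Finset.sum_comm, Finset.sum_div]
  refine Finset.sum_congr rfl fun q _ => ?_
  have := sum_update q (fun η : V → O => ic (σ (η q) q ∈ A))
  simp only [Function.update_self, Finset.sum_const, Finset.card_univ, nsmul_eq_mul] at this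
  unfold frac
  rw [div_eq_div_iff hVO.ne' hO.ne']
  linarith

lemma avg_exp (σ : O → V → V) (A : Finset V) (θ : ℝ) :
    (∑ η : V → O, Real.exp (-θ * (pre σ η A).card)) / Fintype.card (V → O)
      = ∏ q, (1 - frac σ A q + frac σ A q * Real.exp (-θ)) := by
  have hO := cardO_pos (O := O)
  have h : ∀ η : V → O, Real.exp (-θ * (pre σ η A).card)
      = ∏ q, (if σ (η q) q ∈ A then Real.exp (-θ) else 1) := by
    intro η
    rw [Finset.prod_ite]
    simp only [Finset.prod_const, one_pow, mul_one]
    rw [← Real.exp_nat_mul, mul_comm]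
    rfl
  simp only [h]
  have h2 := Finset.prod_univ_sum (fun _ : V => (Finset.univ : Finset O))
    (fun q o => if σ o q ∈ A then Real.exp (-θ) else 1)
  rw [Fintype.piFinset_univ] at h2
  rw [← h2, Fintype.card_fun, Nat.cast_pow, ← Finset.card_univ (α := V), ← Finset.prod_const,
    ← Finset.prod_div_distrib]
  refine Finset.prod_congr rfl fun q _ => ?_
  have : ∀ o, (if σ o q ∈ A then Real.exp (-θ) else 1)
      = 1 + ic (σ o q ∈ A) * (Real.exp (-θ) - 1) := by
    intro o; unfold ic; split_ifs <;> ring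
  simp only [this, Finset.sum_add_distrib, ← Finset.sum_mul, frac]
  simp only [Finset.sum_const, Finset.card_univ, nsmul_eq_mul]
  field_simp; ring

lemma frac_nonneg (σ : O → V → V) (A : Finset V) (q : V) : 0 ≤ frac σ A q := by
  unfold frac
  exact div_nonneg (Finset.sum_nonneg fun _ _ => ic_nonneg _) (Nat.cast_nonneg _)

lemma frac_le (σ : O → V → V) (A : Finset V) (q : V) : frac σ A q ≤ 1 := by
  unfold frac
  rw [div_le_one (cardO_pos (O := O))]
  calc ∑ o, ic (σ o q ∈ A) ≤ ∑ _o : O, (1 : ℝ) := Finset.sum_le_sum fun _ _ => ic_le _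
    _ = _ := by simp

lemma num0 (y : ℝ) (h0 : 0 ≤ y) (h1 : y ≤ 1 / 4) :
    Real.exp (-(y + y ^ 2 / 2 + y ^ 3)) ≤ 1 - y := by
  set w := y + y ^ 2 / 2 + y ^ 3 with hw
  have hw0 : 0 ≤ w := by positivity
  have h := Real.quadratic_le_exp_of_nonneg hw0
  have hwy : y + y ^ 2 / 2 ≤ w := by rw [hw]; nlinarith [pow_nonneg h0 3]
  have h2 : (y + y ^ 2 / 2) ^ 2 ≤ w ^ 2 := by gcongr
  rw [Real.exp_neg, inv_le_comm₀ (Real.exp_pos _) (by linarith)]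
  refine le_trans ?_ h
  rw [inv_le_iff_one_le_mul₀ (by linarith)]
  have h3 : 1 + y + y ^ 2 + 3 / 2 * y ^ 3 ≤ 1 + w + w ^ 2 / 2 := by
    have : 0 ≤ y ^ 4 := by positivity
    nlinarith
  have h4 : 1 ≤ (1 + y + y ^ 2 + 3 / 2 * y ^ 3) * (1 - y) := by
    have : 0 ≤ y ^ 3 := by positivity
    nlinarith
  nlinarith

lemma num1 (f θ : ℝ) (hf0 : 0 ≤ f) (hf1 : f ≤ 1) (h0 : 0 ≤ θ) (h1 : θ ≤ 1 / 4) :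
    Real.exp (-(f * (θ - θ ^ 2 / 2 + θ ^ 3 / 4) + f ^ 2 * (θ ^ 2 / 2 + θ ^ 3)))
      ≤ 1 - f + f * Real.exp (-θ) := by
  set z := 1 - Real.exp (-θ) with hz
  have hz0 : 0 ≤ z := by
    have : Real.exp (-θ) ≤ 1 := Real.exp_le_one_iff.2 (by linarith)
    linarith
  have hzθ : z ≤ θ := by have := Real.add_one_le_exp (-θ); linarith
  have hz3 : z ≤ θ - θ ^ 2 / 2 + θ ^ 3 / 4 := by
    have hb := Real.exp_bound (x := -θ) (by rw [abs_neg, abs_of_nonneg h0]; linarith)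
      (n := 3) (by norm_num)
    rw [abs_neg, abs_of_nonneg h0] at hb
    have hb := (abs_le.1 hb).1
    simp [Finset.sum_range_succ, Nat.factorial] at hb
    have : 0 ≤ θ ^ 3 := by positivity
    nlinarith
  have hy : f * z ≤ 1 / 4 := by nlinarith
  have := num0 (f * z) (by positivity) hy
  have e : 1 - f + f * Real.exp (-θ) = 1 - f * z := by rw [hz]; ring
  rw [e]
  refine le_trans (Real.exp_le_exp.2 ?_) this
  have a1 : f * z ≤ f * (θ - θ ^ 2 / 2 + θ ^ 3 / 4) := by gcongr
  have a2 : (f * z) ^ 2 ≤ f ^ 2 * θ ^ 2 := by rw [mul_pow]; gcongr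
  have a3 : (f * z) ^ 3 ≤ f ^ 2 * θ ^ 3 := by
    rw [mul_pow]
    have : f ^ 3 ≤ f ^ 2 := pow_le_pow_of_le_one hf0 hf1 (by norm_num)
    gcongr
  linarith

lemma exp_step (σ : O → V → V) (hσ : ∀ o, Function.Bijective (σ o)) (A : Finset V)
    (c θ : ℝ) (hc1 : c ≤ 1) (h0 : 0 ≤ θ) (h1 : θ ≤ c / 5)
    (hA : ∑ q, frac σ A q ^ 2 ≤ (1 - c) * A.card) :
    Real.exp (-(θ - c * θ ^ 2 / 4) * A.card) ≤
    (∑ η : V → O, Real.exp (-θ * (pre σ η A).card)) / Fintype.card (V → O) := by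
  rw [avg_exp]
  have h4 : θ ≤ 1 / 4 := by linarith
  have := Finset.prod_le_prod (s := (Finset.univ : Finset V)) (fun q _ => (Real.exp_pos _).le)
    (fun q _ => num1 (frac σ A q) θ (frac_nonneg σ A q) (frac_le σ A q) h0 h4)
  refine le_trans ?_ this
  rw [← Real.exp_sum, Real.exp_le_exp, Finset.sum_neg_distrib, Finset.sum_add_distrib,
    ← Finset.sum_mul, ← Finset.sum_mul, avg_card σ hσ]
  have hcard : (0 : ℝ) ≤ A.card := Nat.cast_nonneg _
  have hθ3 : 0 ≤ θ ^ 3 := by positivity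
  have b1 : (∑ q, frac σ A q ^ 2) * (θ ^ 2 / 2 + θ ^ 3)
      ≤ (1 - c) * A.card * (θ ^ 2 / 2 + θ ^ 3) := by gcongr
  have b2 : θ - θ ^ 2 / 2 + θ ^ 3 / 4 + (1 - c) * (θ ^ 2 / 2 + θ ^ 3) ≤ θ - c * θ ^ 2 / 4 := by
    have : 5 * θ ^ 3 ≤ c * θ ^ 2 := by nlinarith [sq_nonneg θ]
    have : 0 ≤ c * θ ^ 3 := mul_nonneg (by linarith) hθ3
    nlinarith
  nlinarith [mul_le_mul_of_nonneg_left b2 hcard]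

noncomputable def th (c : ℝ) (s : ℕ) : ℝ := 4 / c / (s + 20 / c ^ 2)

lemma th_pos (c : ℝ) (hc : 0 < c) (s : ℕ) : 0 < th c s := by unfold th; positivity

lemma th_le (c : ℝ) (hc : 0 < c) (s : ℕ) : th c s ≤ c / 5 := by
  unfold th
  have hq : 0 < (s : ℝ) + 20 / c ^ 2 := by positivity
  rw [div_le_iff₀ hq]
  have : c / 5 * (20 / c ^ 2) = 4 / c := by field_simp; norm_num
  have : 0 ≤ c / 5 * (s : ℝ) := by positivity
  nlinarith

lemma th_step (c : ℝ) (hc : 0 < c) (s : ℕ) :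
    th c s - c * th c s ^ 2 / 4 ≤ th c (s + 1) := by
  unfold th
  set q : ℝ := (s : ℝ) + 20 / c ^ 2 with hq
  have hq0 : 0 < q := by positivity
  have e : ((s + 1 : ℕ) : ℝ) + 20 / c ^ 2 = q + 1 := by push_cast; rw [hq]; ring
  rw [e]
  have e1 : 4 / c / q - c * (4 / c / q) ^ 2 / 4 = 4 / c * ((q - 1) / q ^ 2) := by
    field_simp
  have e2 : 4 / c / (q + 1) = 4 / c * (1 / (q + 1)) := by ring
  rw [e1, e2]
  gcongr ?_ * ?_
  rw [div_le_div_iff₀ (by positivity) (by positivity)]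
  nlinarith

noncomputable def KK (c : ℝ) : ℝ := 1 / (1 - Real.exp (-(th c 0)))

lemma KK_den (c : ℝ) (hc : 0 < c) : 0 < 1 - Real.exp (-(th c 0)) := by
  have := th_pos c hc 0
  have : Real.exp (-(th c 0)) < 1 := by rw [Real.exp_lt_one_iff]; linarith
  linarith

lemma surv_bound (σ : O → V → V) (hσ : ∀ o, Function.Bijective (σ o)) [Nonempty V]
    (c : ℝ) (hc : 0 < c) (hc1 : c ≤ 1)
    (hexp : ∀ A : Finset V, 2 * A.card ≤ Fintype.card V →
      ∑ q, frac σ A q ^ 2 ≤ (1 - c) * A.card) (s : ℕ) (A : Finset V) :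
    surv σ s A ≤ KK c * (1 - Real.exp (-(th c s) * A.card))
      + 2 * A.card / Fintype.card V := by
  have hK : 0 < KK c := by unfold KK; exact one_div_pos.2 (KK_den c hc)
  have hV : (0 : ℝ) < Fintype.card V := by exact_mod_cast Fintype.card_pos
  have hnn : ∀ s (A : Finset V), 0 ≤ KK c * (1 - Real.exp (-(th c s) * A.card)) := by
    intro s A
    have : Real.exp (-(th c s) * A.card) ≤ 1 := Real.exp_le_one_iff.2 (by
      have := th_pos c hc s
      have : (0 : ℝ) ≤ A.card := Nat.cast_nonneg _
      nlinarith)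
    exact mul_nonneg hK.le (by linarith)
  induction s generalizing A with
  | zero =>
    unfold surv
    have h2 : (0 : ℝ) ≤ 2 * A.card / Fintype.card V := by positivity
    split_ifs with h
    · have h1 : (1 : ℝ) ≤ A.card := by exact_mod_cast h.card_pos
      have h3 : Real.exp (-(th c 0) * A.card) ≤ Real.exp (-(th c 0)) := by
        apply Real.exp_le_exp.2
        have := th_pos c hc 0
        nlinarith
      have h4 : KK c * (1 - Real.exp (-(th c 0))) = 1 := by
        unfold KK; have := KK_den c hc; field_simp
      nlinarith
    · have := hnn 0 A; linarith
  | succ s ih =>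
    by_cases hA : 2 * A.card ≤ Fintype.card V
    · unfold surv
      have hVO := cardVO_pos (V := V) (O := O)
      have st := exp_step σ hσ A c (th c s) hc1 (th_pos c hc s).le (th_le c hc s) (hexp A hA)
      have hm := avg_pre σ A
      rw [avg_card σ hσ] at hm
      calc (∑ η : V → O, surv σ s (pre σ η A)) / (Fintype.card (V → O) : ℝ)
          ≤ (∑ η : V → O, (KK c * (1 - Real.exp (-(th c s) * (pre σ η A).card))
            + 2 * (pre σ η A).card / Fintype.card V)) / (Fintype.card (V → O) : ℝ) := by
            gcongr with η; exact ih _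
        _ = KK c * (1 - (∑ η : V → O, Real.exp (-(th c s) * (pre σ η A).card))
              / (Fintype.card (V → O) : ℝ))
            + 2 * ((∑ η : V → O, ((pre σ η A).card : ℝ)) / (Fintype.card (V → O) : ℝ))
              / Fintype.card V := by
            rw [Finset.sum_add_distrib, ← Finset.mul_sum, Finset.sum_sub_distrib,
              ← Finset.sum_div, ← Finset.mul_sum]
            simp only [Finset.sum_const, Finset.card_univ, nsmul_eq_mul]
            field_simp
        _ ≤ _ := by
            rw [hm]
            gcongr ?_ * (1 - ?_) + _
            refine le_trans ?_ st
            apply Real.exp_le_exp.2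
            have := th_step c hc s
            have hcard : (0 : ℝ) ≤ A.card := Nat.cast_nonneg _
            nlinarith
    · push Not at hA
      have h1 := surv_le_one σ (s + 1) A
      have h2 : (1 : ℝ) ≤ 2 * A.card / Fintype.card V := by
        rw [le_div_iff₀ hV, one_mul]
        exact_mod_cast hA.le
      have := hnn (s + 1) A
      linarith

lemma surv_single (σ : O → V → V) (hσ : ∀ o, Function.Bijective (σ o)) [Nonempty V]
    (c : ℝ) (hc : 0 < c) (hc1 : c ≤ 1)
    (hexp : ∀ A : Finset V, 2 * A.card ≤ Fintype.card V →
      ∑ q, frac σ A q ^ 2 ≤ (1 - c) * A.card) (s : ℕ) (p : V) :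
    surv σ s {p} ≤ KK c * (4 / c) * (1 / (s + 1)) + 2 / Fintype.card V := by
  have hK : 0 < KK c := by unfold KK; exact one_div_pos.2 (KK_den c hc)
  have h := surv_bound σ hσ c hc hc1 hexp s {p}
  simp only [Finset.card_singleton, Nat.cast_one, mul_one] at h
  have h1 := Real.add_one_le_exp (-(th c s))
  have h2 : th c s ≤ 4 / c * (1 / (s + 1)) := by
    unfold th
    rw [div_eq_mul_one_div (4 / c)]
    have : 1 ≤ 20 / c ^ 2 := by
      rw [le_div_iff₀ (by positivity)]; nlinarith
    gcongr
  have : KK c * (1 - Real.exp (-(th c s))) ≤ KK c * (4 / c * (1 / (s + 1))) := by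
    gcongr; linarith
  linarith

end surv
/-! ### Part 3: the step maps -/

noncomputable def ix : (Fin 3 → Bool) ≃ Fin 8 :=
  Fintype.equivFinOfCardEq (by simp)

/-- step map chosen by five bits -/
noncomputable def stp {r : ℕ} (hr : 2 ≤ r) (o : Fin 5 → Bool) : VV r → VV r :=
  if o 3 = true then sig hr (ix ![o 0, o 1, o 2]) else id

lemma stp_bij {r : ℕ} (hr : 2 ≤ r) (o : Fin 5 → Bool) : Function.Bijective (stp hr o) := by
  unfold stp
  split_ifs
  · exact (sig_inv hr _).bijective
  · exact Function.bijective_id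

lemma stp_h4 {r : ℕ} (hr : 2 ≤ r) (o o' : Fin 5 → Bool) (h : ∀ b, b ≠ 4 → o b = o' b) :
    stp hr o = stp hr o' := by
  unfold stp
  rw [h 0 (by decide), h 1 (by decide), h 2 (by decide), h 3 (by decide)]

/-- bits realizing the involution `i` -/
noncomputable def bt (i : Fin 8) : Fin 5 → Bool :=
  ![ix.symm i 0, ix.symm i 1, ix.symm i 2, true, false]

lemma stp_bt {r : ℕ} (hr : 2 ≤ r) (i : Fin 8) : stp hr (bt i) = sig hr i := by
  have h3 : bt i 3 = true := by simp [bt]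
  have : ![bt i 0, bt i 1, bt i 2] = ix.symm i := by
    funext j; fin_cases j <;> simp [bt]
  unfold stp
  rw [if_pos h3, this, Equiv.apply_symm_apply]

lemma bt_inj : Function.Injective bt := by
  intro i j h
  apply ix.symm.injective
  funext l
  fin_cases l
  · simpa [bt] using congrFun h 0
  · simpa [bt] using congrFun h 1
  · simpa [bt] using congrFun h 2

lemma ic_cases (p : Prop) : ic p = 0 ∨ ic p = 1 := by
  unfold ic; split_ifs <;> simp

lemma frac_gap {r : ℕ} (hr : 2 ≤ r) (A : Finset (VV r)) (q : VV r) :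
    ∑ i, (ic (sig hr i q ∈ A) - ic (q ∈ A)) ^ 2
      ≤ 1024 * (frac (stp hr) A q - frac (stp hr) A q ^ 2) := by
  set o0 : Fin 5 → Bool := fun _ => false with ho0
  have hid : stp hr o0 = id := by simp [stp, ho0]
  set y : (Fin 5 → Bool) → ℝ := fun o => ic (stp hr o q ∈ A) with hy
  have hy0 : y o0 = ic (q ∈ A) := by simp [hy, hid]
  have hyc : ∀ o, y o = 0 ∨ y o = 1 := fun o => ic_cases _
  have h1 : ∑ i, (ic (sig hr i q ∈ A) - ic (q ∈ A)) ^ 2 ≤ ∑ o, (y o - y o0) ^ 2 := by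
    have : ∑ i, (ic (sig hr i q ∈ A) - ic (q ∈ A)) ^ 2
        = ∑ o ∈ Finset.univ.map ⟨bt, bt_inj⟩, (y o - y o0) ^ 2 := by
      rw [Finset.sum_map]
      refine Finset.sum_congr rfl fun i _ => ?_
      simp only [Function.Embedding.coeFn_mk, hy, stp_bt, hid, id]
    rw [this]
    exact Finset.sum_le_sum_of_subset_of_nonneg (Finset.subset_univ _)
      fun _ _ _ => sq_nonneg _
  refine h1.trans ?_
  have hf : frac (stp hr) A q = (∑ o, y o) / 32 := by
    unfold frac
    norm_num [hy]
  rw [hf]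
  set S := ∑ o, y o with hS
  have hnn : ∀ o, 0 ≤ y o := fun o => by rcases hyc o with h | h <;> simp [h]
  have hle : ∀ o, 0 ≤ 1 - y o := fun o => by rcases hyc o with h | h <;> simp [h]
  have hS1 : y o0 ≤ S := Finset.single_le_sum (fun o _ => hnn o) (Finset.mem_univ o0)
  have hS3 : ∑ o, (1 - y o) = 32 - S := by
    rw [Finset.sum_sub_distrib]; norm_num [hS]
  have hS2 : 1 - y o0 ≤ 32 - S := by
    rw [← hS3]
    exact Finset.single_le_sum (f := fun o => 1 - y o) (fun o _ => hle o) (Finset.mem_univ o0)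
  have hS4 : 0 ≤ S := Finset.sum_nonneg fun o _ => hnn o
  have hS5 : 0 ≤ 32 - S := by rw [← hS3]; exact Finset.sum_nonneg fun o _ => hle o
  rcases hyc o0 with h | h
  · have : ∑ o, (y o - y o0) ^ 2 = S := by
      rw [h]; refine Finset.sum_congr rfl fun o _ => ?_
      rcases hyc o with h | h <;> simp [h]
    rw [this]
    rw [h] at hS2
    nlinarith
  · have : ∑ o, (y o - y o0) ^ 2 = 32 - S := by
      rw [h, ← hS3]; refine Finset.sum_congr rfl fun o _ => ?_
      rcases hyc o with h | h <;> simp [h]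
    rw [this]
    rw [h] at hS1
    nlinarith

lemma stp_exp {r : ℕ} (hr : 2 ≤ r) (A : Finset (VV r)) (hA : 2 * A.card ≤ Fintype.card (VV r)) :
    ∑ q, frac (stp hr) A q ^ 2 ≤ (1 - 1 / 14336) * A.card := by
  have h1 := expansion hr A hA
  rw [Finset.sum_comm] at h1
  have h2 := Finset.sum_le_sum (s := Finset.univ) fun q _ => frac_gap hr A q
  rw [← Finset.mul_sum, Finset.sum_sub_distrib, avg_card _ (stp_bij hr)] at h2
  linarith

/-! ### Part 4: the function and the decision trees -/

/-- read all bits of a list, then continue -/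
def readAll {n : ℕ} : List (Fin n) → (Fin n → Bool) → ((Fin n → Bool) → DTree n) → DTree n
  | [], y, k => k y
  | i :: l, y, k => DTree.node i (readAll l (Function.update y i false) k)
      (readAll l (Function.update y i true) k)

/-- overwrite -/
def ov {n : ℕ} (l : List (Fin n)) (y x : Fin n → Bool) : Fin n → Bool :=
  fun i => if i ∈ l then x i else y i

lemma ov_nil {n : ℕ} (y x : Fin n → Bool) : ov [] y x = y := by
  funext i; simp [ov]

lemma ov_cons {n : ℕ} (i : Fin n) (l : List (Fin n)) (y x : Fin n → Bool) :
    ov (i :: l) y x = ov l (Function.update y i (x i)) x := by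
  funext j
  unfold ov
  by_cases hj : j ∈ l
  · simp [hj]
  · by_cases hji : j = i
    · subst hji; simp
    · simp [hj, hji]

lemma readAll_eval {n : ℕ} (l : List (Fin n)) (y x : Fin n → Bool)
    (k : (Fin n → Bool) → DTree n) : (readAll l y k).eval x = (k (ov l y x)).eval x := by
  induction l generalizing y with
  | nil => rw [ov_nil]; rfl
  | cons i l ih =>
    rw [ov_cons, readAll, DTree.eval]
    cases h : x i <;> simp [ih]

lemma readAll_reads {n : ℕ} (l : List (Fin n)) (y x : Fin n → Bool)
    (k : (Fin n → Bool) → DTree n) (j : Fin n) (h : (readAll l y k).readsBit x j = true) :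
    j ∈ l ∨ (k (ov l y x)).readsBit x j = true := by
  induction l generalizing y with
  | nil => right; rw [ov_nil]; exact h
  | cons i l ih =>
    rw [ov_cons]
    rw [readAll, DTree.readsBit, Bool.or_eq_true] at h
    rcases h with h | h
    · left; simp at h; simp [h]
    · have : (readAll l (Function.update y i (x i)) k).readsBit x j = true := by
        cases hx : x i <;> simpa [hx] using h
      rcases ih _ this with h | h
      · left; simp [h]
      · right; exact h

section walk

variable {V : Type} [Fintype V] [DecidableEq V] [Nonempty V] {T : ℕ} [NeZero T]

abbrev OO := Fin 5 → Bool

def GG (σ : OO → V → V) (ω : ZMod T → V → OO) (w : ZMod T × V) : ZMod T × V :=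
  (w.1 + 1, σ (ω w.1 w.2) w.2)

set_option linter.unusedSectionVars false

lemma GG_fst (σ : OO → V → V) (ω : ZMod T → V → OO) (s : ℕ) (w : ZMod T × V) :
    ((GG σ ω)^[s] w).1 = w.1 + s := by
  induction s with
  | zero => simp
  | succ s ih => rw [Function.iterate_succ_apply', GG, ih]; push_cast; ring

def PP (σ : OO → V → V) (ω : ZMod T → V → OO) : Set V :=
  {p | ((0 : ZMod T), p) ∈ Function.periodicPts (GG σ ω)}

open Classical in
noncomputable def chs (S : Set V) : V := if h : S.Nonempty then h.choose else Classical.arbitrary V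

lemma chs_mem (S : Set V) (h : S.Nonempty) : chs S ∈ S := by
  unfold chs; rw [dif_pos h]; exact h.choose_spec

lemma per_fwd {X : Type*} (g : X → X) (x : X) (hx : x ∈ Function.periodicPts g) (m : ℕ) :
    g^[m] x ∈ Function.periodicPts g := by
  obtain ⟨N, hN, hp⟩ := hx
  exact ⟨N, hN, hp.apply_iterate m⟩

lemma PP_nonempty (σ : OO → V → V) (ω : ZMod T → V → OO) : (PP σ ω).Nonempty := by
  have hT : 0 < T := Nat.pos_of_ne_zero (NeZero.ne T)
  let w0 : ZMod T × V := (0, Classical.arbitrary V)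
  obtain ⟨a, b, hab, he⟩ : ∃ a b : ℕ, a < b ∧ (GG σ ω)^[T * a] w0 = (GG σ ω)^[T * b] w0 := by
    have := not_injective_infinite_finite (fun a : ℕ => (GG σ ω)^[T * a] w0)
    simp only [Function.Injective, not_forall] at this
    obtain ⟨a, b, h, hne⟩ := this
    rcases lt_or_gt_of_ne hne with h' | h'
    · exact ⟨a, b, h', h⟩
    · exact ⟨b, a, h', h.symm⟩
  refine ⟨((GG σ ω)^[T * a] w0).2, ?_⟩
  have e : ((0 : ZMod T), ((GG σ ω)^[T * a] w0).2) = (GG σ ω)^[T * a] w0 := by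
    ext
    · rw [GG_fst]; simp [w0]
    · rfl
  show _ ∈ Function.periodicPts _
  rw [e]
  refine ⟨T * b - T * a, ?_, ?_⟩
  · exact Nat.sub_pos_of_lt (Nat.mul_lt_mul_of_pos_left hab hT)
  · show (GG σ ω)^[T * b - T * a] _ = _
    rw [← Function.iterate_add_apply, Nat.sub_add_cancel (Nat.mul_le_mul_left _ hab.le), he]

lemma agree_all (σ : OO → V → V) (ω ω' : ZMod T → V → OO) (c : ZMod T)
    (h : ∀ s < T, ∀ p, ω ((GG σ ω)^[s] (c, p)).1 ((GG σ ω)^[s] (c, p)).2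
      = ω' ((GG σ ω)^[s] (c, p)).1 ((GG σ ω)^[s] (c, p)).2) (M : ℕ) :
    ∀ p, ω ((GG σ ω)^[M] (c, p)).1 ((GG σ ω)^[M] (c, p)).2
      = ω' ((GG σ ω)^[M] (c, p)).1 ((GG σ ω)^[M] (c, p)).2 := by
  have hT : 0 < T := Nat.pos_of_ne_zero (NeZero.ne T)
  induction M using Nat.strong_induction_on with
  | _ M ih =>
    intro p
    rcases Nat.lt_or_ge M T with hM | hM
    · exact h M hM p
    · have e : (GG σ ω)^[M] (c, p) = (GG σ ω)^[M - T] (c, ((GG σ ω)^[T] (c, p)).2) := by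
        have e1 : (c, ((GG σ ω)^[T] (c, p)).2) = (GG σ ω)^[T] (c, p) := by
          ext
          · rw [GG_fst]; simp
          · rfl
        rw [e1, ← Function.iterate_add_apply, Nat.sub_add_cancel hM]
      rw [e]
      exact ih (M - T) (by omega) _

lemma agree_iter (σ : OO → V → V) (ω ω' : ZMod T → V → OO) (c : ZMod T)
    (h : ∀ s < T, ∀ p, ω ((GG σ ω)^[s] (c, p)).1 ((GG σ ω)^[s] (c, p)).2
      = ω' ((GG σ ω)^[s] (c, p)).1 ((GG σ ω)^[s] (c, p)).2) (M : ℕ) (p : V) :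
    (GG σ ω)^[M] (c, p) = (GG σ ω')^[M] (c, p) := by
  induction M with
  | zero => rfl
  | succ M ih =>
    rw [Function.iterate_succ_apply', Function.iterate_succ_apply', ← ih]
    have := agree_all σ ω ω' c h M p
    unfold GG at this ⊢
    rw [this]

lemma per_from (σ : OO → V → V) (ω : ZMod T → V → OO) (c : ZMod T) (w : ZMod T × V)
    (hw : w ∈ Function.periodicPts (GG σ ω)) : ∃ M q, w = (GG σ ω)^[M] (c, q) := by
  have hT : 0 < T := Nat.pos_of_ne_zero (NeZero.ne T)
  obtain ⟨N, hN, hp⟩ := hw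
  set j := (c - w.1).val with hj
  have hjT : j < T := ZMod.val_lt _
  have hp' : (GG σ ω)^[N * T] w = w := (hp.mul_const T)
  refine ⟨N * T - j, ((GG σ ω)^[j] w).2, ?_⟩
  have e : (c, ((GG σ ω)^[j] w).2) = (GG σ ω)^[j] w := by
    ext
    · rw [GG_fst, hj]; simp
    · rfl
  have hle : j ≤ N * T := le_trans hjT.le (Nat.le_mul_of_pos_left T hN)
  rw [e, ← Function.iterate_add_apply, Nat.sub_add_cancel hle, hp']

lemma agree_PP_sub (σ : OO → V → V) (ω ω' : ZMod T → V → OO) (c : ZMod T)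
    (h : ∀ M p, (GG σ ω)^[M] (c, p) = (GG σ ω')^[M] (c, p)) : PP σ ω ⊆ PP σ ω' := by
  intro p hp
  have hp' : ((0 : ZMod T), p) ∈ Function.periodicPts (GG σ ω) := hp
  obtain ⟨M, q, hq⟩ := per_from σ ω c _ hp'
  obtain ⟨N, hN, hper⟩ := hp'
  refine ⟨N, hN, ?_⟩
  show (GG σ ω')^[N] _ = _
  have e : (GG σ ω)^[N] ((0 : ZMod T), p) = (0, p) := hper
  rw [hq, h M q, ← Function.iterate_add_apply, ← h (N + M) q, ← h M q,
    Function.iterate_add_apply, ← hq, e]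

noncomputable def val (σ : OO → V → V) (ω : ZMod T → V → OO) : Bool := ω 0 (chs (PP σ ω)) 4

lemma agree_val (σ : OO → V → V) (ω ω' : ZMod T → V → OO) (c : ZMod T)
    (h : ∀ s < T, ∀ p, ω ((GG σ ω)^[s] (c, p)).1 ((GG σ ω)^[s] (c, p)).2
      = ω' ((GG σ ω)^[s] (c, p)).1 ((GG σ ω)^[s] (c, p)).2) : val σ ω = val σ ω' := by
  have h1 := agree_iter σ ω ω' c h
  have hP : PP σ ω = PP σ ω' := Set.Subset.antisymm (agree_PP_sub σ ω ω' c h1)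
    (agree_PP_sub σ ω' ω c fun M p => (h1 M p).symm)
  unfold val
  rw [← hP]
  have hm : ((0 : ZMod T), chs (PP σ ω)) ∈ Function.periodicPts (GG σ ω) :=
    chs_mem _ (PP_nonempty σ ω)
  obtain ⟨M, q, hq⟩ := per_from σ ω c _ hm
  have := agree_all σ ω ω' c h M q
  rw [← hq] at this
  exact congrFun this 4

/-! backward process -/
def back (σ : OO → V → V) (ω : ZMod T → V → OO) : ℕ → ZMod T → Finset V → Finset V
  | 0, _, A => A
  | s + 1, t, A => back σ ω s (t - 1) (pre σ (ω (t - 1)) A)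

lemma mem_back (σ : OO → V → V) (ω : ZMod T → V → OO) (s : ℕ) (t : ZMod T) (A : Finset V)
    (p : V) : p ∈ back σ ω s t A ↔ ((GG σ ω)^[s] (t - s, p)).2 ∈ A := by
  induction s generalizing t A with
  | zero => simp [back]
  | succ s ih =>
    rw [back, ih, Function.iterate_succ_apply']
    have e : t - ((s + 1 : ℕ) : ZMod T) = t - 1 - s := by push_cast; ring
    rw [e]
    have e2 : ((GG σ ω)^[s] (t - 1 - s, p)).1 = t - 1 := by rw [GG_fst]; ring
    simp [pre, GG, e2]

lemma back_congr (σ : OO → V → V) (ω ω' : ZMod T → V → OO) (s : ℕ) (t : ZMod T) (A : Finset V)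
    (h : ∀ j < s, ω (t - 1 - (j : ℕ)) = ω' (t - 1 - (j : ℕ))) :
    back σ ω s t A = back σ ω' s t A := by
  induction s generalizing t A with
  | zero => rfl
  | succ s ih =>
    rw [back, back]
    have h0 := h 0 (Nat.succ_pos _)
    simp only [Nat.cast_zero, sub_zero] at h0
    rw [h0]
    apply ih
    intro j hj
    have := h (j + 1) (by omega)
    have e : t - 1 - ((j + 1 : ℕ) : ZMod T) = t - 1 - 1 - j := by push_cast; ring
    rwa [e] at this

lemma back_avg (σ : OO → V → V) (s : ℕ) (hs : s ≤ T) (t : ZMod T) (A : Finset V) :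
    ∑ ω : ZMod T → V → OO, ic (back σ ω s t A).Nonempty
      = (Fintype.card (ZMod T → V → OO) : ℝ) * surv σ s A := by
  induction s generalizing t A with
  | zero =>
    simp only [back, surv, Finset.sum_const, Finset.card_univ, nsmul_eq_mul]
    unfold ic
    by_cases h : A.Nonempty <;> simp [h]
  | succ s ih =>
    have hVO := cardVO_pos (V := V) (O := OO)
    have hu := sum_update (t - 1)
      (fun ω : ZMod T → V → OO => ic (back σ ω (s + 1) t A).Nonempty)
    have e : ∀ (ω : ZMod T → V → OO) (η : V → OO),
        back σ (Function.update ω (t - 1) η) (s + 1) t A = back σ ω s (t - 1) (pre σ η A) := by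
      intro ω η
      rw [back, Function.update_self]
      apply back_congr
      intro j hj
      rw [Function.update_of_ne]
      intro h
      have h1 : ((j + 1 : ℕ) : ZMod T) = 0 := by
        push_cast
        have : t - 1 - 1 - (j : ZMod T) + (j + 1) = t - 1 + (j + 1) := by rw [h]
        linear_combination -this
      rw [ZMod.natCast_eq_zero_iff] at h1
      have := Nat.le_of_dvd (Nat.succ_pos _) h1
      omega
    simp only [e] at hu
    rw [Finset.sum_comm] at hu
    simp only [ih (by omega)] at hu
    rw [← Finset.mul_sum] at hu
    unfold surv
    field_simp
    linarith

/-! trees -/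
variable {n : ℕ} (e : ((ZMod T × V) × Fin 5) ≃ Fin n)

def cfg (x : Fin n → Bool) : ZMod T → V → OO := fun t p b => x (e ((t, p), b))

def bitsOf (c : ZMod T) (S : Finset V) : Finset (Fin n) :=
  Finset.univ.filter fun i => (e.symm i).1.1 = c ∧ (e.symm i).1.2 ∈ S

noncomputable def ff (σ : OO → V → V) (x : Fin n → Bool) : Bool := val σ (cfg e x)

noncomputable def proc (σ : OO → V → V) : ℕ → ZMod T → Finset V → (Fin n → Bool) → DTree n
  | 0, _, _, y => DTree.leaf (ff e σ y)
  | s + 1, c, S, y => readAll (bitsOf e c S).toList y fun y' =>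
      proc σ s (c + 1) (S.image fun p => σ (cfg e y' c p) p) y'

lemma ov_img (σ : OO → V → V) (c : ZMod T) (S : Finset V) (x y : Fin n → Bool) :
    (S.image fun p => σ (cfg e (ov (bitsOf e c S).toList y x) c p) p)
      = S.image fun p => σ (cfg e x c p) p := by
  apply Finset.image_congr
  intro p hp
  have hp' : p ∈ S := hp
  have : cfg e (ov (bitsOf e c S).toList y x) c p = cfg e x c p := by
    funext b
    simp [cfg, ov, bitsOf, hp']
  simp only [this]

lemma proc_eval (σ : OO → V → V) (x : Fin n → Bool) (s : ℕ) (c : ZMod T) (S : Finset V)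
    (y : Fin n → Bool) : ∃ y', (proc e σ s c S y).eval x = ff e σ y' ∧
      (∀ s' < s, ∀ p ∈ S, ∀ b, y' (e ((GG σ (cfg e x))^[s'] (c, p), b))
        = x (e ((GG σ (cfg e x))^[s'] (c, p), b))) ∧
      (∀ i, y i = x i → y' i = x i) := by
  induction s generalizing c S y with
  | zero => exact ⟨y, rfl, by simp, fun i h => h⟩
  | succ s ih =>
    rw [proc, readAll_eval, ov_img]
    obtain ⟨y', h1, h2, h3⟩ := ih (c + 1) (S.image fun p => σ (cfg e x c p) p)
      (ov (bitsOf e c S).toList y x)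
    refine ⟨y', h1, ?_, ?_⟩
    · intro s' hs' p hp b
      rcases s' with _ | s'
      · apply h3
        simp [ov, bitsOf, hp]
      · rw [Function.iterate_succ_apply]
        exact h2 s' (by omega) _ (Finset.mem_image_of_mem _ hp) b
    · intro i hi
      apply h3
      unfold ov
      split_ifs <;> simp [hi]

lemma proc_reads (σ : OO → V → V) (x : Fin n → Bool) (s : ℕ) (c : ZMod T) (S : Finset V)
    (y : Fin n → Bool) (i : Fin n) (h : (proc e σ s c S y).readsBit x i = true) :
    ∃ s' < s, ∃ p ∈ S, (e.symm i).1 = (GG σ (cfg e x))^[s'] (c, p) := by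
  induction s generalizing c S y with
  | zero => simp [proc, DTree.readsBit] at h
  | succ s ih =>
    rw [proc] at h
    rcases readAll_reads _ _ _ _ _ h with h | h
    · simp [bitsOf] at h
      exact ⟨0, Nat.succ_pos _, (e.symm i).1.2, h.2, by ext <;> simp [h.1]⟩
    · rw [ov_img] at h
      obtain ⟨s', hs', p1, hp1, he⟩ := ih _ _ _ h
      obtain ⟨p, hp, rfl⟩ := Finset.mem_image.1 hp1
      exact ⟨s' + 1, by omega, p, hp, by rw [he, Function.iterate_succ_apply]; rfl⟩

noncomputable def alg (σ : OO → V → V) : RandAlg n where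
  m := T
  tree := fun c => proc e σ T ((c : ℕ) : ZMod T) Finset.univ (fun _ => false)
  w := fun _ => 1 / T
  w_nonneg := fun _ => by positivity
  w_sum := by
    have : (T : ℝ) ≠ 0 := by exact_mod_cast NeZero.ne T
    simp [this]

lemma alg_correct (σ : OO → V → V) (c : Fin T) (x : Fin n → Bool) :
    ((alg e σ).tree c).eval x = ff e σ x := by
  obtain ⟨y', h1, h2, -⟩ := proc_eval e σ x T ((c : ℕ) : ZMod T) Finset.univ (fun _ => false)
  show (proc e σ T _ Finset.univ (fun _ => false)).eval x = _
  rw [h1]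
  symm
  apply agree_val σ _ _ ((c : ℕ) : ZMod T)
  intro s hs p
  funext b
  exact (h2 s hs p (Finset.mem_univ _) b).symm

def flipv (x : Fin n → Bool) : Fin n → Bool := fun i => if (e.symm i).2 = 4 then !(x i) else x i

lemma flipv_inv : Function.Involutive (flipv e) := by
  intro x; funext i; unfold flipv; split_ifs <;> simp

lemma ff_flip (σ : OO → V → V) (h4 : ∀ o o' : OO, (∀ b, b ≠ 4 → o b = o' b) → σ o = σ o')
    (x : Fin n → Bool) : ff e σ (flipv e x) = !(ff e σ x) := by
  have hG : GG σ (cfg e (flipv e x)) = GG σ (cfg e x) := by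
    funext w
    unfold GG
    rw [h4 (cfg e (flipv e x) w.1 w.2) (cfg e x w.1 w.2)]
    intro b hb
    simp [cfg, flipv, hb]
  unfold ff val PP
  rw [hG]
  simp [cfg, flipv]

lemma ff_balanced (σ : OO → V → V) (h4 : ∀ o o' : OO, (∀ b, b ≠ 4 → o b = o' b) → σ o = σ o') :
    balanced (ff e σ) := by
  classical
  unfold balanced
  have h1 : Nat.card {x : Fin n → Bool // ff e σ x = true}
      = Nat.card {x : Fin n → Bool // ¬ ff e σ x = true} := by
    apply Nat.card_congr
    refine Equiv.subtypeEquiv (Function.Involutive.toPerm _ (flipv_inv e)) ?_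
    intro x
    simp [ff_flip e σ h4]
  have h2 : Nat.card {x : Fin n → Bool // ff e σ x = true}
      + Nat.card {x : Fin n → Bool // ¬ ff e σ x = true} = 2 ^ n := by
    rw [Nat.card_eq_fintype_card, Nat.card_eq_fintype_card,
      Fintype.card_subtype_compl, Nat.add_sub_cancel' (Fintype.card_subtype_le _)]
    simp
  omega

def cfgE : (Fin n → Bool) ≃ (ZMod T → V → OO) where
  toFun := cfg e
  invFun := fun ω i => ω (e.symm i).1.1 (e.symm i).1.2 (e.symm i).2
  left_inv := by intro x; funext i; simp [cfg]
  right_inv := by intro ω; funext t p b; simp [cfg]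

lemma read_bound (σ : OO → V → V) (i : Fin n) :
    readProb (alg e σ) i ≤ (1 / T) * ∑ s ∈ Finset.range T, surv σ s {(e.symm i).1.2} := by
  classical
  set t := (e.symm i).1.1 with ht
  set p := (e.symm i).1.2 with hp
  have hcard : (Fintype.card (ZMod T → V → OO) : ℝ) = 2 ^ n := by
    rw [← Fintype.card_congr (cfgE e)]; simp
  have key : ∀ c : Fin T, ∑ x : Fin n → Bool,
      (if ((alg e σ).tree c).readsBit x i then (alg e σ).w c else 0)
      ≤ (1 / T) * (2 ^ n * surv σ (t - ((c : ℕ) : ZMod T)).val {p}) := by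
    intro c
    set s := (t - ((c : ℕ) : ZMod T)).val with hs
    have hsT : s < T := ZMod.val_lt _
    rw [← hcard, ← back_avg σ s hsT.le t {p}, ← Equiv.sum_comp (cfgE e), Finset.mul_sum]
    refine Finset.sum_le_sum fun x _ => ?_
    have hT : (0 : ℝ) ≤ 1 / T := by positivity
    split_ifs with h
    · obtain ⟨s', hs', q, -, hq⟩ := proc_reads e σ x T _ _ _ i h
      have hl : t = ((c : ℕ) : ZMod T) + s' := by
        rw [ht, hq, GG_fst]
      have hss : s = s' := by
        rw [hs, hl, add_sub_cancel_left, ZMod.val_natCast_of_lt hs']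
      have : (back σ (cfgE e x) s t {p}).Nonempty := by
        refine ⟨q, ?_⟩
        rw [mem_back, Finset.mem_singleton, hss]
        have e1 : t - (s' : ZMod T) = ((c : ℕ) : ZMod T) := by rw [hl]; ring
        rw [e1, hp, hq]
        rfl
      simp only [ic, this, if_true, mul_one]
      exact le_rfl
    · exact mul_nonneg hT (ic_nonneg _)
  unfold readProb
  rw [div_le_iff₀ (by positivity)]
  refine le_trans (Finset.sum_le_sum fun c _ => key c) ?_
  rw [← Finset.mul_sum, ← Finset.mul_sum, mul_assoc, mul_comm (∑ s ∈ Finset.range T, _)]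
  refine le_of_eq ?_
  congr 2
  apply Finset.sum_bij (fun (c : Fin T) _ => (t - ((c : ℕ) : ZMod T)).val)
  · intro c _; simp [ZMod.val_lt]
  · intro a _ b _ hab
    have := ZMod.val_injective T hab
    have h1 : ((a : ℕ) : ZMod T) = ((b : ℕ) : ZMod T) := by linear_combination -this
    have h2 := congrArg ZMod.val h1
    rw [ZMod.val_natCast_of_lt a.2, ZMod.val_natCast_of_lt b.2] at h2
    exact Fin.ext h2
  · intro s hs
    refine ⟨⟨(t - (s : ZMod T)).val, ZMod.val_lt _⟩, Finset.mem_univ _, ?_⟩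
    simp [ZMod.val_natCast_of_lt (Finset.mem_range.1 hs)]
  · intro c _; rfl

end walk
/-! ### Part 5: conclusion -/

noncomputable def CC : ℝ := KK (1 / 14336) * (4 / (1 / 14336))

lemma CC_nonneg : 0 ≤ CC := by
  have := KK_den (1 / 14336) (by norm_num)
  unfold CC KK
  positivity

lemma card_VV (r : ℕ) : Fintype.card (VV r) = 4 ^ r := by
  simp only [Fintype.card_prod, Fintype.card_fun, ZMod.card, Fintype.card_fin]
  rw [← mul_pow]; norm_num

lemma sum_surv {r : ℕ} (hr : 2 ≤ r) (T : ℕ) (hT : T = 4 ^ r * r) (p : VV r) :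
    (1 / T : ℝ) * ∑ s ∈ Finset.range T, surv (stp hr) s {p} ≤ (4 * CC + 2) / 4 ^ r := by
  have hr0 : (0 : ℝ) < r := by exact_mod_cast (by omega : 0 < r)
  have hTr : (T : ℝ) = 4 ^ r * r := by rw [hT]; push_cast; ring
  have hT0 : (0 : ℝ) < T := by rw [hTr]; positivity
  have hC := CC_nonneg
  have h1 : ∀ s ∈ Finset.range T, surv (stp hr) s {p} ≤ CC * (1 / (s + 1)) + 2 / 4 ^ r := by
    intro s _
    have := surv_single (stp hr) (stp_bij hr) (1 / 14336) (by norm_num) (by norm_num)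
      (fun A hA => stp_exp hr A hA) s p
    rw [card_VV] at this
    push_cast at this
    exact this
  have h2 : ∑ s ∈ Finset.range T, (1 / ((s : ℝ) + 1)) ≤ 1 + Real.log T := by
    have := harmonic_le_one_add_log T
    unfold harmonic at this
    push_cast at this
    simpa using this
  have hl : Real.log T ≤ 3 * r := by
    rw [hTr, Real.log_mul (by positivity) (by positivity), Real.log_pow]
    have a : Real.log r ≤ r - 1 := Real.log_le_sub_one_of_pos hr0
    have b : Real.log 4 ≤ 2 := by
      have : (4 : ℝ) = 2 ^ 2 := by norm_num
      rw [this, Real.log_pow]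
      have := Real.log_two_lt_d9
      push_cast; linarith
    nlinarith
  have hr1 : (1 : ℝ) ≤ r := by exact_mod_cast (by omega : 1 ≤ r)
  have h3 : ∑ s ∈ Finset.range T, surv (stp hr) s {p} ≤ CC * (4 * r) + T * (2 / 4 ^ r) := by
    refine (Finset.sum_le_sum h1).trans ?_
    rw [Finset.sum_add_distrib, ← Finset.mul_sum, Finset.sum_const, Finset.card_range,
      nsmul_eq_mul]
    gcongr
    linarith
  calc (1 / T : ℝ) * ∑ s ∈ Finset.range T, surv (stp hr) s {p}
      ≤ (1 / T : ℝ) * (CC * (4 * r) + T * (2 / 4 ^ r)) := by gcongr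
    _ = (4 * CC + 2) / 4 ^ r := by
      rw [hTr]; field_simp

lemma final_num (r n : ℕ) (hr : 2 ≤ r) (hn : n = 5 * (4 ^ r * (4 ^ r * r))) :
    (1 : ℝ) / 4 ^ r ≤ 3 * Real.sqrt (Real.log n) / Real.sqrt n := by
  have hr0 : (0 : ℝ) < r := by exact_mod_cast (by omega : 0 < r)
  have hr1 : (1 : ℝ) ≤ r := by exact_mod_cast (by omega : 1 ≤ r)
  have hnr : (n : ℝ) = 5 * (4 ^ r * (4 ^ r * r)) := by rw [hn]; push_cast; ring
  have hn0 : (0 : ℝ) < n := by rw [hnr]; positivity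
  have hlog : (r : ℝ) ≤ Real.log n := by
    rw [Real.le_log_iff_exp_le hn0, hnr]
    have e : Real.exp r ≤ 4 ^ r := by
      have : Real.exp r = Real.exp 1 ^ r := by rw [← Real.exp_nat_mul, mul_one]
      rw [this]
      have := Real.exp_one_lt_d9
      gcongr
      linarith
    have e1 : (1 : ℝ) ≤ 4 ^ r := one_le_pow₀ (by norm_num)
    have e2 : (1 : ℝ) ≤ 4 ^ r * r := one_le_mul_of_one_le_of_one_le e1 hr1
    have e3 : (4 : ℝ) ^ r * 1 ≤ 4 ^ r * (4 ^ r * r) := by gcongr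
    linarith
  have hs : Real.sqrt n ≤ 3 * 4 ^ r * Real.sqrt (Real.log n) := by
    apply Real.sqrt_le_iff.2
    refine ⟨by positivity, ?_⟩
    rw [mul_pow, Real.sq_sqrt (by linarith), hnr]
    have : (4 : ℝ) ^ r * 4 ^ r * r ≤ 4 ^ r * 4 ^ r * Real.log n := by gcongr
    rw [← hnr]
    have e1 : (0 : ℝ) < 4 ^ r * 4 ^ r * r := by positivity
    nlinarith
  rw [div_le_div_iff₀ (by positivity) (Real.sqrt_pos.2 hn0)]
  linarith

theorem main (N : ℕ) : ∃ n, N ≤ n ∧ 0 < n ∧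
      ∃ (f : (Fin n → Bool) → Bool) (A : RandAlg n),
        balanced f ∧
        (∀ r x, (A.tree r).eval x = f x) ∧
        (∀ i, readProb A i ≤ (3 * (4 * CC + 2)) * Real.sqrt (Real.log n) / Real.sqrt n) := by
  obtain ⟨r, hrN⟩ : ∃ r, r = N + 2 := ⟨_, rfl⟩
  have hr : 2 ≤ r := by omega
  obtain ⟨T, hT⟩ : ∃ T, T = 4 ^ r * r := ⟨_, rfl⟩
  have hk : 0 < 4 ^ r := by positivity
  have hT1 : r ≤ T := by rw [hT]; exact Nat.le_mul_of_pos_left _ hk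
  haveI : NeZero T := ⟨by omega⟩
  obtain ⟨n, hn⟩ : ∃ n, n = 5 * (4 ^ r * (4 ^ r * r)) := ⟨_, rfl⟩
  have hn1 : T ≤ n := by
    rw [hn, ← hT]
    have := Nat.le_mul_of_pos_left T hk
    omega
  have hcard : Fintype.card ((ZMod T × VV r) × Fin 5) = n := by
    rw [Fintype.card_prod, Fintype.card_prod, card_VV, ZMod.card, Fintype.card_fin, hn, ← hT]
    ring
  have e : ((ZMod T × VV r) × Fin 5) ≃ Fin n := Fintype.equivFinOfCardEq hcard
  refine ⟨n, by omega, by omega, ff e (stp hr), alg e (stp hr),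
    ff_balanced e (stp hr) (stp_h4 hr), fun c x => alg_correct e (stp hr) c x, fun i => ?_⟩
  refine (read_bound e (stp hr) i).trans ((sum_surv hr T hT _).trans ?_)
  have h1 := final_num r n hr hn
  have hC := CC_nonneg
  calc (4 * CC + 2) / 4 ^ r = (4 * CC + 2) * (1 / 4 ^ r) := by ring
    _ ≤ (4 * CC + 2) * (3 * Real.sqrt (Real.log n) / Real.sqrt n) := by gcongr
    _ = _ := by ring

end LR

/-- There exist a constant `C > 0` and infinitely many positive
integers `n` for which there is a balanced Boolean function on `n` bits together
with a randomized decision-tree algorithm that on every input outputs `f x` with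
probability 1, and whose revealment satisfies
`δ = max_i δ_i ≤ C · n^(-1/2) · √(log n)`. -/
theorem statement0 :
    ∃ C > (0 : ℝ), ∀ N : ℕ, ∃ n, N ≤ n ∧ 0 < n ∧
      ∃ (f : (Fin n → Bool) → Bool) (A : RandAlg n),
        balanced f ∧
        (∀ r x, (A.tree r).eval x = f x) ∧
        (∀ i, readProb A i ≤ C * Real.sqrt (Real.log n) / Real.sqrt n) := by
  have hC := LR.CC_nonneg
  exact ⟨3 * (4 * LR.CC + 2), by positivity, LR.main⟩
end

section
/- For every ε > 0 there exist a constant C > 0 and infinitely many positive integers n for which there is a balanced Boolean function f : {0,1}^n → {0,1} (i.e., Pr[f(x)=1] = 1/2 for x uniform on {0,1}^n) together with a randomized decision-tree algorithm A such that Pr[A's output on x differs from f(x)] ≤ ε (probability over uniform x and the algorithm's randomness) and whose revealment satisfies δ = max_i δ_i ≤ C · n^{-1/2}. -/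
def idx {L W : ℕ} (hL : 0 < L) (hW : 0 < W) (t u : ℕ) : Fin (L * W) :=
  finProdFinEquiv (⟨t % L, Nat.mod_lt _ hL⟩, ⟨u % W, Nat.mod_lt _ hW⟩)

theorem idx_eq {L W : ℕ} (hL : 0 < L) (hW : 0 < W) {t u s v : ℕ} :
    idx hL hW t u = idx hL hW s v ↔ t % L = s % L ∧ u % W = v % W := by
  simp [idx]

def walk {L W : ℕ} (hL : 0 < L) (hW : 0 < W) : ℕ → ℕ → ℕ → DTree (L * W)
  | 0, _, u => .leaf (decide (u % 2 = 1))
  | m + 1, t, u => .node (idx hL hW t u) (walk hL hW m (t + 1) (2 * u))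
      (walk hL hW m (t + 1) (2 * u + 1))

theorem walk_congr {L W : ℕ} (hL : 0 < L) (hW : 0 < W) (h2 : 2 ∣ W) (m : ℕ) :
    ∀ t u v : ℕ, u ≡ v [MOD W] → walk hL hW m t u = walk hL hW m t v := by
  induction m with
  | zero =>
    intro t u v h
    have : u % 2 = v % 2 := h.of_dvd h2
    simp [walk, this]
  | succ m ih =>
    intro t u v h
    have h1 : idx hL hW t u = idx hL hW t v := (idx_eq hL hW).2 ⟨rfl, h⟩
    simp only [walk]
    rw [h1, ih (t+1) (2*u) (2*v) (h.mul_left 2),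
      ih (t+1) (2*u+1) (2*v+1) ((h.mul_left 2).add_right 1)]

theorem idx_layer_ne {L W : ℕ} (hL : 0 < L) (hW : 0 < W) {t s : ℕ} (u v : ℕ)
    (h : t < s) (hs : s < L) : idx hL hW t u ≠ idx hL hW s v := by
  intro he
  have := ((idx_eq hL hW).1 he).1
  rw [Nat.mod_eq_of_lt hs, Nat.mod_eq_of_lt (h.trans hs)] at this
  omega

theorem walk_eval_update {L W : ℕ} (hL : 0 < L) (hW : 0 < W) (m : ℕ) :
    ∀ (t s u v : ℕ) (x : Fin (L * W) → Bool) (b : Bool), t < s → s + m ≤ L →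
      (walk hL hW m s u).eval (Function.update x (idx hL hW t v) b) =
      (walk hL hW m s u).eval x := by
  induction m with
  | zero => intros; simp [walk, DTree.eval]
  | succ m ih =>
    intro t s u v x b h hs
    simp only [walk, DTree.eval]
    rw [ih t (s+1) _ v x b (by omega) (by omega), ih t (s+1) _ v x b (by omega) (by omega),
      Function.update_of_ne (idx_layer_ne hL hW v u h (by omega)).symm]

theorem walk_reads_update {L W : ℕ} (hL : 0 < L) (hW : 0 < W) (m : ℕ) (i : Fin (L * W)) :
    ∀ (t s u v : ℕ) (x : Fin (L * W) → Bool) (b : Bool), t < s → s + m ≤ L →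
      (walk hL hW m s u).readsBit (Function.update x (idx hL hW t v) b) i =
      (walk hL hW m s u).readsBit x i := by
  induction m with
  | zero => intros; simp [walk, DTree.readsBit]
  | succ m ih =>
    intro t s u v x b h hs
    simp only [walk, DTree.readsBit]
    rw [ih t (s+1) _ v x b (by omega) (by omega), ih t (s+1) _ v x b (by omega) (by omega),
      Function.update_of_ne (idx_layer_ne hL hW v u h (by omega)).symm]

theorem walk_not_reads {L W : ℕ} (hL : 0 < L) (hW : 0 < W) (m : ℕ) :
    ∀ (t s u v : ℕ) (x : Fin (L * W) → Bool), t < s → s + m ≤ L →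
      (walk hL hW m s u).readsBit x (idx hL hW t v) = false := by
  induction m with
  | zero => intros; simp [walk, DTree.readsBit]
  | succ m ih =>
    intro t s u v x h hs
    simp only [walk, DTree.readsBit]
    rw [ih t (s+1) _ v x (by omega) (by omega), ih t (s+1) _ v x (by omega) (by omega)]
    simpa using (idx_layer_ne hL hW v u h (by omega)).symm

theorem avg_bit {n : ℕ} (i : Fin n) (g0 g1 h : (Fin n → Bool) → ℝ)
    (hh : ∀ x, h x = if x i then g1 x else g0 x)
    (h0 : ∀ x b, g0 (Function.update x i b) = g0 x)
    (h1 : ∀ x b, g1 (Function.update x i b) = g1 x) :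
    ∑ x, h x = (∑ x, g0 x + ∑ x, g1 x) / 2 := by
  have hinv : Function.Involutive (fun x : Fin n → Bool => Function.update x i (!x i)) := by
    intro x; simp
  have e : ∑ x, h x = ∑ x, h (Function.update x i (!x i)) :=
    (Equiv.sum_comp hinv.toPerm h).symm
  have : ∑ x, h x + ∑ x, h x = ∑ x, g0 x + ∑ x, g1 x := by
    nth_rewrite 2 [e]
    rw [← Finset.sum_add_distrib, ← Finset.sum_add_distrib]
    refine Finset.sum_congr rfl fun x _ => ?_
    rw [hh, hh, h0, h1]
    cases hx : x i <;> simp [add_comm]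
  linarith

noncomputable def dis {L W : ℕ} (hL : 0 < L) (hW : 0 < W) (m t u v : ℕ) : ℝ :=
  ∑ x, if (walk hL hW m t u).eval x ≠ (walk hL hW m t v).eval x then (1:ℝ) else 0

theorem dis_le {L W : ℕ} (hL : 0 < L) (hW : 0 < W) (m t u v : ℕ) :
    dis hL hW m t u v ≤ 2 ^ (L * W) := by
  calc dis hL hW m t u v ≤ ∑ x : Fin (L * W) → Bool, (1:ℝ) :=
        Finset.sum_le_sum fun x _ => by split_ifs <;> norm_num
    _ = _ := by simp

theorem dis_succ {L W : ℕ} (hL : 0 < L) (hW : 0 < W) (m t u v : ℕ) (hm : t + (m + 1) ≤ L)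
    (huv : ¬ u ≡ v [MOD W]) :
    dis hL hW (m + 1) t u v = (dis hL hW m (t+1) (2*u) (2*v) + dis hL hW m (t+1) (2*u) (2*v+1)
      + dis hL hW m (t+1) (2*u+1) (2*v) + dis hL hW m (t+1) (2*u+1) (2*v+1)) / 4 := by
  have hne : idx hL hW t u ≠ idx hL hW t v := fun h => huv ((idx_eq hL hW).1 h).2
  have key : ∀ w : ℕ,
      ∑ x, (if (walk hL hW m (t+1) w).eval x ≠ (walk hL hW (m+1) t v).eval x then (1:ℝ) else 0)
      = (dis hL hW m (t+1) w (2*v) + dis hL hW m (t+1) w (2*v+1)) / 2 := by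
    intro w
    refine avg_bit (idx hL hW t v) _ _ _ ?_ ?_ ?_
    · intro x
      cases hx : x (idx hL hW t v) <;> simp [walk, DTree.eval, hx]
    · intro x b
      simp only [walk_eval_update hL hW m t (t+1) _ v x b (by omega) (by omega)]
    · intro x b
      simp only [walk_eval_update hL hW m t (t+1) _ v x b (by omega) (by omega)]
  have h2 := avg_bit (idx hL hW t u)
    (fun x => if (walk hL hW m (t+1) (2*u)).eval x ≠ (walk hL hW (m+1) t v).eval x
      then (1:ℝ) else 0)
    (fun x => if (walk hL hW m (t+1) (2*u+1)).eval x ≠ (walk hL hW (m+1) t v).eval x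
      then (1:ℝ) else 0)
    (fun x => if (walk hL hW (m+1) t u).eval x ≠ (walk hL hW (m+1) t v).eval x
      then (1:ℝ) else 0) ?_ ?_ ?_
  · rw [key, key] at h2
    unfold dis at h2 ⊢
    rw [h2]; ring
  · intro x
    cases hx : x (idx hL hW t u) <;> simp [walk, DTree.eval, hx]
  · intro x b
    simp only [walk, DTree.eval, Function.update_of_ne hne.symm,
      walk_eval_update hL hW m t (t+1) _ u x b (by omega) (by omega)]
  · intro x b
    simp only [walk, DTree.eval, Function.update_of_ne hne.symm,
      walk_eval_update hL hW m t (t+1) _ u x b (by omega) (by omega)]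

theorem dis_bound {L k : ℕ} (hL : 0 < L) (hW : 0 < 2 ^ k) (hk : 1 ≤ k) (m : ℕ) :
    ∀ (t u v r : ℕ), t + m ≤ L → r ≤ k → u ≡ v [MOD 2 ^ r] →
      m * dis hL hW m t u v ≤ ((2:ℝ) ^ (k+1) - 2 ^ (r+1)) * 2 ^ (L * 2 ^ k) := by
  have h2 : 2 ∣ 2 ^ k := dvd_pow_self 2 (by omega)
  induction m with
  | zero =>
    intro t u v r _ hr _
    have : (2:ℝ) ^ (r+1) ≤ 2 ^ (k+1) := pow_le_pow_right₀ (by norm_num) (by omega)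
    have : 0 ≤ ((2:ℝ) ^ (k+1) - 2 ^ (r+1)) := by linarith
    simp only [Nat.cast_zero, zero_mul]
    positivity
  | succ m ih =>
    intro t u v r ht hr h
    by_cases huv : u ≡ v [MOD 2 ^ k]
    · have : dis hL hW (m+1) t u v = 0 := by
        simp [dis, walk_congr hL hW h2 (m+1) t u v huv]
      rw [this]
      have : (2:ℝ) ^ (r+1) ≤ 2 ^ (k+1) := pow_le_pow_right₀ (by norm_num) (by omega)
      have : 0 ≤ ((2:ℝ) ^ (k+1) - 2 ^ (r+1)) := by linarith
      rw [mul_zero]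
      positivity
    · have hrk : r < k := by
        rcases hr.lt_or_eq with h' | h'
        · exact h'
        · subst h'; exact absurd h huv
      have e := dis_succ hL hW m t u v ht huv
      have hd : 2 * u ≡ 2 * v [MOD 2 ^ (r+1)] := by
        rw [pow_succ']; exact h.mul_left' 2
      have a := ih (t+1) (2*u) (2*v) (r+1) (by omega) (by omega) hd
      have b := ih (t+1) (2*u+1) (2*v+1) (r+1) (by omega) (by omega) (hd.add_right 1)
      have c := ih (t+1) (2*u) (2*v+1) 0 (by omega) (by omega) (by simp [Nat.modEq_one])
      have d := ih (t+1) (2*u+1) (2*v) 0 (by omega) (by omega) (by simp [Nat.modEq_one])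
      have f := dis_le hL hW (m+1) t u v
      have g : (m:ℝ) * dis hL hW (m+1) t u v ≤
          ((2:ℝ) ^ (k+1) - 2 ^ (r+1) - 1) * 2 ^ (L * 2 ^ k) := by
        rw [e]
        have : (2:ℝ)^(r+1+1) = 2 * 2^(r+1) := pow_succ' _ _
        rw [this] at a b
        norm_num at c d
        linarith
      push_cast
      linarith

theorem count_half {L W : ℕ} (hL : 0 < L) (hW : 0 < W) (m : ℕ) :
    ∀ (t u : ℕ), t + (m + 1) ≤ L →
      ∑ x, (if (walk hL hW (m+1) t u).eval x = true then (1:ℝ) else 0) = 2 ^ (L * W) / 2 := by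
  have step : ∀ m t u : ℕ, t + (m+1) ≤ L →
      ∑ x, (if (walk hL hW (m+1) t u).eval x = true then (1:ℝ) else 0) =
      (∑ x, (if (walk hL hW m (t+1) (2*u)).eval x = true then (1:ℝ) else 0) +
       ∑ x, (if (walk hL hW m (t+1) (2*u+1)).eval x = true then (1:ℝ) else 0)) / 2 := by
    intro m t u h
    refine avg_bit (idx hL hW t u) _ _ _ ?_ ?_ ?_
    · intro x
      cases hx : x (idx hL hW t u) <;> simp [walk, DTree.eval, hx]
    · intro x b
      simp only [walk_eval_update hL hW m t (t+1) _ u x b (by omega) (by omega)]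
    · intro x b
      simp only [walk_eval_update hL hW m t (t+1) _ u x b (by omega) (by omega)]
  induction m with
  | zero =>
    intro t u h
    rw [step 0 t u h]
    have : (2 * u + 1) % 2 = 1 := by omega
    simp [walk, DTree.eval, this]
  | succ m ih =>
    intro t u h
    rw [step (m+1) t u h, ih _ _ (by omega), ih _ _ (by omega)]
    ring

noncomputable def rd {L W : ℕ} (hL : 0 < L) (hW : 0 < W) (i : Fin (L * W)) (m t u : ℕ) : ℝ :=
  ∑ x, if (walk hL hW m t u).readsBit x i then (1:ℝ) else 0

theorem sum_double (F : ℕ → ℝ) (W : ℕ) :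
    ∑ u ∈ Finset.range W, (F (2*u) + F (2*u+1)) = ∑ u ∈ Finset.range (2 * W), F u := by
  induction W with
  | zero => simp
  | succ W ih =>
    rw [Finset.sum_range_succ, ih, show 2 * (W+1) = 2*W+1+1 by ring, Finset.sum_range_succ,
      Finset.sum_range_succ]
    ring

theorem rd_sum {L W : ℕ} (hL : 0 < L) (hW : 0 < W) (h2 : 2 ∣ W) (i : Fin (L * W)) (m : ℕ) :
    ∀ t : ℕ, t + m ≤ L → ∑ u ∈ Finset.range W, rd hL hW i m t u ≤ 2 ^ (L * W) := by
  induction m with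
  | zero => intro t _; simp [rd, walk, DTree.readsBit]
  | succ m ih =>
    intro t ht
    by_cases hi : ∃ v, v < W ∧ i = idx hL hW t v
    · obtain ⟨v, hv, rfl⟩ := hi
      rw [Finset.sum_eq_single v]
      · calc rd hL hW _ (m+1) t v ≤ ∑ x : Fin (L * W) → Bool, (1:ℝ) :=
            Finset.sum_le_sum fun x _ => by split_ifs <;> norm_num
          _ = _ := by simp
      · intro u hu huv
        have hne : idx hL hW t u ≠ idx hL hW t v := by
          intro h
          have := ((idx_eq hL hW).1 h).2
          rw [Nat.mod_eq_of_lt hv, Nat.mod_eq_of_lt (Finset.mem_range.1 hu)] at this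
          exact huv this
        simp only [rd]
        refine Finset.sum_eq_zero fun x _ => ?_
        simp only [walk, DTree.readsBit]
        rw [walk_not_reads hL hW m t (t+1) _ v x (by omega) (by omega),
          walk_not_reads hL hW m t (t+1) _ v x (by omega) (by omega)]
        simp [hne]
      · intro h; exact absurd (Finset.mem_range.2 hv) h
    · have hne : ∀ u, idx hL hW t u ≠ i := by
        intro u h
        exact hi ⟨u % W, Nat.mod_lt _ hW, by rw [← h]; exact (idx_eq hL hW).2 ⟨rfl, by simp⟩⟩
      have step : ∀ u, rd hL hW i (m+1) t u =
          (rd hL hW i m (t+1) (2*u) + rd hL hW i m (t+1) (2*u+1)) / 2 := by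
        intro u
        refine avg_bit (idx hL hW t u) _ _ _ ?_ ?_ ?_
        · intro x
          cases hx : x (idx hL hW t u) <;> simp [walk, DTree.readsBit, hx, hne u]
        · intro x b
          simp only [walk_reads_update hL hW m i t (t+1) _ u x b (by omega) (by omega)]
        · intro x b
          simp only [walk_reads_update hL hW m i t (t+1) _ u x b (by omega) (by omega)]
      simp only [step]
      rw [← Finset.sum_div, sum_double (rd hL hW i m (t+1)), two_mul, Finset.sum_range_add]
      have per : ∀ u, rd hL hW i m (t+1) (W + u) = rd hL hW i m (t+1) u := by
        intro u
        simp only [rd]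
        rw [walk_congr hL hW h2 m (t+1) (W+u) u (by simp [Nat.ModEq])]
      simp only [per]
      have := ih (t+1) (by omega)
      linarith

theorem statement1 :
    ∀ ε > (0 : ℝ), ∃ C > (0 : ℝ), ∀ N : ℕ, ∃ n, N ≤ n ∧ 0 < n ∧
      ∃ (f : (Fin n → Bool) → Bool) (A : RandAlg n),
        balanced f ∧
        errProb A f ≤ ε ∧
        (∀ i, readProb A i ≤ C / Real.sqrt n) := by
  intro ε hε
  obtain ⟨K, hK⟩ := exists_nat_gt (2 / ε)
  have hK0 : 0 < K := by
    have : (0:ℝ) < K := lt_trans (by positivity) hK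
    exact_mod_cast this
  have hKr : (0:ℝ) < K := by exact_mod_cast hK0
  refine ⟨Real.sqrt K, Real.sqrt_pos.2 hKr, fun N => ?_⟩
  obtain ⟨k, hk⟩ : ∃ k, k = N + 1 := ⟨_, rfl⟩
  have hk1 : 1 ≤ k := by omega
  have hW : 0 < 2 ^ k := by positivity
  have h2 : 2 ∣ 2 ^ k := dvd_pow_self 2 (by omega)
  obtain ⟨L, hLd⟩ : ∃ L, L = K * 2 ^ k := ⟨_, rfl⟩
  have hL : 0 < L := by rw [hLd]; positivity
  have hWr : (0:ℝ) < 2 ^ k := by positivity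
  have hLr : (L:ℝ) = K * 2 ^ k := by rw [hLd]; push_cast; rfl
  refine ⟨L * 2 ^ k, ?_, by positivity, (walk hL hW L 0 0).eval,
    ⟨2 ^ k, fun r => walk hL hW L 0 r, fun _ => 1 / 2 ^ k, fun _ => by positivity, ?_⟩, ?_, ?_, ?_⟩
  · have : k < 2 ^ k := Nat.lt_two_pow_self
    have : 2 ^ k ≤ L * 2 ^ k := Nat.le_mul_of_pos_left _ hL
    omega
  · simp
  · obtain ⟨l, hl⟩ : ∃ l, L = l + 1 := ⟨L - 1, by omega⟩
    have := count_half hL hW l 0 0 (by omega)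
    rw [← hl, Finset.sum_boole] at this
    unfold balanced
    rw [Nat.card_eq_fintype_card, Fintype.card_subtype]
    have h3 : (2:ℝ) * ((Finset.univ.filter
      fun x => (walk hL hW L 0 0).eval x = true).card : ℝ) = 2 ^ (L * 2 ^ k) := by
      rw [this]; ring
    exact_mod_cast h3
  · unfold errProb
    have hb : ∀ r : Fin (2 ^ k), (∑ x, if (walk hL hW L 0 r).eval x ≠ (walk hL hW L 0 0).eval x
        then (1:ℝ) / 2 ^ k else 0) ≤ ε * 2 ^ (L * 2 ^ k) / 2 ^ k := by
      intro r
      have e : (∑ x, if (walk hL hW L 0 r).eval x ≠ (walk hL hW L 0 0).eval x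
        then (1:ℝ) / 2 ^ k else 0) = dis hL hW L 0 r 0 / 2 ^ k := by
        rw [dis, Finset.sum_div]
        refine Finset.sum_congr rfl fun x _ => ?_
        split_ifs <;> simp
      rw [e]
      have hd := dis_bound hL hW hk1 L 0 r 0 0 (by omega) (by omega) (by simp [Nat.modEq_one])
      gcongr
      have hP : (0:ℝ) < 2 ^ (L * 2 ^ k) := by positivity
      have hLp : (0:ℝ) < L := by exact_mod_cast hL
      refine le_of_mul_le_mul_left (hd.trans ?_) hLp
      rw [← mul_assoc]
      gcongr
      rw [hLr, pow_succ]
      have : 2 < K * ε := by rwa [div_lt_iff₀ hε] at hK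
      have h5 := mul_lt_mul_of_pos_left this hWr
      norm_num
      linarith
    rw [div_le_iff₀ (by positivity)]
    refine (Finset.sum_le_sum fun r _ => hb r).trans ?_
    simp
    field_simp
    rfl
  · intro i
    unfold readProb
    have e : (∑ r : Fin (2 ^ k), ∑ x, if (walk hL hW L 0 r).readsBit x i
        then (1:ℝ) / 2 ^ k else 0) = (∑ u ∈ Finset.range (2 ^ k), rd hL hW i L 0 u) / 2 ^ k := by
      rw [← Fin.sum_univ_eq_sum_range (fun u => rd hL hW i L 0 u), Finset.sum_div]
      refine Finset.sum_congr rfl fun r _ => ?_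
      rw [rd, Finset.sum_div]
      refine Finset.sum_congr rfl fun x _ => ?_
      split_ifs <;> simp
    have hs := rd_sum hL hW h2 i L 0 (by omega)
    have hsq : Real.sqrt ((L * 2 ^ k : ℕ) : ℝ) = Real.sqrt K * 2 ^ k := by
      push_cast
      rw [hLr, mul_assoc, Real.sqrt_mul hKr.le, Real.sqrt_mul_self hWr.le]
    rw [hsq]
    have hC : Real.sqrt K / (Real.sqrt K * 2 ^ k) = 1 / 2 ^ k := by
      have := (Real.sqrt_pos.2 hKr).ne'
      field_simp
    rw [hC]
    refine (div_le_iff₀ (by positivity)).2 ?_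
    refine e.le.trans ?_
    rw [one_div, inv_mul_eq_div]
    gcongr
end

section
/- There exist a constant C > 0 and infinitely many positive integers n for which there is a balanced monotone Boolean function f : {0,1}^n → {0,1} (monotone means f(x) ≥ f(y) whenever x_i ≥ y_i for all i; balanced means Pr[f(x)=1] = 1/2 for uniform x) together with a randomized decision-tree algorithm that on every input outputs f(x) with probability 1, and whose revealment satisfies δ = max_i δ_i ≤ C · n^{-1/3} · log n. -/
namespace BSW

set_option linter.unusedSectionVars false

open Classical

/-- generic decision trees -/
inductive GT (ι : Type) : Type
  | leaf : Bool → GT ι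
  | node : ι → GT ι → GT ι → GT ι

namespace GT

variable {ι κ : Type}

def eval : GT ι → (ι → Bool) → Bool
  | leaf b, _ => b
  | node i a b, x => if x i then b.eval x else a.eval x

def reads : GT ι → (ι → Bool) → ι → Prop
  | leaf _, _, _ => False
  | node i a b, x, j => i = j ∨ (if x i then b.reads x j else a.reads x j)

def occ : GT ι → Set ι
  | leaf _ => ∅
  | node i a b => {i} ∪ (a.occ ∪ b.occ)

def fresh : GT ι → Prop
  | leaf _ => True
  | node i a b => i ∉ a.occ ∧ i ∉ b.occ ∧ a.fresh ∧ b.fresh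

noncomputable def pr : GT ι → ℝ
  | leaf b => if b then 1 else 0
  | node _ a b => (a.pr + b.pr) / 2

noncomputable def cost (c : ι → ℝ) : GT ι → ℝ
  | leaf _ => 0
  | node i a b => c i + (a.cost c + b.cost c) / 2

def map (e : ι → κ) : GT ι → GT κ
  | leaf b => leaf b
  | node i a b => node (e i) (a.map e) (b.map e)

def dual : GT ι → GT ι
  | leaf b => leaf (!b)
  | node i a b => node i b.dual a.dual

def bind : GT ι → (Bool → GT ι) → GT ι
  | leaf b, k => k b
  | node i a b, k => node i (a.bind k) (b.bind k)

theorem eval_map (e : ι → κ) (t : GT ι) (x : κ → Bool) :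
    (t.map e).eval x = t.eval (x ∘ e) := by
  induction t with
  | leaf b => rfl
  | node i a b iha ihb => simp [map, eval, iha, ihb]

theorem reads_map (e : ι → κ) (t : GT ι) (x : κ → Bool) (j : κ) :
    (t.map e).reads x j ↔ ∃ i, e i = j ∧ t.reads (x ∘ e) i := by
  induction t with
  | leaf b => simp [map, reads]
  | node i a b iha ihb =>
    simp only [map, reads, Function.comp]
    by_cases h : x (e i) = true
    · simp only [h, if_true, ihb]
      constructor
      · rintro (h | ⟨k, hk, h⟩)
        · exact ⟨i, h, Or.inl rfl⟩
        · exact ⟨k, hk, Or.inr h⟩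
      · rintro ⟨k, hk, (h | h)⟩
        · left; rw [h, hk]
        · right; exact ⟨k, hk, h⟩
    · simp only [h, iha]
      constructor
      · rintro (h | ⟨k, hk, h⟩)
        · exact ⟨i, h, Or.inl rfl⟩
        · exact ⟨k, hk, Or.inr h⟩
      · rintro ⟨k, hk, (h | h)⟩
        · left; rw [h, hk]
        · right; exact ⟨k, hk, h⟩

theorem eval_dual (t : GT ι) (x : ι → Bool) :
    t.dual.eval x = !(t.eval (fun i => !(x i))) := by
  induction t with
  | leaf b => rfl
  | node i a b iha ihb =>
    by_cases h : x i = true <;> simp [dual, eval, iha, ihb, h]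

theorem reads_dual (t : GT ι) (x : ι → Bool) (j : ι) :
    t.dual.reads x j ↔ t.reads (fun i => !(x i)) j := by
  induction t with
  | leaf b => simp [dual, reads]
  | node i a b iha ihb =>
    by_cases h : x i = true <;> simp [dual, reads, iha, ihb, h]

theorem eval_bind (t : GT ι) (k : Bool → GT ι) (x : ι → Bool) :
    (t.bind k).eval x = (k (t.eval x)).eval x := by
  induction t with
  | leaf b => rfl
  | node i a b iha ihb =>
    by_cases h : x i = true <;> simp [bind, eval, iha, ihb, h]

theorem reads_bind (t : GT ι) (k : Bool → GT ι) (x : ι → Bool) (j : ι) :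
    (t.bind k).reads x j ↔ t.reads x j ∨ (k (t.eval x)).reads x j := by
  induction t with
  | leaf b => simp [bind, reads, eval]
  | node i a b iha ihb =>
    by_cases h : x i = true <;> simp [bind, reads, eval, iha, ihb, h, or_assoc]

theorem eval_congr (t : GT ι) (x y : ι → Bool) (h : ∀ i ∈ t.occ, x i = y i) :
    t.eval x = t.eval y := by
  induction t with
  | leaf b => rfl
  | node i a b iha ihb =>
    have hi : x i = y i := h i (by simp [occ])
    simp only [eval, hi]
    rw [iha (fun j hj => h j (by simp [occ, hj])), ihb (fun j hj => h j (by simp [occ, hj]))]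

theorem reads_congr (t : GT ι) (x y : ι → Bool) (h : ∀ i ∈ t.occ, x i = y i) (j : ι) :
    t.reads x j ↔ t.reads y j := by
  induction t with
  | leaf b => rfl
  | node i a b iha ihb =>
    have hi : x i = y i := h i (by simp [occ])
    simp only [reads, hi]
    rw [iha (fun j hj => h j (by simp [occ, hj])), ihb (fun j hj => h j (by simp [occ, hj]))]

theorem reads_occ (t : GT ι) (x : ι → Bool) (j : ι) (h : t.reads x j) : j ∈ t.occ := by
  induction t with
  | leaf b => exact h.elim
  | node i a b iha ihb =>
    simp only [reads] at h
    by_cases hx : x i = true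
    · simp only [hx, if_true] at h
      rcases h with h | h
      · simp [occ, h]
      · simp [occ, ihb h]
    · simp only [hx] at h
      rcases h with h | h
      · simp [occ, h]
      · simp [occ, iha h]

theorem pr_nonneg (t : GT ι) : 0 ≤ t.pr := by
  induction t with
  | leaf b => simp only [pr]; split_ifs <;> norm_num
  | node i a b iha ihb => simp only [pr]; linarith

theorem pr_le_one (t : GT ι) : t.pr ≤ 1 := by
  induction t with
  | leaf b => simp only [pr]; split_ifs <;> norm_num
  | node i a b iha ihb => simp only [pr]; linarith

end GT

noncomputable def ind (p : Prop) : ℝ := if p then 1 else 0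

theorem ind_nonneg (p : Prop) : 0 ≤ ind p := by unfold ind; split_ifs <;> norm_num
theorem ind_mono {p q : Prop} (h : p → q) : ind p ≤ ind q := by
  unfold ind; by_cases hp : p
  · simp [hp, h hp]
  · simp only [hp, if_false]; split_ifs <;> norm_num
theorem ind_and (p q : Prop) : ind (p ∧ q) = ind p * ind q := by
  unfold ind; by_cases hp : p <;> by_cases hq : q <;> simp [hp, hq]

noncomputable def E {α : Type} [Fintype α] (f : α → ℝ) : ℝ := (∑ a, f a) / Fintype.card α

section E
variable {α β : Type} [Fintype α] [Fintype β]

theorem E_equiv (e : α ≃ β) (f : β → ℝ) : E (fun a => f (e a)) = E f := by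
  unfold E
  rw [Fintype.card_congr e, e.sum_comp f]

theorem E_mono {f g : α → ℝ} (h : ∀ a, f a ≤ g a) : E f ≤ E g := by
  unfold E
  exact div_le_div_of_nonneg_right (Finset.sum_le_sum fun a _ => h a) (by positivity)

theorem E_add (f g : α → ℝ) : E (fun a => f a + g a) = E f + E g := by
  unfold E
  rw [Finset.sum_add_distrib, add_div]

theorem E_mul_left (c : ℝ) (f : α → ℝ) : E (fun a => c * f a) = c * E f := by
  unfold E
  rw [← Finset.mul_sum, mul_div_assoc]

theorem E_const [Nonempty α] (c : ℝ) : E (fun _ : α => c) = c := by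
  unfold E
  simp

theorem E_sum {γ : Type} (s : Finset γ) (f : γ → α → ℝ) :
    E (fun a => ∑ i ∈ s, f i a) = ∑ i ∈ s, E (f i) := by
  unfold E
  rw [Finset.sum_comm, Finset.sum_div]

theorem E_comm (f : α → β → ℝ) : E (fun a => E (f a)) = E (fun b => E (fun a => f a b)) := by
  unfold E
  rw [← Finset.sum_div, ← Finset.sum_div, Finset.sum_comm, div_div, div_div, mul_comm]

theorem E_mul (f : α → ℝ) (g : β → ℝ) : E (fun p : α × β => f p.1 * g p.2) = E f * E g := by
  unfold E
  rw [Fintype.sum_prod_type, Fintype.card_prod, div_mul_div_comm, Finset.sum_mul_sum]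
  push_cast
  rfl

theorem E_fst [Nonempty β] (f : α → ℝ) : E (fun p : α × β => f p.1) = E f := by
  have := E_mul f (fun _ : β => (1:ℝ))
  rw [E_const] at this
  simpa using this

theorem E_snd [Nonempty α] (g : β → ℝ) : E (fun p : α × β => g p.2) = E g := by
  have := E_mul (fun _ : α => (1:ℝ)) g
  rw [E_const] at this
  simpa using this

end E

section cube
variable {ι κ : Type} [Fintype ι] [Fintype κ] [DecidableEq ι] [DecidableEq κ]

theorem E_sumcube (F : (ι → Bool) × (κ → Bool) → ℝ) :
    E (fun x : ι ⊕ κ → Bool => F (x ∘ Sum.inl, x ∘ Sum.inr)) = E F :=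
  E_equiv (Equiv.sumArrowEquivProdArrow ι κ Bool) F

theorem E_not (F : (ι → Bool) → ℝ) : E (fun x : ι → Bool => F (fun i => !(x i))) = E F :=
  E_equiv (Equiv.mk (fun (x : ι → Bool) i => !(x i)) (fun x i => !(x i))
    (fun x => by simp) (fun x => by simp)) F

theorem E_relabel (e : ι ≃ κ) (F : (ι → Bool) → ℝ) :
    E (fun x : κ → Bool => F (x ∘ e)) = E F :=
  E_equiv (Equiv.mk (fun (x : κ → Bool) => x ∘ e) (fun y => y ∘ e.symm)
    (fun x => by ext; simp) (fun x => by ext; simp)) F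

theorem E_node (i : ι) (A B : (ι → Bool) → ℝ)
    (hA : ∀ x b, A (Function.update x i b) = A x) (hB : ∀ x b, B (Function.update x i b) = B x) :
    E (fun x => if x i then B x else A x) = (E A + E B) / 2 := by
  have h1 : E (fun x => if x i then B x else A x) = E (fun x => if x i then A x else B x) := by
    rw [← E_equiv (Equiv.mk (fun (x : ι → Bool) => Function.update x i (!(x i)))
      (fun x => Function.update x i (!(x i))) (fun x => by simp) (fun x => by simp))
      (fun x => if x i then B x else A x)]
    congr 1
    ext x
    simp only [Equiv.coe_fn_mk, hA, hB, Function.update_self]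
    by_cases h : x i = true <;> simp [h]
  have h2 : E (fun x => if x i then B x else A x) + E (fun x => if x i then A x else B x)
      = E A + E B := by
    rw [← E_add, ← E_add]
    congr 1
    ext x
    by_cases h : x i = true <;> simp [h, add_comm]
  linarith

theorem E_eval (t : GT ι) (ht : t.fresh) : E (fun x => ind (t.eval x = true)) = t.pr := by
  induction t with
  | leaf b =>
    simp only [GT.eval, GT.pr]
    rw [E_const]; simp [ind]
  | node i a b iha ihb =>
    obtain ⟨h1, h2, h3, h4⟩ := ht
    simp only [GT.pr]
    rw [← iha h3, ← ihb h4, ← E_node i]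
    · congr 1; ext x
      by_cases h : x i = true <;> simp [GT.eval, h]
    · intro x c
      rw [GT.eval_congr a _ x]
      intro j hj
      rw [Function.update_of_ne]; rintro rfl; exact h1 hj
    · intro x c
      rw [GT.eval_congr b _ x]
      intro j hj
      rw [Function.update_of_ne]; rintro rfl; exact h2 hj

theorem E_reads (c : ι → ℝ) (t : GT ι) (ht : t.fresh) :
    E (fun x => ∑ v, c v * ind (t.reads x v)) = t.cost c := by
  induction t with
  | leaf b =>
    simp [GT.reads, GT.cost, ind, E]
  | node i a b iha ihb =>
    obtain ⟨h1, h2, h3, h4⟩ := ht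
    simp only [GT.cost]
    rw [← iha h3, ← ihb h4, ← E_node i, ← E_const (α := ι → Bool) (c i), ← E_add]
    · congr 1; ext x
      have key : ∀ v, c v * ind ((GT.node i a b).reads x v) = (if i = v then c v else 0) +
          c v * ind (if x i then b.reads x v else a.reads x v) := by
        intro v
        by_cases hv : i = v
        · subst hv
          have : ¬ (if x i then b.reads x i else a.reads x i) := by
            by_cases h : x i = true
            · simp only [h, if_true]; exact fun hh => h2 (b.reads_occ _ _ hh)
            · simp only [h]; exact fun hh => h1 (a.reads_occ _ _ hh)
          simp [GT.reads, ind, this]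
        · simp [GT.reads, hv]
      simp only [key]
      rw [Finset.sum_add_distrib]
      simp only [Finset.sum_ite_eq, Finset.mem_univ, if_true]
      by_cases h : x i = true <;> simp [h]
    · intro x c'
      refine Finset.sum_congr rfl fun v _ => ?_
      rw [propext (GT.reads_congr a _ x ?_ v)]
      intro j hj
      rw [Function.update_of_ne]; rintro rfl; exact h1 hj
    · intro x c'
      refine Finset.sum_congr rfl fun v _ => ?_
      rw [propext (GT.reads_congr b _ x ?_ v)]
      intro j hj
      rw [Function.update_of_ne]; rintro rfl; exact h2 hj

end cube

section walk

def step (ω : ℕ → ℕ → Bool) (s h : ℕ) : ℕ :=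
  if h = 0 then 1 else if ω s h then h + 1 else h - 1

def walk (ω : ℕ → ℕ → Bool) (s h : ℕ) : ℕ → ℕ
  | 0 => h
  | r + 1 => step ω (s + r) (walk ω s h r)

theorem step_parity (ω : ℕ → ℕ → Bool) (s h : ℕ) : step ω s h % 2 = (h + 1) % 2 := by
  unfold step; split_ifs <;> omega

theorem walk_parity (ω : ℕ → ℕ → Bool) (s h r : ℕ) : walk ω s h r % 2 = (h + r) % 2 := by
  induction r with
  | zero => rfl
  | succ r ih => simp only [walk]; rw [step_parity]; omega

theorem walk_mono (ω ω' : ℕ → ℕ → Bool) (hω : ∀ s h, ω s h = true → ω' s h = true)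
    (s h h' r : ℕ) (hh : h ≤ h') (hp : h % 2 = h' % 2) :
    walk ω s h r ≤ walk ω' s h' r := by
  induction r with
  | zero => exact hh
  | succ r ih =>
    simp only [walk]
    have p1 := walk_parity ω s h r
    have p2 := walk_parity ω' s h' r
    generalize walk ω s h r = a at *
    generalize walk ω' s h' r = b at *
    have : a = b ∨ a + 2 ≤ b := by omega
    unfold step
    rcases this with rfl | h2
    · have := hω (s + r) a
      split_ifs <;> first | omega | simp_all
    · split_ifs <;> omega

theorem walk_add (ω : ℕ → ℕ → Bool) (s h q r : ℕ) :
    walk ω s h (q + r) = walk ω (s + q) (walk ω s h q) r := by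
  induction r with
  | zero => rfl
  | succ r ih => rw [← add_assoc]; simp only [walk]; rw [ih, add_assoc]

theorem walk_shift (ω ω' : ℕ → ℕ → Bool) (c : ℕ) (hω : ∀ s h, ω' s h = ω (s + c) h)
    (s h r : ℕ) : walk ω' s h r = walk ω (s + c) h r := by
  induction r with
  | zero => rfl
  | succ r ih => simp only [walk, step]; rw [ih, hω]; congr 4; omega

end walk

section gadget

variable (m w : ℕ) [NeZero m]

noncomputable def env (x : ZMod m × Fin w → Bool) (s h : ℕ) : Bool :=
  if hw : h < w then x (((s / 2 : ℕ) : ZMod m), ⟨h, hw⟩) else true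

noncomputable def ff (x : ZMod m × Fin w → Bool) : Bool :=
  decide (∃ r, w ≤ walk (env m w x) 0 0 r)

theorem ff_iff (x : ZMod m × Fin w → Bool) :
    ff m w x = true ↔ ∃ r, w ≤ walk (env m w x) 0 0 r := by
  simp [ff]

theorem env_shift (x : ZMod m × Fin w → Bool) (a : ZMod m) (s h : ℕ) :
    env m w (fun v => x (v.1 + a, v.2)) s h = env m w x (s + 2 * a.val) h := by
  unfold env
  split_ifs with hw
  · have : (s + 2 * a.val) / 2 = s / 2 + a.val := by omega
    simp [this]
  · rfl

theorem env_period (x : ZMod m × Fin w → Bool) (k : ℕ) (s h : ℕ) :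
    env m w x s h = env m w x (s + 2 * m * k) h := by
  unfold env
  split_ifs with hw
  · have : (s + 2 * m * k) / 2 = s / 2 + m * k := by
      rw [mul_assoc]; omega
    simp [this]
  · rfl

theorem ff_mono (x y : ZMod m × Fin w → Bool) (h : ∀ v, x v = true → y v = true)
    (hx : ff m w x = true) : ff m w y = true := by
  rw [ff_iff] at *
  obtain ⟨r, hr⟩ := hx
  refine ⟨r, hr.trans (walk_mono _ _ ?_ _ _ _ _ le_rfl rfl)⟩
  intro s k
  unfold env
  split_ifs
  · apply h
  · simp

theorem ff_rot (x : ZMod m × Fin w → Bool) (a : ZMod m) :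
    ff m w (fun v => x (v.1 + a, v.2)) = ff m w x := by
  rw [Bool.eq_iff_iff, ff_iff, ff_iff]
  have hsh : ∀ r, walk (env m w (fun v => x (v.1 + a, v.2))) 0 0 r
      = walk (env m w x) (2 * a.val) 0 r := by
    intro r
    rw [walk_shift (env m w x) _ (2 * a.val) (env_shift m w x a)]
    simp
  simp only [hsh]
  constructor
  · rintro ⟨r, hr⟩
    refine ⟨2 * a.val + r, ?_⟩
    rw [walk_add]
    refine hr.trans ?_
    rw [zero_add]
    apply walk_mono _ _ (fun _ _ h => h) _ _ _ _ (Nat.zero_le _)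
    rw [walk_parity]; omega
  · rintro ⟨r, hr⟩
    have hm : 0 < m := Nat.pos_of_ne_zero (NeZero.ne m)
    obtain ⟨q, hq⟩ : ∃ q, 2 * m * a.val = 2 * a.val + 2 * q := by
      obtain ⟨m', rfl⟩ : ∃ m', m = m' + 1 := ⟨m - 1, by omega⟩
      exact ⟨m' * a.val, by ring⟩
    refine ⟨2 * q + r, ?_⟩
    rw [walk_add, ← hq]
    rw [walk_shift (env m w x) _ (2 * m * a.val) (env_period m w x a.val), zero_add] at hr
    refine hr.trans ?_
    apply walk_mono _ _ (fun _ _ h => h) _ _ _ _ (Nat.zero_le _)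
    rw [walk_parity]; omega

theorem nohit (x : ZMod m × Fin w → Bool) (τ j s k : ℕ)
    (hmin : ∀ r < τ, walk (env m w x) 0 0 r < w) (hτ : w ≤ walk (env m w x) 0 0 τ)
    (hs : s ≤ τ) (hk : 0 < k) (hj : s = j + 2 * m * k)
    (hle : walk (env m w x) 0 0 s ≤ walk (env m w x) 0 0 j) : False := by
  have hm : 0 < m := Nat.pos_of_ne_zero (NeZero.ne m)
  have hmk : 0 < m * k := Nat.mul_pos hm hk
  rw [mul_assoc] at hj
  have h1 : walk (env m w x) 0 0 τ = walk (env m w x) s (walk (env m w x) 0 0 s) (τ - s) := by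
    have := walk_add (env m w x) 0 0 s (τ - s)
    rwa [zero_add, Nat.add_sub_cancel' hs] at this
  have h2 : walk (env m w x) s (walk (env m w x) 0 0 s) (τ - s)
      = walk (env m w x) j (walk (env m w x) 0 0 s) (τ - s) := by
    rw [walk_shift (env m w x) _ (2 * m * k) (env_period m w x k) j, mul_assoc, ← hj]
  have h3 : walk (env m w x) j (walk (env m w x) 0 0 s) (τ - s)
      ≤ walk (env m w x) j (walk (env m w x) 0 0 j) (τ - s) := by
    apply walk_mono _ _ (fun _ _ h => h) _ _ _ _ hle
    rw [walk_parity, walk_parity]; omega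
  have h4 := walk_add (env m w x) 0 0 j (τ - s)
  rw [zero_add] at h4
  rw [← h4] at h3
  have := hmin (j + (τ - s)) (by omega)
  omega

noncomputable def explore : ℕ → ℕ → ℕ → Set (ZMod m × ℕ) → GT (ZMod m × Fin w)
  | 0, _, _, _ => .leaf false
  | F + 1, s, h, S =>
    if hw : h < w then
      if h = 0 then
        if 2 * m ≤ s then .leaf false else explore F (s + 1) 1 S
      else if (((s / 2 : ℕ) : ZMod m), h) ∈ S then .leaf false
      else .node (((s / 2 : ℕ) : ZMod m), ⟨h, hw⟩)
        (explore F (s + 1) (h - 1) (insert (((s / 2 : ℕ) : ZMod m), h) S))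
        (explore F (s + 1) (h + 1) (insert (((s / 2 : ℕ) : ZMod m), h) S))
    else .leaf true

theorem explore_occ (F s h : ℕ) (S : Set (ZMod m × ℕ)) (v : ZMod m × Fin w)
    (hv : v ∈ (explore m w F s h S).occ) : (v.1, (v.2 : ℕ)) ∉ S := by
  induction F generalizing s h S with
  | zero => simp [explore, GT.occ] at hv
  | succ F ih =>
    simp only [explore] at hv
    split_ifs at hv with h1 h2 h3 h4
    · simp [GT.occ] at hv
    · exact ih _ _ _ hv
    · simp [GT.occ] at hv
    · simp only [GT.occ, Set.mem_union, Set.mem_singleton_iff] at hv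
      rcases hv with rfl | hv | hv
      · exact h4
      · exact fun hh => ih _ _ _ hv (Set.mem_insert_of_mem _ hh)
      · exact fun hh => ih _ _ _ hv (Set.mem_insert_of_mem _ hh)
    · simp [GT.occ] at hv

theorem explore_fresh (F s h : ℕ) (S : Set (ZMod m × ℕ)) : (explore m w F s h S).fresh := by
  induction F generalizing s h S with
  | zero => simp [explore, GT.fresh]
  | succ F ih =>
    simp only [explore]
    split_ifs with h1 h2 h3 h4
    · simp [GT.fresh]
    · exact ih _ _ _
    · simp [GT.fresh]
    · refine ⟨?_, ?_, ih _ _ _, ih _ _ _⟩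
      · exact fun hh => explore_occ m w _ _ _ _ _ hh (Set.mem_insert _ _)
      · exact fun hh => explore_occ m w _ _ _ _ _ hh (Set.mem_insert _ _)
    · simp [GT.fresh]

theorem explore_sound (x : ZMod m × Fin w → Bool) (F s : ℕ) (S : Set (ZMod m × ℕ))
    (he : (explore m w F s (walk (env m w x) 0 0 s) S).eval x = true) : ff m w x = true := by
  induction F generalizing s S with
  | zero => simp [explore, GT.eval] at he
  | succ F ih =>
    have hn : walk (env m w x) 0 0 (s + 1) = step (env m w x) s (walk (env m w x) 0 0 s) := by
      simp [walk]
    simp only [explore] at he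
    split_ifs at he with h1 h2 h3 h4
    · simp [GT.eval] at he
    · apply ih (s + 1) S
      rw [hn]; simpa [step, h2] using he
    · simp [GT.eval] at he
    · simp only [step, h2, env, h1, dif_pos, if_false] at hn
      apply ih (s + 1) (insert (((s / 2 : ℕ) : ZMod m), walk (env m w x) 0 0 s) S)
      simp only [GT.eval] at he
      rw [hn]
      split_ifs at he ⊢ <;> exact he
    · rw [ff_iff]; exact ⟨s, by omega⟩

theorem explore_complete (x : ZMod m × Fin w → Bool) (τ : ℕ)
    (hmin : ∀ r < τ, walk (env m w x) 0 0 r < w) (hτ : w ≤ walk (env m w x) 0 0 τ)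
    (F s : ℕ) (S : Set (ZMod m × ℕ)) (hs : s ≤ τ) (hF : τ < s + F)
    (hS : ∀ v ∈ S, ∃ j < s, ((j / 2 : ℕ) : ZMod m) = v.1 ∧ walk (env m w x) 0 0 j = v.2) :
    (explore m w F s (walk (env m w x) 0 0 s) S).eval x = true := by
  induction F generalizing s S with
  | zero => omega
  | succ F ih =>
    have hn : walk (env m w x) 0 0 (s + 1) = step (env m w x) s (walk (env m w x) 0 0 s) := by
      simp [walk]
    have hlt : walk (env m w x) 0 0 s < w → s < τ := by
      intro h
      rcases hs.lt_or_eq with h' | h'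
      · exact h'
      · rw [h'] at h; omega
    simp only [explore]
    split_ifs with h1 h2 h3 h4
    · exfalso
      apply nohit m w x τ (s - 2 * m) s 1 hmin hτ hs one_pos (by omega)
      rw [h2]; exact Nat.zero_le _
    · have := ih (s + 1) S (hlt h1) (by omega) (fun v hv => by
        obtain ⟨j, hj, h⟩ := hS v hv
        exact ⟨j, by omega, h⟩)
      rw [hn] at this; simpa [step, h2] using this
    · exfalso
      obtain ⟨j, hj, hj1, hj2⟩ := hS _ h4
      simp only at hj1 hj2
      have p1 := walk_parity (env m w x) 0 0 s
      have p2 := walk_parity (env m w x) 0 0 j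
      rw [hj2, p1] at p2
      rw [ZMod.natCast_eq_natCast_iff] at hj1
      have hd := (Nat.modEq_iff_dvd' (by omega : j / 2 ≤ s / 2)).1 hj1
      obtain ⟨k, hk⟩ := hd
      have e : s = j + 2 * m * k := by rw [mul_assoc]; omega
      refine nohit m w x τ j s k hmin hτ hs ?_ e hj2.ge
      rcases Nat.eq_zero_or_pos k with rfl | h
      · simp at e; omega
      · exact h
    · have := ih (s + 1) (insert (((s / 2 : ℕ) : ZMod m), walk (env m w x) 0 0 s) S)
        (hlt h1) (by omega) (fun v hv => by
          rcases hv with rfl | hv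
          · exact ⟨s, by omega, rfl, rfl⟩
          · obtain ⟨j, hj, h⟩ := hS v hv
            exact ⟨j, by omega, h⟩)
      simp only [step, h2, env, h1, dif_pos, if_false] at hn
      rw [hn] at this
      simp only [GT.eval]
      split_ifs at this ⊢ <;> exact this
    · rfl

theorem explore_eval : ∃ F0, ∀ F ≥ F0, ∀ x, (explore m w F 0 0 ∅).eval x = ff m w x := by
  have : ∀ x : ZMod m × Fin w → Bool, ∃ τ, ff m w x = true →
      (∀ r < τ, walk (env m w x) 0 0 r < w) ∧ w ≤ walk (env m w x) 0 0 τ := by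
    intro x
    by_cases h : ff m w x = true
    · have h' := (ff_iff m w x).1 h
      refine ⟨Nat.find h', fun _ => ⟨fun r hr => ?_, Nat.find_spec h'⟩⟩
      exact not_le.1 (Nat.find_min h' hr)
    · exact ⟨0, fun h' => absurd h' h⟩
  choose τ hτ using this
  refine ⟨(∑ x, τ x) + 1, fun F hF x => ?_⟩
  rw [Bool.eq_iff_iff]
  constructor
  · intro h
    exact explore_sound m w x F 0 ∅ h
  · intro h
    have hx : τ x ≤ ∑ x, τ x := Finset.single_le_sum (fun _ _ => Nat.zero_le _) (Finset.mem_univ x)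
    exact explore_complete m w x (τ x) (hτ x h).1 (hτ x h).2 F 0 ∅ (Nat.zero_le _) (by omega)
      (fun v hv => hv.elim)

theorem pr_late (hw : 0 < w) (F s h : ℕ) (S : Set (ZMod m × ℕ)) (hh : h ≤ w) (hs : 2 * m ≤ s) :
    (explore m w F s h S).pr ≤ h / w := by
  induction F generalizing s h S with
  | zero => simp only [explore, GT.pr]; simp; positivity
  | succ F ih =>
    have hw' : (0:ℝ) < w := by exact_mod_cast hw
    simp only [explore]
    split_ifs with h1 h2 h3
    · simp only [GT.pr]; simp; positivity
    · simp only [GT.pr]; simp; positivity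
    · simp only [GT.pr]
      have a1 := ih (s + 1) (h - 1) (insert (((s / 2 : ℕ) : ZMod m), h) S) (by omega) (by omega)
      have a2 := ih (s + 1) (h + 1) (insert (((s / 2 : ℕ) : ZMod m), h) S) (by omega) (by omega)
      rw [Nat.cast_sub (by omega)] at a1
      push_cast at a1 a2
      have : ((h:ℝ) - 1) / w + (h + 1) / w = 2 * (h / w) := by ring
      linarith
    · have : h = w := by omega
      subst this
      simp only [GT.pr]; rw [div_self hw'.ne']; simp

theorem pr_early (hw : 0 < w) (F s h : ℕ) (S : Set (ZMod m × ℕ)) (hh : h ≤ w) (hs : s ≤ 2 * m) :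
    (explore m w F s h S).pr ≤ 1 / 4 + ((h:ℝ) ^ 2 + (2 * m - s)) / w ^ 2 := by
  have hw' : (0:ℝ) < w := by exact_mod_cast hw
  have hs' : (s:ℝ) ≤ 2 * m := by exact_mod_cast hs
  have hnn : (0:ℝ) ≤ 1 / 4 + ((h:ℝ) ^ 2 + (2 * m - s)) / w ^ 2 := by
    have : (0:ℝ) ≤ ((h:ℝ) ^ 2 + (2 * m - s)) := by nlinarith
    positivity
  by_cases hsm : s = 2 * m
  · refine (pr_late m w hw F s h S hh hsm.ge).trans ?_
    rw [hsm]; push_cast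
    have : (h:ℝ) ^ 2 / w ^ 2 = (h / w) ^ 2 := by rw [div_pow]
    rw [sub_self, add_zero, this]
    nlinarith [sq_nonneg ((h:ℝ) / w - 1 / 2)]
  induction F generalizing s h S with
  | zero => simp only [explore, GT.pr]; simpa using hnn
  | succ F ih =>
    have hrec : ∀ h' S', h' ≤ w → (explore m w F (s + 1) h' S').pr ≤
        1 / 4 + ((h':ℝ) ^ 2 + (2 * m - (s + 1 : ℕ))) / w ^ 2 := by
      intro h' S' hh'
      have hs1 : ((s + 1 : ℕ):ℝ) ≤ 2 * m := by exact_mod_cast (by omega : s + 1 ≤ 2 * m)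
      by_cases hsm' : s + 1 = 2 * m
      · refine (pr_late m w hw F (s + 1) h' S' hh' hsm'.ge).trans ?_
        rw [hsm']; push_cast
        have : (h':ℝ) ^ 2 / w ^ 2 = (h' / w) ^ 2 := by rw [div_pow]
        rw [sub_self, add_zero, this]
        nlinarith [sq_nonneg ((h':ℝ) / w - 1 / 2)]
      · refine ih (s + 1) h' S' hh' (by omega) hs1 ?_ hsm'
        have : (0:ℝ) ≤ ((h':ℝ) ^ 2 + (2 * m - (s + 1 : ℕ))) := by nlinarith
        positivity
    simp only [explore]
    split_ifs with h1 h2 h3 h4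
    · simp only [GT.pr]; simpa using hnn
    · refine (hrec 1 S (by omega)).trans ?_
      rw [h2]; push_cast
      apply le_of_eq; ring
    · simp only [GT.pr]; simpa using hnn
    · simp only [GT.pr]
      have a1 := hrec (h - 1) (insert (((s / 2 : ℕ) : ZMod m), h) S) (by omega)
      have a2 := hrec (h + 1) (insert (((s / 2 : ℕ) : ZMod m), h) S) (by omega)
      rw [Nat.cast_sub (by omega)] at a1
      push_cast at a1 a2
      have : (1 / 4 + (((h:ℝ) - 1) ^ 2 + (2 * m - (s + 1))) / w ^ 2) +
        (1 / 4 + (((h:ℝ) + 1) ^ 2 + (2 * m - (s + 1))) / w ^ 2) =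
        2 * (1 / 4 + ((h:ℝ) ^ 2 + (2 * m - s)) / w ^ 2) := by ring
      linarith
    · have : h = w := by omega
      subst this
      simp only [GT.pr, if_true]
      have : (1:ℝ) ≤ ((h:ℝ) ^ 2 + (2 * m - s)) / h ^ 2 := by
        rw [le_div_iff₀ (by positivity)]; linarith
      linarith

theorem pr_half (F s h : ℕ) (S : Set (ZMod m × ℕ)) (hh : h ≤ w) (hS : ∀ v ∈ S, v.2 < w)
    (hw : 0 < w) :
    (explore m w F s h S).pr / 2 ≤ (explore m (w + 1) (F + 2) s h S).pr := by
  induction F generalizing s h S with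
  | zero =>
    simp only [explore.eq_1, GT.pr]
    simpa using GT.pr_nonneg _
  | succ F ih =>
    by_cases h1 : h < w
    · have h1' : h < w + 1 := by omega
      rw [explore.eq_2 m w, show F + 1 + 2 = (F + 2) + 1 by ring, explore.eq_2 m (w + 1)]
      rw [dif_pos h1, dif_pos h1']
      split_ifs with h2 h3 h4
      · simp [GT.pr]
      · exact ih _ _ _ (by omega) hS
      · simp [GT.pr]
      · simp only [GT.pr]
        have hS' : ∀ v ∈ insert (((s / 2 : ℕ) : ZMod m), h) S, v.2 < w := by
          rintro v (rfl | hv)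
          · exact h1
          · exact hS v hv
        have a1 := ih (s + 1) (h - 1) _ (by omega) hS'
        have a2 := ih (s + 1) (h + 1) _ (by omega) hS'
        linarith
    · have : h = w := by omega
      subst this
      have b := GT.pr_le_one (explore m h (F + 1) s h S)
      rw [show F + 1 + 2 = (F + 1) + 1 + 1 by ring, explore.eq_2 m (h + 1)]
      rw [dif_pos (by omega), if_neg (by omega), if_neg (fun hh => lt_irrefl _ (hS _ hh))]
      rw [explore.eq_2 m (h + 1) (s + 1) (h + 1), dif_neg (lt_irrefl _)]
      simp only [GT.pr, if_true]
      have := GT.pr_nonneg (explore m (h + 1) (F + 1 + 1) (s + 1) (h - 1)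
        (insert (((s / 2 : ℕ) : ZMod m), h) S))
      linarith

theorem cost_row (h0 : Fin w) (F s h : ℕ) (S : Set (ZMod m × ℕ)) (hh : h ≤ w) :
    (explore m w F s h S).cost (fun v => if v.2 = h0 then 1 else 0)
      ≤ 2 * ((w:ℝ) - (max h h0 : ℕ)) := by
  have hnn : ∀ h ≤ w, (0:ℝ) ≤ 2 * ((w:ℝ) - (max h h0 : ℕ)) := by
    intro h hh
    have : ((max h h0 : ℕ):ℝ) ≤ w := by exact_mod_cast max_le hh h0.2.le
    linarith
  induction F generalizing s h S with
  | zero => simpa only [explore, GT.cost] using hnn h hh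
  | succ F ih =>
    simp only [explore]
    split_ifs with h1 h2 h3 h4
    · simpa only [GT.cost] using hnn h hh
    · refine (ih _ _ _ (by omega)).trans ?_
      have : ((max h h0 : ℕ):ℝ) ≤ (max 1 h0 : ℕ) := by
        exact_mod_cast max_le_max (by omega) le_rfl
      linarith
    · simpa only [GT.cost] using hnn h hh
    · simp only [GT.cost]
      have a1 := ih (s + 1) (h - 1) (insert (((s / 2 : ℕ) : ZMod m), h) S) (by omega)
      have a2 := ih (s + 1) (h + 1) (insert (((s / 2 : ℕ) : ZMod m), h) S) (by omega)
      by_cases e : (⟨h, h1⟩ : Fin w) = h0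
      · have e' : (h0 : ℕ) = h := by rw [← e]
        rw [if_pos e]
        rw [e', max_eq_right (by omega : h - 1 ≤ h)] at a1
        rw [e', max_eq_left (by omega : h ≤ h + 1)] at a2
        rw [e', max_self]
        push_cast at a2
        linarith
      · rw [if_neg e]
        have e' : h ≠ (h0 : ℕ) := fun hh => e (Fin.ext hh)
        rcases lt_or_gt_of_ne e' with g | g
        · rw [max_eq_right (by omega)] at a1 a2 ⊢
          linarith
        · rw [max_eq_left (by omega)] at a1 a2 ⊢
          rw [Nat.cast_sub (by omega)] at a1
          push_cast at a1 a2
          linarith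
    · simpa only [GT.cost] using hnn h hh

noncomputable def pp : ℝ := E (fun x => ind (ff m w x = true))

theorem pp_eq : ∃ F0, ∀ F ≥ F0, pp m w = (explore m w F 0 0 ∅).pr := by
  obtain ⟨F0, h⟩ := explore_eval m w
  refine ⟨F0, fun F hF => ?_⟩
  rw [← E_eval _ (explore_fresh m w F 0 0 ∅)]
  unfold pp
  simp only [h F hF]

theorem pp_upper (hw : 0 < w) : pp m w ≤ 1 / 4 + 2 * m / w ^ 2 := by
  obtain ⟨F, h⟩ := pp_eq m w
  rw [h F le_rfl]
  have := pr_early m w hw F 0 0 ∅ (Nat.zero_le _) (Nat.zero_le _)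
  simpa using this

theorem pp_half (hw : 0 < w) : pp m w / 2 ≤ pp m (w + 1) := by
  obtain ⟨F, h⟩ := pp_eq m w
  obtain ⟨F', h'⟩ := pp_eq m (w + 1)
  rw [h (max F F') (le_max_left _ _), h' (max F F' + 2) (le_add_right (le_max_right _ _))]
  exact pr_half m w _ 0 0 ∅ (Nat.zero_le _) (fun v hv => hv.elim) hw

theorem pp_zero : pp m 0 = 1 := by
  have : ∀ x, ff m 0 x = true := fun x => (ff_iff m 0 x).2 ⟨0, Nat.zero_le _⟩
  unfold pp
  simp only [this]
  rw [E_const]; simp [ind]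

theorem pp_one : pp m 1 = 1 := by
  have : ∀ x, ff m 1 x = true := fun x => (ff_iff m 1 x).2 ⟨1, by simp [walk, step]⟩
  unfold pp
  simp only [this]
  rw [E_const]; simp [ind]

theorem exists_w : ∃ w : ℕ, 0 < w ∧ w ^ 2 ≤ 16 * m ∧ 1 / 4 ≤ pp m w ∧ pp m w ≤ 1 / 2 := by
  have hm : 0 < m := Nat.pos_of_ne_zero (NeZero.ne m)
  have hub : ∀ w : ℕ, 8 * m < w ^ 2 → pp m w < 1 / 2 := by
    intro w hw
    have hw0 : 0 < w := by
      rcases Nat.eq_zero_or_pos w with rfl | h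
      · simp at hw
      · exact h
    refine (pp_upper m w hw0).trans_lt ?_
    have hw' : (8:ℝ) * m < w ^ 2 := by exact_mod_cast hw
    have : (2 * (m:ℝ)) / w ^ 2 < 1 / 4 := by
      rw [div_lt_iff₀ (by positivity)]; linarith
    linarith
  have hex : ∃ w, pp m w < 1 / 2 := ⟨8 * m + 1, hub _ (by nlinarith)⟩
  have hs := Nat.find_spec hex
  have hmn : ∀ v, v < Nat.find hex → ¬ pp m v < 1 / 2 := fun v hv => Nat.find_min hex hv
  generalize Nat.find hex = w at hs hmn
  have h2 : 2 ≤ w := by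
    by_contra h
    have : w = 0 ∨ w = 1 := by omega
    rcases this with rfl | rfl
    · rw [pp_zero] at hs; norm_num at hs
    · rw [pp_one] at hs; norm_num at hs
  obtain ⟨v, rfl⟩ : ∃ v, w = v + 1 := ⟨w - 1, by omega⟩
  have hv := hmn v (by omega)
  refine ⟨v + 1, by omega, ?_, ?_, hs.le⟩
  · have : v ^ 2 ≤ 8 * m := by
      by_contra h
      exact hv (hub v (by omega))
    zify at *
    nlinarith [sq_nonneg ((v:ℤ) - 2)]
  · have := pp_half m v (by omega)
    linarith

theorem E_reads_tree : ∃ t : ZMod m → GT (ZMod m × Fin w),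
    (∀ a x, (t a).eval x = ff m w x) ∧
    ∀ v, E (fun a => E (fun x => ind ((t a).reads x v))) ≤ 2 * w / m := by
  obtain ⟨F, hF⟩ := explore_eval m w
  have hF := hF F le_rfl
  let rot : ZMod m → (ZMod m × Fin w ≃ ZMod m × Fin w) := fun a =>
    (Equiv.addRight a).prodCongr (Equiv.refl _)
  refine ⟨fun a => (explore m w F 0 0 ∅).map (rot a), ?_, ?_⟩
  · intro a x
    rw [GT.eval_map, hF, ← ff_rot m w x a]
    rfl
  · rintro ⟨t, h0⟩
    have h1 : ∀ a, E (fun x => ind (((explore m w F 0 0 ∅).map (rot a)).reads x (t, h0)))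
        = E (fun x => ind ((explore m w F 0 0 ∅).reads x (t - a, h0))) := by
      intro a
      rw [← E_relabel (rot a) (fun x => ind ((explore m w F 0 0 ∅).reads x (t - a, h0)))]
      congr 1; ext x
      congr 1
      rw [GT.reads_map]
      apply propext
      constructor
      · rintro ⟨i, hi, h⟩
        have : i = (t - a, h0) := by
          apply (rot a).injective
          rw [hi]; simp [rot]
        rwa [← this]
      · intro h
        exact ⟨_, by simp [rot], h⟩
    simp only [h1]
    have hE := E_equiv (Equiv.subLeft t)
      (fun a => E (fun x => ind ((explore m w F 0 0 ∅).reads x (a, h0))))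
    simp only [Equiv.subLeft_apply] at hE
    rw [hE]
    have h2 := cost_row m w h0 F 0 0 ∅ (Nat.zero_le _)
    rw [← E_reads _ _ (explore_fresh m w F 0 0 ∅)] at h2
    have h3 : ∀ x, ∑ v : ZMod m × Fin w, (if v.2 = h0 then (1:ℝ) else 0) *
        ind ((explore m w F 0 0 ∅).reads x v)
        = ∑ a, ind ((explore m w F 0 0 ∅).reads x (a, h0)) := by
      intro x
      rw [Fintype.sum_prod_type]
      refine Finset.sum_congr rfl fun a _ => ?_
      simp
    simp only [h3] at h2
    rw [E_sum] at h2
    have h4 : (0:ℝ) ≤ ((max 0 (h0:ℕ) : ℕ) : ℝ) := Nat.cast_nonneg _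
    unfold E at h2 ⊢
    rw [ZMod.card]
    apply div_le_div_of_nonneg_right _ (Nat.cast_nonneg _)
    linarith

end gadget

section compose

variable {ι κ : Type} [Fintype ι] [Fintype κ] [DecidableEq ι] [DecidableEq κ]

theorem E_cube_mul (A : (ι → Bool) → ℝ) (B : (κ → Bool) → ℝ) :
    E (fun x : ι ⊕ κ → Bool => A (x ∘ Sum.inl) * B (x ∘ Sum.inr)) = E A * E B := by
  rw [← E_mul]
  exact E_sumcube (fun p => A p.1 * B p.2)

theorem E_cube_fst (A : (ι → Bool) → ℝ) :
    E (fun x : ι ⊕ κ → Bool => A (x ∘ Sum.inl)) = E A := by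
  rw [← E_fst (β := κ → Bool) A]
  exact E_sumcube (fun p => A p.1)

theorem E_cube_snd (B : (κ → Bool) → ℝ) :
    E (fun x : ι ⊕ κ → Bool => B (x ∘ Sum.inr)) = E B := by
  rw [← E_snd (α := ι → Bool) B]
  exact E_sumcube (fun p => B p.2)

def Good (ι : Type) [Fintype ι] [DecidableEq ι] (δ : ℝ) : Prop :=
  ∃ (f : (ι → Bool) → Bool) (R : Type) (_ : Fintype R) (_ : Nonempty R) (t : R → GT ι),
    (∀ x y, (∀ i, x i = true → y i = true) → f x = true → f y = true) ∧
    E (fun x => ind (f x = true)) = 1 / 2 ∧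
    (∀ r x, (t r).eval x = f x) ∧
    ∀ i, E (fun r => E (fun x => ind ((t r).reads x i))) ≤ δ

theorem good_base : Good Unit 1 := by
  refine ⟨fun x => x (), Unit, inferInstance, inferInstance,
    fun _ => .node () (.leaf false) (.leaf true), fun x y h => h (), ?_, ?_, ?_⟩
  · have := E_eval (GT.node () (.leaf false) (.leaf true)) (by simp [GT.fresh, GT.occ])
    simp only [GT.eval, GT.pr] at this
    norm_num at this
    rw [← this]
  · intro r x
    simp [GT.eval]
  · intro i
    have : ∀ p : Prop, ind p ≤ 1 := by intro p; unfold ind; split_ifs <;> norm_num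
    calc _ ≤ E (fun _ : Unit => E (fun _ : Unit → Bool => (1:ℝ))) :=
          E_mono fun r => E_mono fun x => this _
      _ = 1 := by rw [E_const, E_const]

theorem good_step (g : (ι → Bool) → Bool) (Q : Type) [Fintype Q] [Nonempty Q] (t : Q → GT ι)
    (gm : ∀ x y, (∀ i, x i = true → y i = true) → g x = true → g y = true)
    (p : ℝ) (hp : E (fun x => ind (g x = true)) = p) (hp1 : 1 / 4 ≤ p) (hp2 : p ≤ 1 / 2)
    (ht : ∀ r x, (t r).eval x = g x) (δ δ' : ℝ)
    (hδ : ∀ i, E (fun r => E (fun x => ind ((t r).reads x i))) ≤ δ)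
    (hδ' : 5 / 8 * δ' ≤ δ) (hG : Good κ δ') : Good ((ι ⊕ ι) ⊕ κ) δ := by
  obtain ⟨b, R, _, _, t', bm, bb, bt, bδ⟩ := hG
  have hpn : E (fun x : ι → Bool => ind (g (fun i => !(x i)) = true)) = p := by
    rw [← hp]; exact E_not (fun x => ind (g x = true))
  let P : ((ι ⊕ ι) → Bool) → Bool := fun x => g (x ∘ Sum.inl)
  let N : ((ι ⊕ ι) → Bool) → Bool := fun x => !(g (fun i => !(x (Sum.inr i))))
  have hD : E (fun x => ind (P x ≠ N x)) = p * p + (1 - p) * (1 - p) := by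
    have h1 : ∀ x, ind (P x ≠ N x) =
        ind (g (x ∘ Sum.inl) = true) * ind (g (fun i => !((x ∘ Sum.inr) i)) = true) +
        (1 + (-1) * ind (g (x ∘ Sum.inl) = true)) *
          (1 + (-1) * ind (g (fun i => !((x ∘ Sum.inr) i)) = true)) := by
      intro x
      simp only [P, N, Function.comp_apply]
      cases g (x ∘ Sum.inl) <;> cases g (fun i => !(x (Sum.inr i))) <;> simp [ind]
    simp only [h1]
    rw [E_add, E_cube_mul (fun x => ind (g x = true)) (fun x => ind (g (fun i => !(x i)) = true)),
      E_cube_mul (fun x => 1 + (-1) * ind (g x = true))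
        (fun x => 1 + (-1) * ind (g (fun i => !(x i)) = true))]
    simp only [E_add, E_mul_left, E_const, hp, hpn]
    ring
  have hB : E (fun x => ind (P x = true ∧ N x = true)) = p * (1 - p) := by
    have h1 : ∀ x, ind (P x = true ∧ N x = true) =
        ind (g (x ∘ Sum.inl) = true) *
          (1 + (-1) * ind (g (fun i => !((x ∘ Sum.inr) i)) = true)) := by
      intro x
      simp only [P, N, Function.comp_apply]
      cases g (x ∘ Sum.inl) <;> cases g (fun i => !(x (Sum.inr i))) <;> simp [ind]
    simp only [h1]
    rw [E_cube_mul (fun x => ind (g x = true))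
        (fun x => 1 + (-1) * ind (g (fun i => !(x i)) = true))]
    simp only [E_add, E_mul_left, E_const, hp, hpn]
    ring
  have hPm : ∀ x y : ι ⊕ ι → Bool, (∀ i, x i = true → y i = true) → P x = true → P y = true :=
    fun x y h => gm _ _ (fun i => h _)
  have hNm : ∀ x y : ι ⊕ ι → Bool, (∀ i, x i = true → y i = true) → N x = true → N y = true := by
    intro x y h hx
    by_contra hy
    simp only [N, Bool.not_eq_true', Bool.not_eq_false] at hx hy
    have := gm (fun i => !(y (Sum.inr i))) (fun i => !(x (Sum.inr i))) (fun i hi => by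
      have := h (Sum.inr i)
      cases hxx : x (Sum.inr i) <;> simp_all) hy
    rw [this] at hx; cases hx
  refine ⟨fun x => if P (x ∘ Sum.inl) = N (x ∘ Sum.inl) then P (x ∘ Sum.inl) else b (x ∘ Sum.inr),
    (Q × Q) × R, inferInstance, inferInstance,
    fun r => ((t r.1.1).map (Sum.inl ∘ Sum.inl)).bind fun u =>
      ((t r.1.2).dual.map (Sum.inl ∘ Sum.inr)).bind fun v =>
        if u = v then .leaf u else (t' r.2).map Sum.inr, ?_, ?_, ?_, ?_⟩
  · intro x y hxy
    have h1 := hPm (x ∘ Sum.inl) (y ∘ Sum.inl) (fun i => hxy _)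
    have h2 := hNm (x ∘ Sum.inl) (y ∘ Sum.inl) (fun i => hxy _)
    have h3 := bm (x ∘ Sum.inr) (y ∘ Sum.inr) (fun i => hxy _)
    revert h1 h2 h3
    dsimp only
    generalize P (x ∘ Sum.inl) = a1
    generalize P (y ∘ Sum.inl) = a2
    generalize N (x ∘ Sum.inl) = a3
    generalize N (y ∘ Sum.inl) = a4
    generalize b (x ∘ Sum.inr) = a5
    generalize b (y ∘ Sum.inr) = a6
    revert a1 a2 a3 a4 a5 a6
    decide
  · have h1 : ∀ x : (ι ⊕ ι) ⊕ κ → Bool,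
        ind ((if P (x ∘ Sum.inl) = N (x ∘ Sum.inl) then P (x ∘ Sum.inl) else b (x ∘ Sum.inr)) = true)
        = ind (P (x ∘ Sum.inl) = true ∧ N (x ∘ Sum.inl) = true) +
          ind (P (x ∘ Sum.inl) ≠ N (x ∘ Sum.inl)) * ind (b (x ∘ Sum.inr) = true) := by
      intro x
      cases P (x ∘ Sum.inl) <;> cases N (x ∘ Sum.inl) <;> cases b (x ∘ Sum.inr) <;> simp [ind]
    simp only [h1]
    rw [E_add, E_cube_mul (fun x => ind (P x ≠ N x)) (fun x => ind (b x = true)),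
      E_cube_fst (fun x => ind (P x = true ∧ N x = true)), hD, hB, bb]
    ring
  · intro r x
    have e1 : ((t r.1.1).map (Sum.inl ∘ Sum.inl)).eval x = P (x ∘ Sum.inl) := by
      rw [GT.eval_map, ht]; rfl
    have e2 : ((t r.1.2).dual.map (Sum.inl ∘ Sum.inr)).eval x = N (x ∘ Sum.inl) := by
      rw [GT.eval_map, GT.eval_dual, ht]; rfl
    rw [GT.eval_bind, GT.eval_bind, e1, e2]
    dsimp only
    split_ifs with h
    · rfl
    · rw [GT.eval_map, bt]
  · intro i
    have hr : ∀ (r : (Q × Q) × R) (x : (ι ⊕ ι) ⊕ κ → Bool),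
      (((t r.1.1).map (Sum.inl ∘ Sum.inl)).bind fun u =>
      ((t r.1.2).dual.map (Sum.inl ∘ Sum.inr)).bind fun v =>
        if u = v then GT.leaf u else (t' r.2).map Sum.inr).reads x i ↔
      (∃ j, Sum.inl (Sum.inl j) = i ∧ (t r.1.1).reads ((x ∘ Sum.inl) ∘ Sum.inl) j) ∨
      (∃ j, Sum.inl (Sum.inr j) = i ∧
        (t r.1.2).reads (fun i => !(((x ∘ Sum.inl) ∘ Sum.inr) i)) j) ∨
      (∃ j, Sum.inr j = i ∧ (P (x ∘ Sum.inl) ≠ N (x ∘ Sum.inl) ∧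
        (t' r.2).reads (x ∘ Sum.inr) j)) := by
      intro r x
      have e1 : ((t r.1.1).map (Sum.inl ∘ Sum.inl)).eval x = P (x ∘ Sum.inl) := by
        rw [GT.eval_map, ht]; rfl
      have e2 : ((t r.1.2).dual.map (Sum.inl ∘ Sum.inr)).eval x = N (x ∘ Sum.inl) := by
        rw [GT.eval_map, GT.eval_dual, ht]; rfl
      rw [GT.reads_bind, GT.reads_bind, e1, e2, GT.reads_map, GT.reads_map]
      simp only [GT.reads_dual]
      refine or_congr Iff.rfl (or_congr Iff.rfl ?_)
      split_ifs with h
      · simp [GT.reads, h]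
      · rw [GT.reads_map]; simp [h]
    simp only [hr]
    rcases i with (i | i) | i
    · simp only [Sum.inl.injEq, reduceCtorEq, false_and, exists_false, or_false,
        exists_eq_left]
      have : ∀ r : (Q × Q) × R, E (fun x : (ι ⊕ ι) ⊕ κ → Bool =>
          ind ((t r.1.1).reads ((x ∘ Sum.inl) ∘ Sum.inl) i))
          = E (fun x => ind ((t r.1.1).reads x i)) := by
        intro r
        rw [E_cube_fst (fun x => ind ((t r.1.1).reads (x ∘ Sum.inl) i)),
          E_cube_fst (fun x => ind ((t r.1.1).reads x i))]
      simp only [this]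
      rw [E_fst (fun q : Q × Q => E (fun x => ind ((t q.1).reads x i))),
        E_fst (fun q : Q => E (fun x => ind ((t q).reads x i)))]
      exact hδ i
    · simp only [Sum.inl.injEq, Sum.inr.injEq, reduceCtorEq, false_and, exists_false, or_false,
        exists_eq_left, false_or]
      have : ∀ r : (Q × Q) × R, E (fun x : (ι ⊕ ι) ⊕ κ → Bool =>
          ind ((t r.1.2).reads (fun i => !(((x ∘ Sum.inl) ∘ Sum.inr) i)) i))
          = E (fun x => ind ((t r.1.2).reads x i)) := by
        intro r
        rw [E_cube_fst (fun x => ind ((t r.1.2).reads (fun i => !((x ∘ Sum.inr) i)) i)),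
          E_cube_snd (fun x => ind ((t r.1.2).reads (fun i => !(x i)) i)),
          E_not (fun x => ind ((t r.1.2).reads x i))]
      simp only [this]
      rw [E_fst (fun q : Q × Q => E (fun x => ind ((t q.2).reads x i))),
        E_snd (fun q : Q => E (fun x => ind ((t q).reads x i)))]
      exact hδ i
    · simp only [Sum.inr.injEq, reduceCtorEq, false_and, exists_false, false_or,
        exists_eq_left]
      have : ∀ r : (Q × Q) × R, E (fun x : (ι ⊕ ι) ⊕ κ → Bool =>
          ind (P (x ∘ Sum.inl) ≠ N (x ∘ Sum.inl) ∧ (t' r.2).reads (x ∘ Sum.inr) i))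
          = (p * p + (1 - p) * (1 - p)) * E (fun x => ind ((t' r.2).reads x i)) := by
        intro r
        simp only [ind_and]
        rw [E_cube_mul (fun x => ind (P x ≠ N x)) (fun x => ind ((t' r.2).reads x i)), hD]
      simp only [this]
      rw [E_mul_left, E_snd (fun q : R => E (fun x => ind ((t' q).reads x i)))]
      have h0 : 0 ≤ E (fun q : R => E (fun x => ind ((t' q).reads x i))) := by
        unfold E
        refine div_nonneg (Finset.sum_nonneg fun _ _ => div_nonneg
          (Finset.sum_nonneg fun _ _ => ind_nonneg _) ?_) ?_ <;> positivity
      have h1 := bδ i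
      have h2 : p * p + (1 - p) * (1 - p) ≤ 5 / 8 := by nlinarith
      nlinarith

end compose

theorem good_seq (k : ℕ) : ∃ (ι : Type) (_ : Fintype ι) (_ : DecidableEq ι),
    Good ι (8 / Real.sqrt 2 ^ k) ∧ 2 ^ k ≤ Fintype.card ι ∧
    (Fintype.card ι : ℝ) ≤ 16 * (Real.sqrt 2 ^ k) ^ 3 := by
  have hs : Real.sqrt 2 ^ 2 = 2 := Real.sq_sqrt (by norm_num)
  have hs0 : 0 < Real.sqrt 2 := by positivity
  have hs1 : 1.414 ≤ Real.sqrt 2 := Real.le_sqrt_of_sq_le (by norm_num)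
  have hs2 : Real.sqrt 2 ≤ 1.415 := by rw [Real.sqrt_le_left (by norm_num)]; norm_num
  induction k with
  | zero =>
    refine ⟨Unit, inferInstance, inferInstance, ?_, by simp, by simp⟩
    obtain ⟨f, R, i1, i2, t, h1, h2, h3, h4⟩ := good_base
    exact ⟨f, R, i1, i2, t, h1, h2, h3, fun i => (h4 i).trans (by norm_num)⟩
  | succ k ih =>
    obtain ⟨κ, _, _, hG, hc1, hc2⟩ := ih
    have hne : NeZero (2 ^ (k + 1)) := ⟨by positivity⟩
    obtain ⟨w, hw0, hw, hp1, hp2⟩ := exists_w (2 ^ (k + 1))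
    obtain ⟨t, ht, hδ⟩ := E_reads_tree (2 ^ (k + 1)) w
    have hm : ((2 ^ (k + 1) : ℕ) : ℝ) = (Real.sqrt 2 ^ (k + 1)) ^ 2 := by
      rw [← pow_mul, mul_comm, pow_mul, hs]; push_cast; rfl
    have hsk : 0 < Real.sqrt 2 ^ (k + 1) := by positivity
    have hsk' : 0 < Real.sqrt 2 ^ k := by positivity
    have hw' : (w : ℝ) ≤ 4 * Real.sqrt 2 ^ (k + 1) := by
      have : (w : ℝ) ^ 2 ≤ 16 * ((2 ^ (k + 1) : ℕ) : ℝ) := by exact_mod_cast hw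
      rw [hm] at this
      refine le_of_sq_le_sq ?_ (by positivity)
      rw [mul_pow]; linarith
    refine ⟨_, _, _, good_step (ff (2 ^ (k + 1)) w) (ZMod (2 ^ (k + 1))) t
      (ff_mono (2 ^ (k + 1)) w) (pp (2 ^ (k + 1)) w) rfl hp1 hp2 ht
      (8 / Real.sqrt 2 ^ (k + 1)) _ ?_ ?_ hG, ?_, ?_⟩
    · intro i
      refine (hδ i).trans ?_
      rw [hm, div_le_div_iff₀ (by positivity) (by positivity)]
      nlinarith [mul_le_mul_of_nonneg_right hw' hsk.le]
    · rw [← mul_div_assoc, div_le_div_iff₀ (by positivity) (by positivity), pow_succ]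
      nlinarith
    · simp only [Fintype.card_sum, Fintype.card_prod, ZMod.card, Fintype.card_fin]
      have : 2 ^ (k + 1) * 1 ≤ 2 ^ (k + 1) * w := Nat.mul_le_mul_left _ hw0
      omega
    · simp only [Fintype.card_sum, Fintype.card_prod, ZMod.card, Fintype.card_fin]
      rw [Nat.cast_add, Nat.cast_add, Nat.cast_mul, hm]
      have e : Real.sqrt 2 ^ (k + 1) = Real.sqrt 2 ^ k * Real.sqrt 2 := pow_succ _ _
      have h1 : (Real.sqrt 2 ^ (k + 1)) ^ 2 * (w:ℝ) ≤ 4 * (Real.sqrt 2 ^ (k + 1)) ^ 3 := by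
        have := mul_le_mul_of_nonneg_left hw' (sq_nonneg (Real.sqrt 2 ^ (k + 1)))
        linarith
      have h2 : 2.8 * (Real.sqrt 2 ^ k) ^ 3 ≤ (Real.sqrt 2 ^ (k + 1)) ^ 3 := by
        rw [e, mul_pow, pow_succ (Real.sqrt 2) 2, hs]
        have : 0 < (Real.sqrt 2 ^ k) ^ 3 := by positivity
        nlinarith
      linarith

def toD {n : ℕ} : GT (Fin n) → DTree n
  | .leaf b => .leaf b
  | .node i a b => .node i (toD a) (toD b)

theorem toD_eval {n : ℕ} (t : GT (Fin n)) (x : Fin n → Bool) : (toD t).eval x = t.eval x := by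
  induction t with
  | leaf b => rfl
  | node i a b iha ihb => simp [toD, DTree.eval, GT.eval, iha, ihb]

theorem toD_reads {n : ℕ} (t : GT (Fin n)) (x : Fin n → Bool) (j : Fin n) :
    (toD t).readsBit x j = true ↔ t.reads x j := by
  induction t with
  | leaf b => simp [toD, DTree.readsBit, GT.reads]
  | node i a b iha ihb =>
    by_cases h : x i = true <;> simp [toD, DTree.readsBit, GT.reads, iha, ihb, h]

theorem E_ind {α : Type} [Fintype α] (p : α → Prop) :
    E (fun x => ind (p x)) = Nat.card {x // p x} / Fintype.card α := by
  unfold E ind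
  rw [Nat.card_eq_fintype_card, Fintype.card_subtype]
  simp

theorem sum_aux {α β : Type} [Fintype α] [Fintype β] (D : α → β → Bool) (c d : ℝ) :
    (∑ r, ∑ x, if D r x = true then 1 / c else (0:ℝ)) / d
      = (∑ r, (∑ x, if D r x = true then (1:ℝ) else 0) / d) / c := by
  rw [← Finset.sum_div, div_div, mul_comm d c, ← div_div, Finset.sum_div _ _ c]
  congr 1
  refine Finset.sum_congr rfl fun r _ => ?_
  rw [Finset.sum_div]
  refine Finset.sum_congr rfl fun x _ => ?_
  split_ifs <;> simp

theorem good_final {ι : Type} [Fintype ι] [DecidableEq ι] (δ : ℝ) (hG : Good ι δ) :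
    ∃ (f : (Fin (Fintype.card ι) → Bool) → Bool) (A : RandAlg (Fintype.card ι)),
        balanced f ∧ monotoneBF f ∧ (∀ r x, (A.tree r).eval x = f x) ∧
        (∀ i, readProb A i ≤ δ) := by
  obtain ⟨f, R, _, _, t, fm, fb, ft, fδ⟩ := hG
  let e := Fintype.equivFin ι
  let q := Fintype.equivFin R
  have hR : (0:ℝ) < Fintype.card R := by exact_mod_cast Fintype.card_pos
  refine ⟨fun x => f (x ∘ e), ⟨Fintype.card R, fun r => toD ((t (q.symm r)).map e),
    fun _ => 1 / Fintype.card R, fun _ => by positivity, ?_⟩, ?_, ?_, ?_, ?_⟩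
  · simp [hR.ne']
  · have h := fb
    rw [← E_relabel e] at h
    unfold balanced
    rw [E_ind (fun x : Fin (Fintype.card ι) → Bool => f (x ∘ e) = true),
      div_eq_iff (by positivity)] at h
    rw [Fintype.card_fun, Fintype.card_bool, Fintype.card_fin] at h
    have h' : (2:ℝ) * (Nat.card {x : Fin (Fintype.card ι) → Bool // f (x ∘ e) = true} : ℝ)
      = ((2 ^ Fintype.card ι : ℕ) : ℝ) := by rw [h]; ring
    exact_mod_cast h'
  · intro x y hxy
    have := fm (x ∘ e) (y ∘ e) (fun i hi => by
      have := hxy (e i)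
      simp only [Function.comp] at hi ⊢
      rw [hi] at this
      exact top_le_iff.1 this)
    dsimp only
    cases h1 : f (x ∘ e)
    · exact Bool.false_le _
    · rw [this h1]
  · intro r x
    dsimp only
    rw [toD_eval, GT.eval_map, ft]
  · intro i
    refine le_trans (le_of_eq ?_) (fδ (e.symm i))
    unfold readProb
    dsimp only
    rw [← E_equiv q.symm]
    have h1 : ∀ r : Fin (Fintype.card R),
        E (fun x => ind ((t (q.symm r)).reads x (e.symm i)))
        = (∑ x : Fin (Fintype.card ι) → Bool,
          if (toD ((t (q.symm r)).map e)).readsBit x i = true then (1:ℝ) else 0)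
          / 2 ^ (Fintype.card ι) := by
      intro r
      rw [← E_relabel e]
      unfold E
      rw [Fintype.card_fun, Fintype.card_bool, Fintype.card_fin]
      push_cast
      congr 1
      refine Finset.sum_congr rfl fun x _ => ?_
      unfold ind
      have : (t (q.symm r)).reads (x ∘ e) (e.symm i) ↔
          (toD ((t (q.symm r)).map e)).readsBit x i = true := by
        rw [toD_reads, GT.reads_map]
        constructor
        · intro h; exact ⟨_, by simp, h⟩
        · rintro ⟨j, hj, h⟩
          rw [← hj]; simpa using h
      by_cases hh : (t (q.symm r)).reads (x ∘ e) (e.symm i)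
      · rw [if_pos hh, if_pos (this.1 hh)]
      · rw [if_neg hh, if_neg (fun h => hh (this.2 h))]
    simp only [h1]
    unfold E
    rw [Fintype.card_fin]
    exact sum_aux (fun r x => (toD ((t (q.symm r)).map e)).readsBit x i) _ _

end BSW

theorem statement2 :
    ∃ C > (0 : ℝ), ∀ N : ℕ, ∃ n, N ≤ n ∧ 0 < n ∧
      ∃ (f : (Fin n → Bool) → Bool) (A : RandAlg n),
        balanced f ∧
        monotoneBF f ∧
        (∀ r x, (A.tree r).eval x = f x) ∧
        (∀ i, readProb A i ≤ C * Real.log n / (n : ℝ) ^ ((1 : ℝ) / 3)) := by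
  refine ⟨24, by norm_num, fun N => ?_⟩
  obtain ⟨ι, _, _, hG, hc1, hc2⟩ := BSW.good_seq (N + 2)
  obtain ⟨f, A, h1, h2, h3, h4⟩ := BSW.good_final _ hG
  have hN : N + 2 < 2 ^ (N + 2) := Nat.lt_two_pow_self
  have h4n : 3 ≤ Fintype.card ι := by omega
  refine ⟨Fintype.card ι, by omega, by omega, f, A, h1, h2, h3, fun i => (h4 i).trans ?_⟩
  generalize Fintype.card ι = n at *
  have hn : (3:ℝ) ≤ n := by exact_mod_cast h4n
  have hs : 0 < Real.sqrt 2 ^ (N + 2) := by positivity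
  generalize Real.sqrt 2 ^ (N + 2) = z at *
  have hlog : 1 ≤ Real.log n := by
    rw [Real.le_log_iff_exp_le (by linarith)]
    exact (Real.exp_one_lt_d9.le.trans (by norm_num)).trans hn
  have hr0 : 0 < (n:ℝ) ^ ((1:ℝ) / 3) := by positivity
  have hr : (n:ℝ) ^ ((1:ℝ) / 3) ≤ 3 * z := by
    have e : (((3 * z) ^ 3 : ℝ)) ^ ((1:ℝ) / 3) = 3 * z := by
      rw [← Real.rpow_natCast, ← Real.rpow_mul (by positivity)]
      norm_num
    rw [← e]
    apply Real.rpow_le_rpow (by positivity) _ (by norm_num)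
    have : 0 < z ^ 3 := by positivity
    rw [mul_pow]; linarith
  rw [div_le_div_iff₀ hs hr0]
  nlinarith
end

section
/- For every ε > 0 there exist a constant C > 0 and infinitely many positive integers n for which there is a balanced monotone Boolean function f : {0,1}^n → {0,1} (monotone means f(x) ≥ f(y) whenever x_i ≥ y_i for all i; balanced means Pr[f(x)=1] = 1/2 for uniform x) together with a randomized decision-tree algorithm A such that Pr[A's output on x differs from f(x)] ≤ ε (probability over uniform x and the algorithm's randomness) and whose revealment satisfies δ = max_i δ_i ≤ C · n^{-1/3}. -/
lemma h_row {ι : Type} [Fintype ι] [DecidableEq ι] (p : ι) (φ : Bool → ℝ) :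
    2 * ∑ a : ι → Bool, φ (a p) = 2 ^ Fintype.card ι * (φ true + φ false) := by
  have hinv : Function.Involutive (fun a : ι → Bool => Function.update a p (!(a p))) := by
    intro a; simp
  have h1 : ∑ a : ι → Bool, φ (!(a p)) = ∑ a : ι → Bool, φ (a p) := by
    rw [← Equiv.sum_comp hinv.toPerm (fun a : ι → Bool => φ (a p))]
    apply Finset.sum_congr rfl
    intro a _
    simp [Function.Involutive.toPerm]
  have h2 : ∑ a : ι → Bool, (φ (a p) + φ (!(a p))) = ∑ a : ι → Bool, (φ true + φ false) := by
    apply Finset.sum_congr rfl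
    intro a _
    cases a p <;> simp [add_comm]
  rw [Finset.sum_add_distrib, h1] at h2
  rw [two_mul, h2]
  simp [mul_add]

lemma h_cons {R : Type} [Fintype R] (T : ℕ) (F : R → (Fin T → R) → ℝ) :
    ∑ r : Fin (T + 1) → R, F (r 0) (fun i => r i.succ) = ∑ a : R, ∑ r : Fin T → R, F a r := by
  rw [← Equiv.sum_comp (Fin.consEquiv (fun _ : Fin (T+1) => R)), Fintype.sum_prod_type]
  simp [Fin.consEquiv]

def wend {L : ℕ} : (T : ℕ) → (Fin T → ZMod L → Bool) → ℕ → ℕ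
  | 0, _, p => p
  | T + 1, r, p => wend T (fun i => r i.succ) (if r 0 (p : ZMod L) then p + 1 else p)

def wpos {L : ℕ} : (T : ℕ) → (Fin T → ZMod L → Bool) → ZMod L → Fin T → ZMod L
  | 0, _, p, _ => p
  | T + 1, r, p, t =>
      Fin.cases p (fun u => wpos T (fun i => r i.succ) (if r 0 p then p + 1 else p) u) t

def wtree {L n : ℕ} (h : ℕ) : (T : ℕ) → (Fin T → ZMod L → Fin n) → ℕ → DTree n
  | 0, _, p => .leaf (decide (h < p))
  | T + 1, idx, p => .node (idx 0 (p : ZMod L)) (wtree h T (fun i => idx i.succ) p)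
      (wtree h T (fun i => idx i.succ) (p + 1))

lemma wtree_eval {L n : ℕ} (h T : ℕ) (idx : Fin T → ZMod L → Fin n) (p : ℕ) (x : Fin n → Bool) :
    (wtree h T idx p).eval x = decide (h < wend T (fun t q => x (idx t q)) p) := by
  induction T generalizing p with
  | zero => rfl
  | succ T ih =>
    simp only [wtree, wend, DTree.eval, ih]
    split_ifs <;> rfl

lemma wtree_reads_none {L n : ℕ} (h T : ℕ) (idx : Fin T → ZMod L → Fin n) (p : ℕ)
    (x : Fin n → Bool) (j : Fin n) (hj : ∀ t q, idx t q ≠ j) :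
    (wtree h T idx p).readsBit x j = false := by
  induction T generalizing p with
  | zero => simp [wtree, DTree.readsBit]
  | succ T ih =>
    simp only [wtree, DTree.readsBit]
    rw [ih _ _ (fun t q => hj _ q), ih _ _ (fun t q => hj _ q)]
    simp [hj]

lemma wtree_reads {L n : ℕ} (h T : ℕ) (idx : Fin T → ZMod L → Fin n)
    (hidx : ∀ t q t' q', idx t q = idx t' q' → t = t' ∧ q = q') (p : ℕ)
    (x : Fin n → Bool) (t : Fin T) (q : ZMod L) :
    (wtree h T idx p).readsBit x (idx t q) =
      decide (wpos T (fun t q => x (idx t q)) (p : ZMod L) t = q) := by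
  induction T generalizing p with
  | zero => exact t.elim0
  | succ T ih =>
    have hidx' : ∀ t q t' q', idx (Fin.succ t) q = idx (Fin.succ t') q' → t = t' ∧ q = q' := by
      intro t q t' q' hh
      have := hidx _ _ _ _ hh
      exact ⟨Fin.succ_injective _ this.1, this.2⟩
    simp only [wtree, DTree.readsBit, wpos]
    induction t using Fin.cases with
    | zero =>
      have hn : ∀ t q', idx (Fin.succ t) q' ≠ idx 0 q := by
        intro t q' hh
        exact Fin.succ_ne_zero _ (hidx _ _ _ _ hh).1
      rw [wtree_reads_none h T _ _ x _ hn, wtree_reads_none h T _ _ x _ hn]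
      simp only [ite_self, Bool.or_false, Fin.cases_zero]
      by_cases hpq : (p : ZMod L) = q
      · simp [hpq]
      · have : idx 0 (p : ZMod L) ≠ idx 0 q := fun hh => hpq (hidx _ _ _ _ hh).2
        simp [hpq, this]
    | succ u =>
      have hn : idx 0 (p : ZMod L) ≠ idx u.succ q := by
        intro hh
        exact Fin.succ_ne_zero _ (hidx _ _ _ _ hh).1.symm
      rw [ih (fun i => idx i.succ) hidx' p u, ih (fun i => idx i.succ) hidx' (p+1) u]
      simp only [beq_eq_false_iff_ne.mpr hn, Bool.false_or, Fin.cases_succ]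
      split_ifs <;> simp

lemma wend_mono {L : ℕ} (T : ℕ) (r r' : Fin T → ZMod L → Bool)
    (hr : ∀ t q, r t q ≤ r' t q) (p p' : ℕ) (hp : p ≤ p') : wend T r p ≤ wend T r' p' := by
  induction T generalizing p p' with
  | zero => simpa [wend]
  | succ T ih =>
    simp only [wend]
    apply ih _ _ (fun t q => hr _ q)
    rcases hp.lt_or_eq with hlt | rfl
    · split_ifs <;> omega
    · have := hr 0 (p : ZMod L)
      revert this
      cases r 0 (p : ZMod L) <;> cases r' 0 (p : ZMod L) <;> simp

lemma wend_dist {L : ℕ} [NeZero L] (T : ℕ) (g : ℕ → ℝ) (p : ℕ) :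
    2 ^ T * ∑ r : Fin T → ZMod L → Bool, g (wend T r p) =
      (2 ^ L) ^ T * ∑ k ∈ Finset.range (T + 1), (T.choose k : ℝ) * g (p + k) := by
  induction T generalizing p with
  | zero => simp [wend]
  | succ T ih =>
    have h1 := h_cons T (fun (a : ZMod L → Bool) r =>
      g (wend T r (if a (p : ZMod L) then p + 1 else p)))
    simp only [wend]
    rw [h1]
    have h2 := h_row (p : ZMod L) (fun b => ∑ r : Fin T → ZMod L → Bool,
      g (wend T r (if b then p + 1 else p)))
    simp only [ZMod.card, if_true, Bool.false_eq_true, if_false] at h2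
    have h3 : ∑ k ∈ Finset.range (T + 1 + 1), ((T+1).choose k : ℝ) * g (p + k) =
      ∑ k ∈ Finset.range (T + 1), (T.choose k : ℝ) * g (p + 1 + k) +
      ∑ k ∈ Finset.range (T + 1), (T.choose k : ℝ) * g (p + k) := by
      rw [Finset.sum_range_succ']
      have : ∑ k ∈ Finset.range (T + 1), (T.choose k : ℝ) * g (p + k) =
        ∑ k ∈ Finset.range (T + 1), (T.choose (k+1) : ℝ) * g (p + (k+1)) + g p := by
        have h4 := Finset.sum_range_succ' (fun k => (T.choose k : ℝ) * g (p + k)) (T+1)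
        rw [Finset.sum_range_succ] at h4
        simpa using h4
      rw [this, ← add_assoc, ← Finset.sum_add_distrib]
      simp only [Nat.choose_succ_succ, Nat.cast_add, Nat.choose_zero_right, Nat.cast_one, add_zero,
        one_mul, add_left_inj]
      apply Finset.sum_congr rfl
      intro k _
      rw [show p + 1 + k = p + (k + 1) by ring]
      simp only [Nat.succ_eq_add_one]
      ring
    rw [h3, mul_add]
    have e1 := ih (p+1)
    have e2 := ih p
    rw [pow_succ, mul_assoc, h2]
    linear_combination (2:ℝ)^L * (e1 + e2)

lemma wpos_dist {L : ℕ} [NeZero L] (T : ℕ) (t : Fin T) (q : ZMod L) :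
    ∑ p : ZMod L, ∑ r : Fin T → ZMod L → Bool, (if wpos T r p t = q then (1:ℝ) else 0) =
      (2 ^ L) ^ T := by
  induction T with
  | zero => exact t.elim0
  | succ T ih =>
    induction t using Fin.cases with
    | zero =>
      change ∑ p : ZMod L, ∑ r : Fin (T+1) → ZMod L → Bool, (if p = q then (1:ℝ) else 0) = _
      rw [Finset.sum_comm]
      have h5 : ∀ r : Fin (T+1) → ZMod L → Bool,
          ∑ p : ZMod L, (if p = q then (1:ℝ) else 0) = 1 := by intro r; simp
      rw [Finset.sum_congr rfl (fun r _ => h5 r)]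
      simp
    | succ u =>
      change ∑ p : ZMod L, ∑ r : Fin (T+1) → ZMod L → Bool,
          (if wpos T (fun i => r i.succ) (if r 0 p then p + 1 else p) u = q then (1:ℝ) else 0) = _
      have ih' := ih u
      have h0 : ∀ p : ZMod L, 2 * ∑ r : Fin (T+1) → ZMod L → Bool,
          (if wpos T (fun i => r i.succ) (if r 0 p then p + 1 else p) u = q then (1:ℝ) else 0) =
          2 ^ L * (∑ r : Fin T → ZMod L → Bool, (if wpos T r (p+1) u = q then (1:ℝ) else 0) +
            ∑ r : Fin T → ZMod L → Bool, (if wpos T r p u = q then (1:ℝ) else 0)) := by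
        intro p
        have h1 := h_cons T (fun (a : ZMod L → Bool) r =>
          (if wpos T r (if a p then p + 1 else p) u = q then (1:ℝ) else 0))
        have h2 := h_row p (fun b => ∑ r : Fin T → ZMod L → Bool,
          (if wpos T r (if b then p + 1 else p) u = q then (1:ℝ) else 0))
        simp only [ZMod.card, if_true, Bool.false_eq_true, if_false] at h2
        rw [h1, h2]
      have h3 : ∑ p : ZMod L, ∑ r : Fin T → ZMod L → Bool,
          (if wpos T r (p + 1) u = q then (1:ℝ) else 0) = ∑ p : ZMod L,
          ∑ r : Fin T → ZMod L → Bool, (if wpos T r p u = q then (1:ℝ) else 0) := Equiv.sum_comp (Equiv.addRight (1 : ZMod L)) (fun p => 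
        ∑ r : Fin T → ZMod L → Bool, (if wpos T r p u = q then (1:ℝ) else 0))
      have h4 := Finset.sum_congr (rfl : (Finset.univ : Finset (ZMod L)) = _) (fun p _ => h0 p)
      rw [← Finset.mul_sum, ← Finset.mul_sum, Finset.sum_add_distrib, h3, ih'] at h4
      rw [pow_succ]
      linarith

lemma central_bound (m : ℕ) : m.centralBinom ^ 2 * (2 * m + 1) ≤ 16 ^ m := by
  induction m with
  | zero => simp
  | succ m ih =>
    have h := Nat.succ_mul_centralBinom_succ m
    have h2 : (m+1)^2 * ((m+1).centralBinom ^ 2 * (2 * (m+1) + 1)) ≤ (m+1)^2 * 16^(m+1) := by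
      calc (m+1)^2 * ((m+1).centralBinom ^ 2 * (2 * (m+1) + 1))
          = ((m+1) * (m+1).centralBinom)^2 * (2*m+3) := by ring
        _ = (4 * (2*m+1) * (2*m+3)) * (m.centralBinom ^ 2 * (2 * m + 1)) := by rw [h]; ring
        _ ≤ (4 * (2*m+1) * (2*m+3)) * 16^m := by gcongr
        _ ≤ (16 * (m+1)^2) * 16^m := Nat.mul_le_mul_right _ (by nlinarith)
        _ = _ := by ring
    exact Nat.le_of_mul_le_mul_left h2 (by positivity)

/-- the middle binomial coefficient times `M`, where `T = M ^ 2 = 2 h + 1`. -/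
lemma choose_bound (h M : ℕ) (hM : M ^ 2 = 2 * h + 1) :
    M * (2 * h + 1).choose h ≤ 2 ^ (2 * h + 1) := by
  have h1 : (2*h+1).choose h ≤ 2 * h.centralBinom := by
    cases h with
    | zero => simp
    | succ k =>
      have h5 := Nat.choose_le_centralBinom k (k+1)
      have h6 := Nat.choose_succ_succ (2 * (k+1)) k
      have h7 : (k+1).centralBinom = (2 * (k+1)).choose (k+1) := rfl
      simp only [Nat.succ_eq_add_one] at h6
      omega
  have h2 : (M * h.centralBinom)^2 ≤ (4 ^ h)^2 := by
    have := central_bound h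
    rw [← hM] at this
    calc _ = h.centralBinom^2 * M^2 := by ring
      _ ≤ 16^h := this
      _ = _ := by rw [← pow_mul, mul_comm h 2, pow_mul]; norm_num
  have h3 := (Nat.pow_le_pow_iff_left (by norm_num)).1 h2
  calc _ ≤ M * (2 * h.centralBinom) := by gcongr
    _ = 2 * (M * h.centralBinom) := by ring
    _ ≤ 2 * 4^h := by gcongr
    _ = _ := by rw [pow_succ, pow_mul]; norm_num [mul_comm]

lemma err_count {L : ℕ} [NeZero L] (h M s : ℕ) (hM : M ^ 2 = 2 * h + 1) :
    M * ∑ r : Fin (2 * h + 1) → ZMod L → Bool,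
      (if decide (h < wend _ r s) ≠ decide (h < wend _ r 0) then (1:ℝ) else 0) ≤
      s * (2 ^ L) ^ (2 * h + 1) := by
  set T := 2 * h + 1 with hT
  have e1 : ∀ r : Fin T → ZMod L → Bool,
      (if decide (h < wend _ r s) ≠ decide (h < wend _ r 0) then (1:ℝ) else 0) =
      (if h < wend _ r s then (1:ℝ) else 0) - (if h < wend _ r 0 then (1:ℝ) else 0) := by
    intro r
    have := wend_mono T r r (fun _ _ => le_rfl) 0 s (Nat.zero_le _)
    by_cases ha : h < wend T r 0
    · have hb := ha.trans_le this
      simp [ha, hb]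
    · by_cases hb : h < wend T r s <;> simp [ha, hb]
  have d1 := wend_dist (L := L) T (fun k => if h < k then (1:ℝ) else 0) s
  have d0 := wend_dist (L := L) T (fun k => if h < k then (1:ℝ) else 0) 0
  simp only [e1, Finset.sum_sub_distrib]
  have hpos : (0:ℝ) < 2 ^ T := by positivity
  have key : M * (∑ k ∈ Finset.range (T + 1), (T.choose k : ℝ) * (if h < s + k then (1:ℝ) else 0)
      - ∑ k ∈ Finset.range (T + 1), (T.choose k : ℝ) * (if h < 0 + k then (1:ℝ) else 0))
      ≤ s * 2 ^ T := by
    have cb : (M : ℝ) * (T.choose h : ℝ) ≤ 2 ^ T := by exact_mod_cast choose_bound h M hM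
    have : (∑ k ∈ Finset.range (T + 1), (T.choose k : ℝ) * (if h < s + k then (1:ℝ) else 0)
      - ∑ k ∈ Finset.range (T + 1), (T.choose k : ℝ) * (if h < 0 + k then (1:ℝ) else 0)) ≤
      s * (T.choose h : ℝ) := by
      rw [← Finset.sum_sub_distrib]
      calc _ ≤ ∑ k ∈ Finset.range (T + 1), (if k ∈ Finset.Ioc (h - s) h ∨ (k = 0 ∧ h < s) 
              then (T.choose h : ℝ) else 0) := by
            apply Finset.sum_le_sum
            intro k _
            have hm : (T.choose k : ℝ) ≤ T.choose h := by
              have := Nat.choose_le_middle k T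
              rw [show T / 2 = h by omega] at this
              exact_mod_cast this
            have h0 : (0:ℝ) ≤ T.choose h := by positivity
            simp only [Finset.mem_Ioc]
            split_ifs <;> first | omega | linarith
        _ ≤ _ := by
            rw [← Finset.sum_filter, Finset.sum_const, nsmul_eq_mul]
            gcongr
            by_cases hs : h < s
            · refine (Finset.card_le_card (t := Finset.range (h+1)) ?_).trans (by simp; omega)
              intro k; simp only [Finset.mem_filter, Finset.mem_range, Finset.mem_Ioc]; omega
            · refine (Finset.card_le_card (t := Finset.Ioc (h-s) h) ?_).trans (by simp; omega)
              intro k; simp only [Finset.mem_filter, Finset.mem_Ioc]; omega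
    calc _ ≤ (M:ℝ) * (s * (T.choose h : ℝ)) := by gcongr
      _ = s * (M * (T.choose h : ℝ)) := by ring
      _ ≤ _ := by gcongr
  refine le_of_mul_le_mul_left ?_ hpos
  have hR : (0:ℝ) ≤ (2 ^ L) ^ T := by positivity
  have k2 := mul_le_mul_of_nonneg_left key hR
  calc _ = M * (2 ^ T * ∑ r : Fin T → ZMod L → Bool, (if h < wend _ r s then (1:ℝ) else 0)
        - 2 ^ T * ∑ r : Fin T → ZMod L → Bool, (if h < wend _ r 0 then (1:ℝ) else 0)) := by ring
    _ = _ := by rw [d1, d0, ← mul_sub, mul_left_comm]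
    _ ≤ _ := k2
    _ = _ := by ring

lemma half_count {L : ℕ} [NeZero L] (h : ℕ) :
    2 * ∑ r : Fin (2 * h + 1) → ZMod L → Bool, (if h < wend _ r 0 then (1:ℝ) else 0) =
      (2 ^ L) ^ (2 * h + 1) := by
  have d0 := wend_dist (L := L) (2*h+1) (fun k => if h < k then (0:ℝ) else 1) 0
  have hs : ∑ k ∈ Finset.range (2*h+1 + 1), ((2*h+1).choose k : ℝ) *
      (if h < 0 + k then (0:ℝ) else 1) = 4 ^ h := by
    have := Nat.sum_range_choose_halfway h
    have h' : (∑ i ∈ Finset.range (h+1), ((2*h+1).choose i : ℝ)) = 4 ^ h := by exact_mod_cast this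
    rw [← h', ← Finset.sum_subset (s₁ := Finset.range (h+1))]
    · apply Finset.sum_congr rfl
      intro k hk
      have : ¬ h < k := by simp at hk; omega
      simp [this]
    · intro k; simp; omega
    · intro k _ hk
      have : h < k := by simp at hk; omega
      simp [this]
  rw [hs] at d0
  have hc : ∑ r : Fin (2 * h + 1) → ZMod L → Bool, (if h < wend _ r 0 then (1:ℝ) else 0) +
     ∑ r : Fin (2 * h + 1) → ZMod L → Bool, (if h < wend _ r 0 then (0:ℝ) else 1) = 
     (2 ^ L) ^ (2 * h + 1) := by
    rw [← Finset.sum_add_distrib]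
    have : ∀ r : Fin (2 * h + 1) → ZMod L → Bool, (if h < wend _ r 0 then (1:ℝ) else 0) +
      (if h < wend _ r 0 then (0:ℝ) else 1) = 1 := by intro r; split_ifs <;> simp
    simp [this]
  have h4 : (2:ℝ) ^ (2*h+1) = 2 * 4 ^ h := by rw [pow_succ, pow_mul]; norm_num [mul_comm]
  have h5 : (4:ℝ)^h ≠ 0 := by positivity
  rw [h4] at d0
  have : 2 * ∑ r : Fin (2 * h + 1) → ZMod L → Bool, (if h < wend _ r 0 then (0:ℝ) else 1) =
     (2 ^ L) ^ (2 * h + 1) := by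
    apply mul_left_cancel₀ h5
    linarith
  linarith

/-- For every `ε > 0` there exist a constant `C > 0` and
infinitely many positive integers `n` for which there is a balanced monotone
Boolean function on `n` bits together with a randomized decision-tree algorithm
whose error probability is at most `ε` and whose revealment satisfies
`δ = max_i δ_i ≤ C · n^(-1/3)`. -/
theorem statement3 :
    ∀ ε > (0 : ℝ), ∃ C > (0 : ℝ), ∀ N : ℕ, ∃ n, N ≤ n ∧ 0 < n ∧
      ∃ (f : (Fin n → Bool) → Bool) (A : RandAlg n),
        balanced f ∧
        monotoneBF f ∧
        errProb A f ≤ ε ∧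
        (∀ i, readProb A i ≤ C / (n : ℝ) ^ ((1 : ℝ) / 3)) := by
  intro ε hε
  obtain ⟨K₀, hK₀⟩ := exists_nat_gt (1 / ε)
  set K := 2 * K₀ + 1 with hK
  have hKε : 1 / (K:ℝ) ≤ ε := by
    have : (1 / ε) ≤ K := by
      have : (K₀ : ℝ) ≤ K := by exact_mod_cast (by omega)
      linarith
    rw [div_le_iff₀ (by positivity)]
    rw [div_le_iff₀ hε] at this
    linarith
  refine ⟨K, by positivity, fun N => ?_⟩
  set L := 2 * N + 1 with hL
  have : NeZero L := ⟨by omega⟩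
  set M := K * L with hMdef
  obtain ⟨h, hM⟩ : ∃ h, M ^ 2 = 2 * h + 1 := by
    have : Odd (M^2) := by
      apply Odd.pow
      exact Odd.mul ⟨K₀, rfl⟩ ⟨N, rfl⟩
    exact this
  set T := 2 * h + 1 with hT
  have hcard : Fintype.card (Fin T × ZMod L) = T * L := by simp [ZMod.card]
  let e : Fin T × ZMod L ≃ Fin (T * L) := Fintype.equivFinOfCardEq hcard
  let idx : Fin T → ZMod L → Fin (T * L) := fun t q => e (t, q)
  have hidx : ∀ t q t' q', idx t q = idx t' q' → t = t' ∧ q = q' := by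
    intro t q t' q' hh
    simpa [idx] using hh
  let E : (Fin (T * L) → Bool) ≃ (Fin T → ZMod L → Bool) :=
    (Equiv.arrowCongr e.symm (Equiv.refl Bool)).trans (Equiv.curry _ _ _)
  have hE : ∀ x, (fun t q => x (idx t q)) = E x := by
    intro x; funext t q; simp [E, idx]
  have hpow : (2:ℝ) ^ (T * L) = (2 ^ L) ^ T := by rw [← pow_mul, mul_comm]
  have hLpos : (0:ℝ) < L := by exact_mod_cast (by omega : 0 < L)
  have hKpos : (0:ℝ) < K := by exact_mod_cast (by omega : 0 < K)
  refine ⟨T * L, ?_, ?_, fun x => decide (h < wend T (fun t q => x (idx t q)) 0),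
    { m := L
      tree := fun r => wtree h T idx r.val
      w := fun _ => 1 / (L:ℝ)
      w_nonneg := fun _ => by positivity
      w_sum := by simp [hLpos.ne'] }, ?_, ?_, ?_, ?_⟩
  · calc N ≤ L := by omega
      _ ≤ T * L := Nat.le_mul_of_pos_left _ (by omega)
  · exact Nat.mul_pos (by omega) (by omega)
  · unfold balanced
    have hc := half_count (L := L) h
    rw [← Equiv.sum_comp E, ← hpow] at hc
    rw [Nat.card_eq_fintype_card, Fintype.card_subtype]
    have : ((2 * (Finset.univ.filter (fun x : Fin (T * L) → Bool =>
      decide (h < wend T (fun t q => x (idx t q)) 0) = true)).card : ℕ) : ℝ) = 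
      ((2 ^ (T * L) : ℕ) : ℝ) := by
      push_cast
      rw [← hc]
      simp only [hE, decide_eq_true_eq, Finset.sum_boole]
      rfl
    exact_mod_cast this
  · intro x y hxy
    have := wend_mono T (fun t q => x (idx t q)) (fun t q => y (idx t q)) (fun t q => hxy _) 0 0 le_rfl
    simp only
    by_cases ha : h < wend T (fun t q => x (idx t q)) 0
    · have hb := ha.trans_le this
      simp [ha, hb]
    · simp [ha]
  · unfold errProb
    simp only [wtree_eval, hE]
    rw [div_le_iff₀ (by positivity)]
    have hb : ∀ r : Fin L, ∑ x : Fin (T * L) → Bool,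
        (if decide (h < wend T (E x) r) ≠ decide (h < wend T (E x) 0) then 1 / (L:ℝ) else 0) ≤
        1 / L * (ε * 2 ^ (T * L)) := by
      intro r
      rw [Equiv.sum_comp E (fun z => 
        (if decide (h < wend T z r) ≠ decide (h < wend T z 0) then 1 / (L:ℝ) else 0))]
      have hc := err_count (L := L) h M r hM
      have : ∀ z : Fin T → ZMod L → Bool, 
        (if decide (h < wend T z r) ≠ decide (h < wend T z 0) then 1 / (L:ℝ) else 0) = 
        1 / L * (if decide (h < wend T z r) ≠ decide (h < wend T z 0) then (1:ℝ) else 0) := by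
        intro z; split_ifs <;> simp
      simp only [this]
      rw [← Finset.mul_sum]
      gcongr
      set S := ∑ z : Fin T → ZMod L → Bool,
        (if decide (h < wend T z r) ≠ decide (h < wend T z 0) then (1:ℝ) else 0) with hS
      have hrL : ((r:ℕ):ℝ) ≤ L := by exact_mod_cast r.2.le
      have h1 : (M:ℝ) * S ≤ L * (2 ^ L) ^ T := hc.trans (by gcongr)
      rw [hMdef] at h1
      push_cast at h1
      have h2 : (L:ℝ) * (K * S) ≤ L * (2 ^ L) ^ T := by nlinarith
      have h3 := le_of_mul_le_mul_left h2 hLpos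
      rw [hpow]
      calc S = 1 / K * (K * S) := by field_simp
        _ ≤ 1 / K * (2 ^ L) ^ T := by gcongr
        _ ≤ _ := by gcongr
    refine (Finset.sum_le_sum (fun r _ => hb r)).trans ?_
    simp only [Finset.sum_const, Finset.card_univ, Fintype.card_fin, nsmul_eq_mul]
    apply le_of_eq
    field_simp
  · intro i
    obtain ⟨⟨t, q⟩, rfl⟩ := e.surjective i
    have hr : readProb (n := T * L)
      { m := L
        tree := fun r => wtree h T idx r.val
        w := fun _ => 1 / (L:ℝ)
        w_nonneg := fun _ => by positivity
        w_sum := by simp [hLpos.ne'] } (e (t, q)) = 1 / L := by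
      unfold readProb
      have : e (t, q) = idx t q := rfl
      rw [this]
      simp only [wtree_reads h T idx hidx, hE, decide_eq_true_eq]
      have hd := wpos_dist (L := L) T t q
      have hb : ∀ r : Fin L, ∑ x : Fin (T * L) → Bool,
          (if wpos T (E x) ((r : ℕ) : ZMod L) t = q then 1 / (L:ℝ) else 0) =
          1 / L * ∑ z : Fin T → ZMod L → Bool, 
          (if wpos T z ((r : ℕ) : ZMod L) t = q then (1:ℝ) else 0) := by
        intro r
        rw [Equiv.sum_comp E (fun z => 
          (if wpos T z ((r : ℕ) : ZMod L) t = q then 1 / (L:ℝ) else 0)), Finset.mul_sum]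
        apply Finset.sum_congr rfl
        intro z _
        split_ifs <;> simp
      have hsum : ∑ r : Fin L, ∑ z : Fin T → ZMod L → Bool, 
          (if wpos T z ((r : ℕ) : ZMod L) t = q then (1:ℝ) else 0) = (2 ^ L) ^ T := by
        rw [← hd]
        have hbij : Function.Bijective (fun r : Fin L => ((r : ℕ) : ZMod L)) := by
          rw [Fintype.bijective_iff_injective_and_card]
          refine ⟨fun a b hab => ?_, by simp [ZMod.card]⟩
          have := (ZMod.natCast_eq_natCast_iff' _ _ _).1 hab
          rw [Nat.mod_eq_of_lt a.2, Nat.mod_eq_of_lt b.2] at this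
          exact Fin.ext this
        exact hbij.sum_comp (fun p : ZMod L => ∑ z : Fin T → ZMod L → Bool, 
          (if wpos T z p t = q then (1:ℝ) else 0))
      rw [Finset.sum_congr rfl (fun r _ => hb r), ← Finset.mul_sum, hsum, hpow]
      field_simp
    rw [hr]
    have hn : ((T * L : ℕ) : ℝ) ^ ((1:ℝ)/3) ≤ K * L := by
      have h1 : ((T * L : ℕ) : ℝ) ≤ (K * L : ℝ) ^ (3:ℝ) := by
        rw [← hM, hMdef]
        have : (K * L) ^ 2 * L ≤ (K * L) ^ 3 := by
          rw [pow_succ (K * L) 2]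
          gcongr
          exact Nat.le_mul_of_pos_left _ (by omega)
        have h3 : (((K * L) ^ 2 * L : ℕ) : ℝ) ≤ (((K * L) ^ 3 : ℕ) : ℝ) := by exact_mod_cast this
        rw [show (3:ℝ) = ((3:ℕ):ℝ) by norm_num, Real.rpow_natCast]
        push_cast at h3 ⊢
        exact h3
      calc _ ≤ ((K * L : ℝ) ^ (3:ℝ)) ^ ((1:ℝ)/3) := by
            apply Real.rpow_le_rpow (by positivity) h1 (by norm_num)
        _ = _ := by
            rw [← Real.rpow_mul (by positivity)]; norm_num
    have hTL : (0:ℝ) < ((T * L : ℕ) : ℝ) ^ ((1:ℝ)/3) := by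
      apply Real.rpow_pos_of_pos
      exact_mod_cast Nat.mul_pos (by omega) (by omega)
    rw [div_le_div_iff₀ hLpos hTL]
    linarith
end

section
/- Let f : {−1,1}^n → {−1,1} be any Boolean function and let A be any randomized decision-tree algorithm on n bits with revealment δ. Then for x uniform on {−1,1}^n, Pr[A's output on x differs from f(x)] ≥ (1/8)·Var(f) − (1/4)·n·δ², where the probability is over x and the algorithm's randomness. In particular, if f is balanced and the error probability is small, then δ ≥ Ω(n^{-1/2}). -/
section helpers

theorem DTree.congr_reads {n : ℕ} (t : DTree n) (x z : Fin n → Bool)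
    (h : ∀ i, t.readsBit x i = true → z i = x i) :
    t.eval z = t.eval x ∧ ∀ j, t.readsBit z j = t.readsBit x j := by
  induction t with
  | leaf b => exact ⟨rfl, fun _ => rfl⟩
  | node i t0 t1 ih0 ih1 =>
    have hi : z i = x i := h i (by simp [DTree.readsBit])
    cases hx : x i with
    | false =>
      have := ih0 (fun j hj => h j (by simp [DTree.readsBit, hx, hj]))
      refine ⟨by simp [DTree.eval, hi, hx, this.1], fun j => by
        simp [DTree.readsBit, hi, hx, this.2 j]⟩
    | true =>
      have := ih1 (fun j hj => h j (by simp [DTree.readsBit, hx, hj]))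
      refine ⟨by simp [DTree.eval, hi, hx, this.1], fun j => by
        simp [DTree.readsBit, hi, hx, this.2 j]⟩

def mixT {n : ℕ} (t : DTree n) (p : (Fin n → Bool) × (Fin n → Bool)) :
    (Fin n → Bool) × (Fin n → Bool) :=
  (fun i => if t.readsBit p.1 i then p.1 i else p.2 i,
   fun i => if t.readsBit p.1 i then p.2 i else p.1 i)

theorem mixT_congr {n : ℕ} (t : DTree n) (p : (Fin n → Bool) × (Fin n → Bool)) :
    t.eval (mixT t p).1 = t.eval p.1 ∧
      ∀ j, t.readsBit (mixT t p).1 j = t.readsBit p.1 j :=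
  t.congr_reads p.1 (mixT t p).1 (fun i hi => by simp [mixT, hi])

theorem mixT_invol {n : ℕ} (t : DTree n) : Function.Involutive (mixT t) := by
  intro p
  have h := (mixT_congr t p).2
  apply Prod.ext
  · funext i
    change (if t.readsBit (mixT t p).1 i then (mixT t p).1 i else (mixT t p).2 i) = _
    rw [h i]
    cases hh : t.readsBit p.1 i <;> simp [mixT, hh]
  · funext i
    change (if t.readsBit (mixT t p).1 i then (mixT t p).2 i else (mixT t p).1 i) = _
    rw [h i]
    cases hh : t.readsBit p.1 i <;> simp [mixT, hh]

theorem mixT_sum {n : ℕ} (t : DTree n) (g : (Fin n → Bool) → ℝ) :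
    ∑ x : Fin n → Bool, ∑ y : Fin n → Bool, g (mixT t (x, y)).1 = 2 ^ n * ∑ z, g z := by
  rw [← Fintype.sum_prod_type' (f := fun x y => g (mixT t (x, y)).1)]
  have := Equiv.sum_comp (mixT_invol t).toPerm
    (fun p : (Fin n → Bool) × (Fin n → Bool) => g p.1)
  simp only [Function.Involutive.coe_toPerm] at this
  rw [this, Fintype.sum_prod_type]
  simp [Finset.mul_sum]

noncomputable def errT {n : ℕ} (f : (Fin n → Bool) → Bool) (t : DTree n) : ℝ :=
  ∑ x : Fin n → Bool, if t.eval x ≠ f x then (1 : ℝ) else 0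

noncomputable def rdT {n : ℕ} (t : DTree n) (i : Fin n) : ℝ :=
  ∑ x : Fin n → Bool, if t.readsBit x i then (1 : ℝ) else 0

noncomputable def muT {n : ℕ} (t : DTree n) : ℝ :=
  ∑ x : Fin n → Bool, pm (t.eval x)

theorem pair_pt {n : ℕ} (f : (Fin n → Bool) → Bool) (t s : DTree n) (x y : Fin n → Bool) :
    (1 - pm (t.eval x) * pm (s.eval y)) / 2 ≤
      (if t.eval (mixT t (x, y)).1 ≠ f (mixT t (x, y)).1 then (1 : ℝ) else 0)
      + (if s.eval (mixT t (x, y)).1 ≠ f (mixT t (x, y)).1 then (1 : ℝ) else 0)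
      + ∑ i, (if t.readsBit x i then (1 : ℝ) else 0) * (if s.readsBit y i then (1 : ℝ) else 0) := by
  have hnn : ∀ i ∈ Finset.univ, (0 : ℝ) ≤
      (if t.readsBit x i then (1 : ℝ) else 0) * (if s.readsBit y i then (1 : ℝ) else 0) := by
    intro i _
    split_ifs <;> simp
  have h0 := Finset.sum_nonneg hnn
  by_cases hint : ∃ i, t.readsBit x i = true ∧ s.readsBit y i = true
  · obtain ⟨i, h1, h2⟩ := hint
    have h3 := Finset.single_le_sum hnn (Finset.mem_univ i)
    simp only [h1, h2, if_true, mul_one] at h3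
    have h4 : (1 - pm (t.eval x) * pm (s.eval y)) / 2 ≤ 1 := by
      unfold pm
      split_ifs <;> norm_num
    have h5 : (0 : ℝ) ≤ (if t.eval (mixT t (x, y)).1 ≠ f (mixT t (x, y)).1 then (1 : ℝ) else 0) := by
      split_ifs <;> simp
    have h6 : (0 : ℝ) ≤ (if s.eval (mixT t (x, y)).1 ≠ f (mixT t (x, y)).1 then (1 : ℝ) else 0) := by
      split_ifs <;> simp
    linarith
  · have e1 : t.eval (mixT t (x, y)).1 = t.eval x := (mixT_congr t (x, y)).1
    have e2 : s.eval (mixT t (x, y)).1 = s.eval y := by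
      refine (s.congr_reads y _ (fun i hi => ?_)).1
      have : t.readsBit x i = false := by
        cases hh : t.readsBit x i
        · rfl
        · exact (hint ⟨i, hh, hi⟩).elim
      simp [mixT, this]
    rw [e1, e2]
    refine le_add_of_le_of_nonneg ?_ h0
    cases t.eval x <;> cases s.eval y <;> cases f (mixT t (x, y)).1 <;> norm_num [pm]

theorem pair_sum {n : ℕ} (f : (Fin n → Bool) → Bool) (t s : DTree n) :
    (2 ^ n * 2 ^ n - muT t * muT s) / 2 ≤
      2 ^ n * errT f t + 2 ^ n * errT f s + ∑ i, rdT t i * rdT s i := by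
  have h := Finset.sum_le_sum (s := Finset.univ) (fun x _ =>
    Finset.sum_le_sum (s := Finset.univ) (fun y _ => pair_pt f t s x y))
  simp only [Finset.sum_add_distrib] at h
  have m1 := mixT_sum t (fun z => if t.eval z ≠ f z then (1 : ℝ) else 0)
  have m2 := mixT_sum t (fun z => if s.eval z ≠ f z then (1 : ℝ) else 0)
  rw [m1, m2] at h
  have m3 : ∑ x : Fin n → Bool, ∑ y : Fin n → Bool, ∑ i,
      (if t.readsBit x i then (1 : ℝ) else 0) * (if s.readsBit y i then (1 : ℝ) else 0)
      = ∑ i, rdT t i * rdT s i := by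
    simp only [rdT, Finset.sum_mul_sum]
    rw [Finset.sum_comm]
    rw [Finset.sum_comm]
    rw [Finset.sum_comm (s := (Finset.univ : Finset (Fin n)))]
    refine Finset.sum_congr rfl fun x _ => ?_
    rw [Finset.sum_comm]
  have m4 : ∑ x : Fin n → Bool, ∑ y : Fin n → Bool, (1 - pm (t.eval x) * pm (s.eval y)) / 2
      = (2 ^ n * 2 ^ n - muT t * muT s) / 2 := by
    simp only [muT, Finset.sum_mul_sum, ← Finset.sum_div, Finset.sum_sub_distrib]
    simp
  rw [m3, m4] at h
  exact h

theorem pm_err {n : ℕ} (f : (Fin n → Bool) → Bool) (t : DTree n) :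
    |muT t - ∑ x, pm (f x)| ≤ 2 * errT f t := by
  unfold muT errT
  rw [← Finset.sum_sub_distrib, Finset.mul_sum]
  refine (Finset.abs_sum_le_sum_abs _ _).trans (Finset.sum_le_sum fun x _ => ?_)
  cases t.eval x <;> cases f x <;> norm_num [pm]

theorem pm_abs {n : ℕ} (g : (Fin n → Bool) → Bool) : |∑ x, pm (g x)| ≤ 2 ^ n := by
  refine (Finset.abs_sum_le_sum_abs _ _).trans ?_
  have : ∀ x, |pm (g x)| = 1 := fun x => by cases g x <;> norm_num [pm]
  simp [this]

theorem dbl {m : ℕ} (w a b : Fin m → ℝ) :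
    ∑ r, ∑ s, w r * w s * (a r * b s) = (∑ r, w r * a r) * ∑ s, w s * b s := by
  rw [Finset.sum_mul_sum]
  refine Finset.sum_congr rfl fun r _ => Finset.sum_congr rfl fun s _ => by ring

end helpers

/-- For any Boolean function `f` on `n` bits and any randomized
decision-tree algorithm with revealment `δ` (i.e. every bit is read with
probability at most `δ`), the error probability on a uniformly random input is
at least `(1/8)·Var(f) − (1/4)·n·δ²`.  In particular, if `f` is balanced and the
error probability is small, then `δ ≥ Ω(n^(-1/2))`. -/
theorem statement4 (n : ℕ) (f : (Fin n → Bool) → Bool) (A : RandAlg n)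
    (δ : ℝ) (hδ0 : 0 ≤ δ) (hδ : ∀ i, readProb A i ≤ δ) :
    (1 / 8) * pmVar f - (1 / 4) * n * δ ^ 2 ≤ errProb A f := by
  obtain ⟨m, T, w, w0, w1⟩ := A
  have hN : (0 : ℝ) < 2 ^ n := by positivity
  set N : ℝ := 2 ^ n with hNdef
  set e : ℝ := ∑ r, w r * errT f (T r) with he
  set M : ℝ := ∑ r, w r * muT (T r) with hM
  set μ : ℝ := ∑ x, pm (f x) with hμ
  set ρ : Fin n → ℝ := fun i => ∑ r, w r * rdT (T r) i with hρ
  have herr : errProb ⟨m, T, w, w0, w1⟩ f = e / N := by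
    simp only [errProb, he, errT, Finset.mul_sum, mul_ite, mul_one, mul_zero, hNdef]
  have hrd : ∀ i, readProb ⟨m, T, w, w0, w1⟩ i = ρ i / N := by
    intro i
    simp only [readProb, hρ, rdT, Finset.mul_sum, mul_ite, mul_one, mul_zero, hNdef]
  have hvar : pmVar f = 1 - (μ / N) ^ 2 := by
    have : ∀ x, pm (f x) ^ 2 = 1 := fun x => by cases f x <;> norm_num [pm]
    simp [pmVar, this, hμ, hNdef]
  have hρ0 : ∀ i, 0 ≤ ρ i := fun i => Finset.sum_nonneg fun r _ =>
    mul_nonneg (w0 r) (Finset.sum_nonneg fun x _ => by split_ifs <;> simp)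
  have hmain : (N * N - M * M) / 2 ≤ N * e + N * e + ∑ i, ρ i * ρ i := by
    have h := Finset.sum_le_sum (s := Finset.univ) (fun r _ =>
      Finset.sum_le_sum (s := Finset.univ) (fun s _ =>
        mul_le_mul_of_nonneg_left (pair_sum f (T r) (T s)) (mul_nonneg (w0 r) (w0 s))))
    have k1 : ∑ r, ∑ s, w r * w s * ((2 ^ n * 2 ^ n - muT (T r) * muT (T s)) / 2)
        = (N * N - M * M) / 2 := by
      have a1 := dbl w (fun _ => N) (fun _ => N)
      have a2 := dbl w (fun r => muT (T r)) (fun r => muT (T r))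
      rw [← Finset.sum_mul, w1, one_mul] at a1
      rw [← hM] at a2
      refine Eq.trans ?_ (congrArg₂ (fun a b => (a - b) / 2) a1 a2)
      rw [← Finset.sum_sub_distrib, Finset.sum_div]
      refine Finset.sum_congr rfl fun r _ => ?_
      rw [← Finset.sum_sub_distrib, Finset.sum_div]
      refine Finset.sum_congr rfl fun s _ => by ring
    have k2 : ∑ r, ∑ s, w r * w s * (2 ^ n * errT f (T r) + 2 ^ n * errT f (T s)
          + ∑ i, rdT (T r) i * rdT (T s) i) = N * e + N * e + ∑ i, ρ i * ρ i := by
      have a1 := dbl w (fun _ => N) (fun r => errT f (T r))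
      have a2 := dbl w (fun r => errT f (T r)) (fun _ => N)
      rw [← Finset.sum_mul, w1, one_mul, ← he] at a1 a2
      have a3 : ∑ r, ∑ s, ∑ i, w r * w s * (rdT (T r) i * rdT (T s) i) = ∑ i, ρ i * ρ i := by
        simp only [hρ, ← dbl]
        rw [Finset.sum_comm (s := (Finset.univ : Finset (Fin n)))]
        refine Finset.sum_congr rfl fun x _ => ?_
        rw [Finset.sum_comm]
      rw [← a3, mul_comm N e]
      nth_rewrite 2 [mul_comm e N]
      rw [← a2, ← a1]
      simp only [← Finset.sum_add_distrib]
      refine Finset.sum_congr rfl fun r _ => Finset.sum_congr rfl fun s _ => ?_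
      rw [← Finset.mul_sum]
      ring
    rw [k1, k2] at h
    exact h
  have hdiff : |M - μ| ≤ 2 * e := by
    have : M - μ = ∑ r, w r * (muT (T r) - μ) := by
      simp only [mul_sub, Finset.sum_sub_distrib, ← Finset.sum_mul, w1, one_mul, hM]
    rw [this, he, Finset.mul_sum]
    refine (Finset.abs_sum_le_sum_abs _ _).trans (Finset.sum_le_sum fun r _ => ?_)
    rw [abs_mul, abs_of_nonneg (w0 r)]
    have := mul_le_mul_of_nonneg_left (pm_err f (T r)) (w0 r)
    linarith
  have hMabs : |M| ≤ N := by
    have h1 : |M| ≤ ∑ r, w r * N := by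
      refine (Finset.abs_sum_le_sum_abs _ _).trans (Finset.sum_le_sum fun r _ => ?_)
      rw [abs_mul, abs_of_nonneg (w0 r)]
      exact mul_le_mul_of_nonneg_left (pm_abs _) (w0 r)
    rwa [← Finset.sum_mul, w1, one_mul] at h1
  have hμabs : |μ| ≤ N := pm_abs f
  have hsum : ∑ i, ρ i * ρ i ≤ n * (δ * N) ^ 2 := by
    have : ∀ i ∈ (Finset.univ : Finset (Fin n)), ρ i * ρ i ≤ (δ * N) ^ 2 := by
      intro i _
      have h := hδ i
      rw [hrd, div_le_iff₀ hN] at h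
      have := hρ0 i
      nlinarith
    refine (Finset.sum_le_sum this).trans ?_
    simp
  have hsq : M ^ 2 - μ ^ 2 ≤ 4 * e * N := by
    have h1 : M ^ 2 - μ ^ 2 ≤ |M - μ| * |M + μ| := by
      rw [← abs_mul]
      exact le_trans (by ring_nf; rfl) (le_abs_self _)
    have h2 : |M + μ| ≤ 2 * N := (abs_add_le _ _).trans (by linarith)
    have h3 := mul_le_mul hdiff h2 (abs_nonneg _) ((abs_nonneg _).trans hdiff)
    linarith
  rw [herr, hvar, le_div_iff₀ hN]
  have hfin : N * (((1 / 8) * (1 - (μ / N) ^ 2) - (1 / 4) * n * δ ^ 2) * N) ≤ N * e := by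
    have : N * (((1 / 8) * (1 - (μ / N) ^ 2) - (1 / 4) * n * δ ^ 2) * N)
        = (1 / 8) * (N ^ 2 - μ ^ 2) - (1 / 4) * (n * (δ * N) ^ 2) := by
      field_simp
    rw [this]
    nlinarith
  exact le_of_mul_le_mul_left hfin hN
end
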